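/- Let G be a Hajós graph and let (G1, G2) be a 4-separation in G such that |V(G1)| ≥ 6 and (G1, V(G1 ∩ G2)) is planar. Then G1 contains a V(G1 ∩ G2)-good wheel. -/

import Mathlib

/-!
Suppose that `G₁` contains no good wheel, and let `S` be the four common vertices of `G₁` and `G₂`
and `I` the vertices of `G₁` outside `G₂`. Every vertex of a Hajós graph has degree at least four,
and no vertex set with vertices beyond its neighbourhood is cut off by at most two vertices (glue
two colourings, `IsHajos.two_cut`). More generally, a proper induced subgraph of `G` remains
4-colourable after an edge is added between two vertices that are joined by a path outside of it
(`IsHajos.color_add`), since the added edge can be replaced by that path in any subdivision of `K₅`.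

*Selection.* Let `onb B` be the set of neighbours of `B` outside `B`. A smallest suitable set
`A ⊆ I` with at least two vertices and `T = onb A` of size three or four is chosen, such that smaller
subsets of `A` have larger boundaries. Unless some part of `I` has a boundary of size three, `A` is
a smallest set with two vertices and boundary at most four; in the remaining case submodularity of
the boundary is used (`Env.contra_alpha`, `Env.contra_beta`).

*Planarity.* The only planarity input is that `G₁` with an apex joined to `S` has no `K₃,₃` minor.
The part of that graph beyond `T` contracts to a single vertex, so two disjoint connected parts of
`A` have at most two common neighbours in `T` (`K1`), and two vertices of `A` do not both see three
disjoint connected parts of `A` that all reach `T` (`K2`). Moreover a vertex `w` of `A` has at most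
two neighbours in a 2-connected set inside `A` plus one neighbour of `w` (`W`): three neighbours in
such a set lie on a common cycle, which gives a good wheel, or on the three arms of a theta graph
(`TwoConn.theta`), which gives `K₃,₃`. The structure `Core` collects these facts.

*Structure.* By `W`, a vertex with three neighbours in `A` belongs to a 2-cut of `A`. Analysing
these cuts shows, for `|A| ≥ 5`, that every vertex of `T` has exactly two neighbours in `A`
(`Core.an_card`) and that no vertex of `A` has exactly one neighbour in `T` (`Core.no_single`).
Counting the edges between `A` and `T` then gives `|A| = 5` with a hub adjacent to the four others
(`Core.hub`).

*Colouring.* For each of the remaining configurations with `2 ≤ |A| ≤ 5` a 4-colouring of `G - A`,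
for some of them with an added edge, extends to `A`, contradicting that `G` is not 4-colourable
(`Core.false`).
-/

open SimpleGraph

/-- The internal vertices of a walk: its support with the two endpoints removed. -/
def walkInterior {V : Type} {G : SimpleGraph V} {u v : V} (p : G.Walk u v) : List V :=
  p.support.tail.dropLast

/-- `G` contains a subdivision of `K5`: five branch vertices joined by pairwise
internally disjoint paths whose interiors avoid all branch vertices. -/
def HasK5Subdivision {V : Type} (G : SimpleGraph V) : Prop :=
  ∃ b : Fin 5 → V, Function.Injective b ∧
    ∃ P : ∀ i j : Fin 5, G.Walk (b i) (b j),
      (∀ i j : Fin 5, i < j → (P i j).IsPath) ∧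
      (∀ i j : Fin 5, i < j → ∀ k : Fin 5, b k ∉ walkInterior (P i j)) ∧
      (∀ i j i' j' : Fin 5, i < j → i' < j' → (i, j) ≠ (i', j') →
        ∀ x ∈ walkInterior (P i j), x ∉ (P i' j').support)

/-- `G` contains a subdivision of `K3,3`. -/
def HasK33Subdivision {V : Type} (G : SimpleGraph V) : Prop :=
  ∃ a b : Fin 3 → V, Function.Injective a ∧ Function.Injective b ∧
    (∀ i j : Fin 3, a i ≠ b j) ∧
    ∃ P : ∀ i j : Fin 3, G.Walk (a i) (b j),
      (∀ i j : Fin 3, (P i j).IsPath) ∧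
      (∀ i j k : Fin 3, a k ∉ walkInterior (P i j) ∧ b k ∉ walkInterior (P i j)) ∧
      (∀ i j i' j' : Fin 3, (i, j) ≠ (i', j') →
        ∀ x ∈ walkInterior (P i j), x ∉ (P i' j').support)

/-- A finite graph is planar iff it contains no subdivision of `K5` or of `K3,3`
(Kuratowski's theorem). -/
def IsPlanar {V : Type} (G : SimpleGraph V) : Prop :=
  ¬ HasK5Subdivision G ∧ ¬ HasK33Subdivision G

/-- The graph obtained from `G` by adding a new apex vertex joined to all vertices of `S`. -/
def apexGraph {V : Type} (G : SimpleGraph V) (S : Set V) : SimpleGraph (Option V) :=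
  SimpleGraph.fromRel (fun x y =>
    (∃ a b : V, x = some a ∧ y = some b ∧ G.Adj a b) ∨
    (x = none ∧ ∃ a ∈ S, y = some a))

/-- `(G, S)` is planar: `G` can be drawn in a closed disc with no edge crossings and with
`S` on the boundary of the disc.  Equivalently, the graph obtained by adding an apex
vertex adjacent to all of `S` is planar. -/
def PairPlanar {V : Type} (G : SimpleGraph V) (S : Set V) : Prop :=
  IsPlanar (apexGraph G S)

/-- `(H, S)` is planar, for a subgraph `H` of an ambient graph. -/
def SubgraphPairPlanar {V : Type} {G : SimpleGraph V} (H : G.Subgraph) (S : Set V) : Prop :=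
  PairPlanar H.coe {x : H.verts | (x : V) ∈ S}

/-- A Hajós graph: no `K5`-subdivision, not 4-colorable, and vertex-minimum with these
two properties (every graph on fewer vertices has a `K5`-subdivision or is 4-colorable). -/
def IsHajos {V : Type} [Fintype V] (G : SimpleGraph V) : Prop :=
  ¬ HasK5Subdivision G ∧ ¬ G.Colorable 4 ∧
    ∀ n : ℕ, n < Fintype.card V → ∀ H : SimpleGraph (Fin n),
      HasK5Subdivision H ∨ H.Colorable 4

/-- `(G1, G2)` is a `k`-separation of `G`: edge-disjoint subgraphs with union `G`,
`|V(G1) ∩ V(G2)| = k`, and each side carries an edge or a private vertex. -/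
def IsSeparation {V : Type} {G : SimpleGraph V} (G1 G2 : G.Subgraph) (k : ℕ) : Prop :=
  G1 ⊔ G2 = ⊤ ∧ Disjoint G1.edgeSet G2.edgeSet ∧
  (G1.verts ∩ G2.verts).ncard = k ∧
  (G1.edgeSet.Nonempty ∨ (G1.verts \ G2.verts).Nonempty) ∧
  (G2.edgeSet.Nonempty ∨ (G2.verts \ G1.verts).Nonempty)

/-- `W` is a wheel with center `w`: it consists of a cycle `C` avoiding `w`, together with
at least three edges (spokes) from `w` to `C`. -/
def IsWheelSubgraph {V : Type} {G : SimpleGraph V} (W : G.Subgraph) (w : V) : Prop :=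
  ∃ (u : V) (C : G.Walk u u) (T : Set V), C.IsCycle ∧ w ∉ C.support ∧
    T ⊆ {x | x ∈ C.support} ∧ 3 ≤ T.ncard ∧
    W.verts = insert w {x | x ∈ C.support} ∧
    W.edgeSet = {e | e ∈ C.edges} ∪ (fun x => s(w, x)) '' T

/-- The subgraph `H` contains an `S`-good wheel: a wheel `W ≤ H` with center `w ∉ S` such
that every vertex of `S ∩ V(W)` is a neighbor of `w` in `H`. -/
def HasGoodWheel {V : Type} {G : SimpleGraph V} (H : G.Subgraph) (S : Set V) : Prop :=
  ∃ (W : G.Subgraph) (w : V), W ≤ H ∧ IsWheelSubgraph W w ∧ w ∉ S ∧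
    ∀ s ∈ S, s ∈ W.verts → H.Adj w s

/-- `G` is `k`-connected: more than `k` vertices, and deleting fewer than `k` vertices
leaves a connected graph. -/
def IsKConnected {V : Type} [Fintype V] (G : SimpleGraph V) (k : ℕ) : Prop :=
  k < Fintype.card V ∧ ∀ X : Set V, X.ncard < k → (G.induce (Xᶜ : Set V)).Connected

/- The six obstruction graphs, with `S = {t1,...,t5} = {0,1,2,3,4}` and the remaining
vertices `u, v, w, z` labelled `5, 6, 7, 8`. -/

def Obs1 : SimpleGraph (Fin 6) :=
  SimpleGraph.fromEdgeSet {s(5,0), s(5,1), s(5,2), s(5,3)}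

def Obs2 : SimpleGraph (Fin 6) :=
  SimpleGraph.fromEdgeSet {s(5,0), s(5,1), s(5,2), s(5,3), s(5,4)}

def Obs3 : SimpleGraph (Fin 7) :=
  SimpleGraph.fromEdgeSet {s(5,6), s(5,0), s(5,1), s(5,2), s(6,0), s(6,2), s(6,3), s(6,4)}

def Obs4 : SimpleGraph (Fin 7) :=
  SimpleGraph.fromEdgeSet {s(5,6), s(5,0), s(5,1), s(5,2), s(6,2), s(6,3), s(6,4)}

def Obs5 : SimpleGraph (Fin 8) :=
  SimpleGraph.fromEdgeSet {s(5,6), s(5,0), s(5,1), s(5,2), s(6,7), s(6,0), s(6,2), s(6,3),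
    s(7,0), s(7,3), s(7,4)}

def Obs6 : SimpleGraph (Fin 9) :=
  SimpleGraph.fromEdgeSet {s(8,5), s(8,6), s(8,7), s(8,0), s(8,1), s(8,4), s(5,6), s(5,1),
    s(5,2), s(6,7), s(6,2), s(6,3), s(7,3), s(7,4)}

/-- The subgraph `G1` (with distinguished set `S`) is isomorphic to the graph `O` on
`Fin n` by an isomorphism carrying `S` exactly onto `SO`. -/
def IsoCarrying {V : Type} {G : SimpleGraph V} (G1 : G.Subgraph) (S : Set V)
    {n : ℕ} (O : SimpleGraph (Fin n)) (SO : Set (Fin n)) : Prop :=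
  ∃ f : G1.coe ≃g O, ∀ x : G1.verts, ((x : V) ∈ S ↔ f x ∈ SO)

/-- `(G1, S)` is one of the six obstruction graphs of Figure 1. -/
def IsObstruction {V : Type} {G : SimpleGraph V} (G1 : G.Subgraph) (S : Set V) : Prop :=
  IsoCarrying G1 S Obs1 {0,1,2,3,4} ∨ IsoCarrying G1 S Obs2 {0,1,2,3,4} ∨
  IsoCarrying G1 S Obs3 {0,1,2,3,4} ∨ IsoCarrying G1 S Obs4 {0,1,2,3,4} ∨
  IsoCarrying G1 S Obs5 {0,1,2,3,4} ∨ IsoCarrying G1 S Obs6 {0,1,2,3,4}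

/-- `G − X + T`: delete the vertices of `X` (with all incident edges) and add the pairs
in `T` as edges. -/
def deleteAdd {V : Type} (G : SimpleGraph V) (X : Set V) (T : Set (V × V)) : SimpleGraph V :=
  SimpleGraph.fromRel (fun a b => (G.Adj a b ∧ a ∉ X ∧ b ∉ X) ∨ (a, b) ∈ T)

set_option linter.unusedSectionVars false
set_option linter.unusedSimpArgs false

/-! ### Connected vertex sets, paths and cycles -/

namespace HW

variable {V : Type} [DecidableEq V] {G : SimpleGraph V}

/-- The vertex set `X` is nonempty and induces a connected subgraph of `G`, expressed by cuts: the
only nonempty part of `X` closed under adjacency within `X` is `X` itself. -/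
def Conn (G : SimpleGraph V) (X : Finset V) : Prop :=
  X.Nonempty ∧ ∀ Y ⊆ X, Y.Nonempty → (∀ a ∈ Y, ∀ b ∈ X, G.Adj a b → b ∈ Y) → Y = X

/-- Some edge of `G` joins `X` to `Y`. -/
def Tch (G : SimpleGraph V) (X Y : Finset V) : Prop := ∃ a ∈ X, ∃ b ∈ Y, G.Adj a b

theorem Tch.symm {X Y : Finset V} (h : Tch G X Y) : Tch G Y X := by
  obtain ⟨a, ha, b, hb, h⟩ := h
  exact ⟨b, hb, a, ha, h.symm⟩

theorem Tch.mono {X Y X' Y' : Finset V} (h : Tch G X Y) (hX : X ⊆ X') (hY : Y ⊆ Y') :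
    Tch G X' Y' := by
  obtain ⟨a, ha, b, hb, h⟩ := h
  exact ⟨a, hX ha, b, hY hb, h⟩

theorem Conn.induct {X : Finset V} (h : Conn G X) (p : V → Prop) {a : V} (ha : a ∈ X) (pa : p a)
    (step : ∀ x ∈ X, ∀ y ∈ X, p x → G.Adj x y → p y) : ∀ x ∈ X, p x := by
  classical
  have := h.2 (X.filter p) (Finset.filter_subset _ _) ⟨a, by simp [ha, pa]⟩ (by
    intro x hx y hy hxy
    simp only [Finset.mem_filter] at hx ⊢
    exact ⟨hy, step x hx.1 y hy hx.2 hxy⟩)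
  intro x hx
  rw [← this] at hx
  simp only [Finset.mem_filter] at hx
  exact hx.2

theorem conn_single (a : V) : Conn G {a} :=
  ⟨⟨a, by simp⟩, fun Y hY hn _ => by
    obtain ⟨b, hb⟩ := hn
    have := hY hb
    grind⟩

/-- A proper nonempty part of a connected set sends an edge to the rest. -/
theorem Conn.edge {X Y : Finset V} (h : Conn G X) (hY : Y ⊆ X) (hn : Y.Nonempty) (hne : Y ≠ X) :
    ∃ a ∈ Y, ∃ b ∈ X, b ∉ Y ∧ G.Adj a b := by
  by_contra hc
  push Not at hc
  exact hne (h.2 Y hY hn fun a ha b hb hab => by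
    by_contra hb'
    exact hc a ha b hb hb' hab)

theorem conn_of_edges {X : Finset V} (hn : X.Nonempty)
    (h : ∀ Y ⊆ X, Y.Nonempty → Y ≠ X → ∃ a ∈ Y, ∃ b ∈ X, b ∉ Y ∧ G.Adj a b) : Conn G X := by
  refine ⟨hn, fun Y hY hYn hc => ?_⟩
  by_contra hne
  obtain ⟨a, ha, b, hb, hb', hab⟩ := h Y hY hYn hne
  exact hb' (hc a ha b hb hab)

theorem not_conn {X : Finset V} (hn : X.Nonempty) (h : ¬ Conn G X) :
    ∃ Y ⊆ X, Y.Nonempty ∧ Y ≠ X ∧ ∀ a ∈ Y, ∀ b ∈ X, G.Adj a b → b ∈ Y := by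
  by_contra hc
  apply h
  refine ⟨hn, fun Y hY hYn hcl => ?_⟩
  by_contra hne
  exact hc ⟨Y, hY, hYn, hne, hcl⟩

/-- Every vertex of `X` lies in a component of `X`. -/
theorem exists_comp {X : Finset V} {a : V} (ha : a ∈ X) :
    ∃ Y ⊆ X, a ∈ Y ∧ Conn G Y ∧ ∀ x ∈ Y, ∀ y ∈ X, G.Adj x y → y ∈ Y := by
  classical
  let F := X.powerset.filter fun Y => a ∈ Y ∧ ∀ x ∈ Y, ∀ y ∈ X, G.Adj x y → y ∈ Y
  have hF : F.Nonempty := ⟨X, by simp only [F, Finset.mem_filter, Finset.mem_powerset]; exact ⟨subset_rfl, ha, fun _ _ y hy _ => hy⟩⟩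
  obtain ⟨Y, hY, hmin⟩ := Finset.exists_min_image F Finset.card hF
  simp only [F, Finset.mem_filter, Finset.mem_powerset] at hY hmin
  obtain ⟨hYX, haY, hcl⟩ := hY
  refine ⟨Y, hYX, haY, ⟨⟨a, haY⟩, fun Z hZ hZn hZc => ?_⟩, hcl⟩
  by_cases haZ : a ∈ Z
  · refine Finset.eq_of_subset_of_card_le hZ (hmin Z ⟨hZ.trans hYX, haZ, fun x hx y hy hxy => ?_⟩)
    exact hZc x hx y (hcl x (hZ hx) y hy hxy) hxy
  · exfalso
    have h1 := hmin (Y \ Z) ⟨Finset.sdiff_subset.trans hYX, by simp [haY, haZ], fun x hx y hy hxy => by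
      simp only [Finset.mem_sdiff] at hx ⊢
      have hyY := hcl x hx.1 y hy hxy
      exact ⟨hyY, fun hyZ => hx.2 (hZc y hyZ x hx.1 hxy.symm)⟩⟩
    have h2 : (Y \ Z).card < Y.card := by
      apply Finset.card_lt_card
      refine Finset.ssubset_iff_subset_ne.2 ⟨Finset.sdiff_subset, fun h => ?_⟩
      obtain ⟨z, hz⟩ := hZn
      have := hZ hz
      rw [← h] at this
      simp [hz] at this
    omega

theorem Conn.union {X Y : Finset V} (hX : Conn G X) (hY : Conn G Y)
    (h : (∃ a, a ∈ X ∧ a ∈ Y) ∨ Tch G X Y) : Conn G (X ∪ Y) := by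
  refine ⟨hX.1.mono Finset.subset_union_left, fun Z hZ hZn hc => ?_⟩
  have key : ∀ W, Conn G W → W ⊆ X ∪ Y → (∃ z ∈ Z, z ∈ W) → W ⊆ Z := by
    rintro W hW hWs ⟨z, hz, hzW⟩
    exact fun w hw => hW.induct (· ∈ Z) hzW hz (fun x hx y hy hxZ hxy => hc x hxZ y (hWs hy) hxy) w hw
  have kX := key X hX Finset.subset_union_left
  have kY := key Y hY Finset.subset_union_right
  have : X ⊆ Z ∧ Y ⊆ Z := by
    obtain ⟨z, hz⟩ := hZn
    rcases Finset.mem_union.1 (hZ hz) with hzX | hzY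
    · have hXZ := kX ⟨z, hz, hzX⟩
      refine ⟨hXZ, kY ?_⟩
      rcases h with ⟨a, ha, ha'⟩ | ⟨a, ha, b, hb, hab⟩
      · exact ⟨a, hXZ ha, ha'⟩
      · exact ⟨b, hc a (hXZ ha) b (by simp [hb]) hab, hb⟩
    · have hYZ := kY ⟨z, hz, hzY⟩
      refine ⟨kX ?_, hYZ⟩
      rcases h with ⟨a, ha, ha'⟩ | ⟨a, ha, b, hb, hab⟩
      · exact ⟨a, hYZ ha', ha⟩
      · exact ⟨a, hc b (hYZ hb) a (by simp [ha]) hab.symm, ha⟩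
  exact Finset.Subset.antisymm hZ (Finset.union_subset this.1 this.2)

theorem Conn.insert {X : Finset V} (hX : Conn G X) {a : V} (h : ∃ b ∈ X, G.Adj a b) :
    Conn G (insert a X) := by
  have := (conn_single (G := G) a).union hX (Or.inr (by
    obtain ⟨b, hb, hab⟩ := h
    exact ⟨a, by simp, b, hb, hab⟩))
  rwa [← Finset.insert_eq] at this

/-- `PS G a b X`: there is a path from `a` to `b` whose vertex set is `X`. -/
inductive PS (G : SimpleGraph V) : V → V → Finset V → Prop
  | nil (a : V) : PS G a a {a}
  | cons {a b c : V} {X : Finset V} : G.Adj a b → a ∉ X → PS G b c X → PS G a c (insert a X)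

namespace PS
variable {a b c : V} {X Y : Finset V}

theorem left (h : PS G a b X) : a ∈ X := by cases h <;> simp
theorem right (h : PS G a b X) : b ∈ X := by induction h <;> simp_all

theorem conn (h : PS G a b X) : Conn G X := by
  induction h with
  | nil a => exact conn_single a
  | cons hab _ h ih => exact ih.insert ⟨_, h.left, hab⟩

theorem split (h : PS G a b X) (hc : c ∈ X) : ∃ X1 X2, PS G a c X1 ∧ PS G c b X2 ∧
    X = X1 ∪ X2 ∧ ∀ x ∈ X1, x ∈ X2 → x = c := by
  induction h with
  | nil a => simp at hc; subst hc; exact ⟨{c}, {c}, .nil c, .nil c, by simp, by simp⟩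
  | @cons a b d X hab haX h ih =>
    rcases Finset.mem_insert.1 hc with rfl | hc'
    · exact ⟨{c}, _, .nil c, .cons hab haX h, by grind, by simp⟩
    · obtain ⟨X1, X2, h1, h2, e, hd⟩ := ih hc'
      exact ⟨_, X2, .cons hab (by grind) h1, h2, by grind, by grind⟩

theorem append (h : PS G a c X) (h' : PS G c b Y) (hd : ∀ x ∈ X, x ∈ Y → x = c) :
    PS G a b (X ∪ Y) := by
  induction h with
  | nil a => have := h'.left; rwa [Finset.singleton_union, Finset.insert_eq_of_mem this]
  | @cons a b' d X hab haX h ih =>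
    rw [Finset.insert_union]
    have := h.right
    refine .cons hab ?_ (ih h' (by grind))
    grind

theorem snoc (h : PS G a b X) (hbc : G.Adj b c) (hc : c ∉ X) : PS G a c (insert c X) := by
  have h2 : PS G b c {b, c} := .cons hbc (by simp [hbc.ne]) (.nil c)
  have := h.append h2 (by grind)
  have e : X ∪ {b, c} = insert c X := by have := h.right; grind
  rwa [e] at this

theorem symm (h : PS G a b X) : PS G b a X := by
  induction h with
  | nil a => exact .nil a
  | cons hab haX h ih => exact ih.snoc hab.symm haX

theorem uncons (h : PS G a b X) (hne : a ≠ b) :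
    ∃ c Y, G.Adj a c ∧ a ∉ Y ∧ PS G c b Y ∧ X = insert a Y := by
  cases h with
  | nil => exact absurd rfl hne
  | cons hab haX h => exact ⟨_, _, hab, haX, h, rfl⟩

theorem interior (h : PS G a b X) {x : V} (hx : x ∈ X) (hxa : x ≠ a) (hxb : x ≠ b)
    (hne : a ≠ b) : Conn G (X \ {a, b}) ∧ (∃ y ∈ X \ {a, b}, G.Adj a y) ∧
      ∃ y ∈ X \ {a, b}, G.Adj b y := by
  obtain ⟨c, Y, hac, haY, h1, rfl⟩ := h.uncons hne
  have hxY : x ∈ Y := by grind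
  have hcb : c ≠ b := by
    rintro rfl
    cases h1 with
    | nil => grind
    | cons h2 h3 h4 => exact h3 h4.right
  obtain ⟨d, Z, hbd, hbZ, h2, rfl⟩ := h1.symm.uncons hcb.symm
  have e : insert a (insert b Z) \ {a, b} = Z := by ext; grind
  rw [e]
  exact ⟨h2.conn, ⟨c, h2.right, hac⟩, ⟨d, h2.left, hbd⟩⟩

end PS

/-- Inside a connected set there is a path from `a` to `B` meeting `B` only in its end. -/
theorem Conn.path {Z B : Finset V} (hZ : Conn G Z) {a : V} (ha : a ∈ Z)
    (hB : ∃ b ∈ Z, b ∈ B) : ∃ c ∈ B, ∃ X ⊆ Z, PS G a c X ∧ ∀ x ∈ X, x ∈ B → x = c := by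
  by_contra hcon
  push Not at hcon
  have := hZ.induct (fun y => ∃ X ⊆ Z, PS G a y X ∧ ∀ x ∈ X, x ∈ B → x = y) ha
    ⟨{a}, by simpa, .nil a, by simp⟩ (by
      rintro y hy z hz ⟨X, hXZ, hX, hXB⟩ hyz
      have hyB : y ∉ B := fun h => by
        obtain ⟨x, h1, h2, h3⟩ := hcon y h X hXZ hX
        exact h3 (hXB x h1 h2)
      by_cases hzX : z ∈ X
      · obtain ⟨X1, X2, h1, h2, e, hd⟩ := hX.split hzX
        exact ⟨X1, by grind, h1, by grind⟩
      · exact ⟨_, by grind, hX.snoc hyz hzX, by grind⟩)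
  obtain ⟨b, hb, hbB⟩ := hB
  obtain ⟨X, h1, h2, h3⟩ := this b hb
  obtain ⟨x, h4, h5, h6⟩ := hcon b hbB X h1 h2
  exact h6 (h3 x h4 h5)

theorem Conn.path' {Z : Finset V} (hZ : Conn G Z) {a b : V} (ha : a ∈ Z) (hb : b ∈ Z) :
    ∃ X ⊆ Z, PS G a b X := by
  obtain ⟨c, hc, X, h1, h2, h3⟩ := hZ.path (B := {b}) ha ⟨b, hb, by simp⟩
  simp at hc; subst hc
  exact ⟨X, h1, h2⟩

/-- Three vertices of a connected set are joined to a common vertex `c` by connected sets that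
meet pairwise only in `c`. -/
theorem tripod {P : Finset V} (hP : Conn G P) {p : Fin 3 → V} (hp : ∀ i, p i ∈ P) :
    ∃ c ∈ P, ∃ R : Fin 3 → Finset V, (∀ i, R i ⊆ P ∧ c ∈ R i ∧ p i ∈ R i ∧ Conn G (R i)) ∧
      ∀ i j, i ≠ j → ∀ x ∈ R i, x ∈ R j → x = c := by
  obtain ⟨X, hX, h1⟩ := hP.path' (hp 0) (hp 1)
  obtain ⟨c, hc, Z, hZ, h2, h3⟩ := hP.path (B := X) (hp 2) ⟨p 0, hp 0, h1.left⟩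
  obtain ⟨X1, X2, h4, h5, e, hd⟩ := h1.split hc
  refine ⟨c, hX hc, ![X1, X2, Z], ?_, ?_⟩
  · intro i
    fin_cases i
    · exact ⟨(show X1 ⊆ P by grind), h4.right, h4.left, h4.conn⟩
    · exact ⟨(show X2 ⊆ P by grind), h5.left, h5.right, h5.conn⟩
    · exact ⟨hZ, h2.right, h2.left, h2.conn⟩
  · intro i j hij
    fin_cases i <;> fin_cases j <;> simp at hij ⊢ <;> grind

theorem PS.walk {a b : V} {X : Finset V} (h : PS G a b X) :
    ∃ p : G.Walk a b, p.IsPath ∧ ∀ x, x ∈ p.support ↔ x ∈ X := by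
  induction h with
  | nil a => exact ⟨.nil, by simp, by simp⟩
  | cons hab haX h ih =>
    obtain ⟨p, hp, hs⟩ := ih
    exact ⟨.cons hab p, by simp [SimpleGraph.Walk.cons_isPath_iff, hp, hs, haX], by simp [hs]⟩

theorem ps_of_path {a b : V} (p : G.Walk a b) (hp : p.IsPath) : PS G a b p.support.toFinset := by
  induction p with
  | nil => simpa using PS.nil _
  | cons h p ih =>
    rw [SimpleGraph.Walk.cons_isPath_iff] at hp
    simp only [SimpleGraph.Walk.support_cons, List.toFinset_cons]
    exact .cons h (by simpa using hp.2) (ih hp.1)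

/-- `C` is the vertex set of a cycle of `G`: a path on at least three vertices whose ends are
adjacent. -/
def IsCyc (G : SimpleGraph V) (C : Finset V) : Prop :=
  ∃ a b, PS G a b C ∧ G.Adj a b ∧ 3 ≤ C.card

theorem IsCyc.walk {C : Finset V} (h : IsCyc G C) :
    ∃ (u : V) (p : G.Walk u u), p.IsCycle ∧ ∀ x, x ∈ p.support ↔ x ∈ C := by
  obtain ⟨a, b, h, hab, hc⟩ := h
  obtain ⟨p, hp, hs⟩ := h.walk
  refine ⟨b, .cons hab.symm p, ?_, ?_⟩
  · rw [SimpleGraph.Walk.cons_isCycle_iff]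
    refine ⟨hp, fun he => ?_⟩
    have hC : C = p.support.toFinset := by ext; simp [hs]
    cases p with
    | nil => exact hab.ne rfl
    | @cons _ a' _ h1 q =>
      rw [SimpleGraph.Walk.cons_isPath_iff] at hp
      simp only [SimpleGraph.Walk.edges_cons, List.mem_cons] at he
      rcases he with he | he
      · have : b = a' := by
          rw [Sym2.eq_iff] at he
          grind
        subst this
        have hq := hp.1
        rw [SimpleGraph.Walk.isPath_iff_nil, ← SimpleGraph.Walk.eq_nil_iff_nil] at hq
        subst hq
        have : C.card ≤ 2 := by rw [hC]; simp; exact Finset.card_le_two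
        omega
      · exact hp.2 (SimpleGraph.Walk.snd_mem_support_of_mem_edges _ he)
  · have := h.right
    intro x
    simp [hs]
    grind

/-- Two paths with the same ends and otherwise disjoint form a cycle. -/
theorem isCyc_of {a b : V} {X Y : Finset V} (hne : a ≠ b) (hX : PS G a b X) (hY : PS G a b Y)
    (hd : ∀ x ∈ X, x ∈ Y → x = a ∨ x = b) (hc : 3 ≤ (X ∪ Y).card) : IsCyc G (X ∪ Y) := by
  obtain ⟨a', Y', h1, h2, h3, rfl⟩ := hY.uncons hne
  have haX := hX.left
  have := h3.append hX.symm (by grind)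
  have e : X ∪ insert a Y' = Y' ∪ X := by grind
  rw [e] at hc ⊢
  exact ⟨a', a, this, h1.symm, hc⟩

/-- Two vertices of a cycle split it into two arcs. -/
theorem IsCyc.arcs {C : Finset V} (h : IsCyc G C) {x y : V} (hx : x ∈ C) (hy : y ∈ C)
    (hne : x ≠ y) : ∃ X Y, PS G x y X ∧ PS G x y Y ∧ C = X ∪ Y ∧
      ∀ z ∈ X, z ∈ Y → z = x ∨ z = y := by
  obtain ⟨a, b, h, hab, hc⟩ := h
  obtain ⟨X1, X2, h1, h2, rfl, hd⟩ := h.split hx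
  have key : ∀ (a b : V) (X1 X2 : Finset V), G.Adj a b → PS G a x X1 → PS G x b X2 →
      (∀ z ∈ X1, z ∈ X2 → z = x) → y ∈ X2 → ∃ X Y, PS G x y X ∧ PS G x y Y ∧ X1 ∪ X2 = X ∪ Y ∧
      ∀ z ∈ X, z ∈ Y → z = x ∨ z = y := by
    intro a b X1 X2 hab h1 h2 hd hy
    obtain ⟨X3, X4, h3, h4, rfl, hd'⟩ := h2.split hy
    have hbX : b ∉ X1 := by
      intro hb
      have := h4.right
      have : b = x := by grind
      subst this
      have := h3.left
      grind
    have h5 := (h1.symm.snoc hab hbX).append h4.symm (by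
      have := h4.left; have := h3.left; grind)
    have := h4.right
    exact ⟨X3, _, h3, h5, by grind, by grind⟩
  rcases Finset.mem_union.1 hy with hy | hy
  · rw [Finset.union_comm]
    exact key b a X2 X1 hab.symm h2.symm h1.symm (by grind) hy
  · exact key a b X1 X2 hab h1 h2 hd hy

end HW

/-! ### 2-connected sets and theta graphs -/

namespace HW

variable {V : Type} [DecidableEq V] {G : SimpleGraph V}

/-- `Y` has at least three vertices and induces a 2-connected subgraph of `G`. -/
def TwoConn (G : SimpleGraph V) (Y : Finset V) : Prop :=
  3 ≤ Y.card ∧ Conn G Y ∧ ∀ v ∈ Y, Conn G (Y.erase v)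

theorem TwoConn.exists_cyc {Y : Finset V} (h : TwoConn G Y) : ∃ C ⊆ Y, IsCyc G C := by
  obtain ⟨hc, hY, hv⟩ := h
  obtain ⟨u, hu⟩ := hY.1
  obtain ⟨a, ha, z, hz, hz', hazz⟩ := hY.edge (Y := {u}) (by simpa) ⟨u, by simp⟩ (by
    intro h; rw [← h] at hc; simp at hc)
  simp at ha; subst ha
  simp at hz'
  obtain ⟨b, hb, z', hz1, hz2, hbz⟩ := (hv z hz).edge (Y := {a}) (by grind) ⟨a, by simp⟩ (by
    intro h
    have := Finset.card_erase_of_mem hz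
    rw [← h] at this; simp at this; omega)
  simp at hb; subst hb
  simp at hz1 hz2
  obtain ⟨X, hX, hP⟩ := (hv b hu).path' (a := z) (b := z') (by simp [hz, hz']) (by simp [hz1, hz2])
  have hbX : b ∉ X := fun h => by have := hX h; simp at this
  have hl := hP.left
  have hr := hP.right
  refine ⟨insert b X, by grind, z', b, (PS.cons hazz hbX hP).symm, hbz.symm, ?_⟩
  have : ({b, z, z'} : Finset V).card = 3 := by
    rw [Finset.card_eq_three]; exact ⟨b, z, z', by grind, by grind, by grind, rfl⟩
  rw [← this]
  exact Finset.card_le_card (by grind)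

/-- In a 2-connected set, every vertex off a cycle lies on an ear of that cycle. -/
theorem TwoConn.ear {Y C : Finset V} (h : TwoConn G Y) (hCY : C ⊆ Y) (hC : IsCyc G C) {z : V}
    (hz : z ∈ Y) (hzC : z ∉ C) : ∃ c ∈ C, ∃ d ∈ C, c ≠ d ∧ ∃ E ⊆ Y, PS G c d E ∧ z ∈ E ∧
      ∀ x ∈ E, x ∈ C → x = c ∨ x = d := by
  have hC3 : 3 ≤ C.card := by obtain ⟨a, b, h1, h2, h3⟩ := hC; exact h3
  have hCn : C.Nonempty := Finset.card_pos.1 (by omega)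
  obtain ⟨a0, ha0⟩ := hCn
  have key := h.2.1.induct (fun z => z ∉ C → ∃ c ∈ C, ∃ d ∈ C, c ≠ d ∧ ∃ E ⊆ Y, PS G c d E ∧ z ∈ E ∧
      ∀ x ∈ E, x ∈ C → x = c ∨ x = d) (hCY ha0) (fun h => absurd ha0 h) ?_ z hz hzC
  · exact key
  intro v hv z hz ih hvz hzC
  by_cases hvC : v ∈ C
  · -- the edge `vz` followed by a path back to the cycle
    have hne : ∃ b ∈ C, b ≠ v := Finset.exists_mem_ne (by omega) v
    obtain ⟨b, hb, hbv⟩ := hne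
    obtain ⟨c, hc, X, hX, hP, hXB⟩ := (h.2.2 v hv).path (a := z) (B := C.erase v)
      (by simp [hz]; rintro rfl; exact hzC hvC) ⟨b, by simp [hbv, hCY hb], by simp [hbv, hb]⟩
    have hvX : v ∉ X := fun h => by have := hX h; simp at this
    have := hP.left
    exact ⟨v, hvC, c, by grind, by grind, insert v X, by grind, .cons hvz hvX hP, by grind, by grind⟩
  · obtain ⟨c, hc, d, hd, hcd, E, hE, hP, hvE, hEC⟩ := ih hvC
    by_cases hzE : z ∈ E
    · exact ⟨c, hc, d, hd, hcd, E, hE, hP, hzE, hEC⟩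
    have hcv : c ≠ v := by rintro rfl; exact hvC hc
    have hcE := hP.left
    have hdE := hP.right
    obtain ⟨e, he, X, hX, hQ, hXB⟩ := (h.2.2 v hv).path (a := z) (B := (C ∪ E).erase v)
      (by simp [hz]; rintro rfl; exact hzE hvE) ⟨c, by simp [hcv, hCY hc], by simp [hcv, hc]⟩
    have hvX : v ∉ X := fun h => by have := hX h; simp at this
    have hR : PS G v e (insert v X) := .cons hvz hvX hQ
    have hzX := hQ.left
    have heX := hQ.right
    have hRE : ∀ x ∈ insert v X, x ∈ C ∪ E → x = v ∨ x = e := by grind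
    have key2 : ∀ c d, c ∈ C → d ∈ C → c ≠ d → PS G c d E → (∀ x ∈ E, x ∈ C → x = c ∨ x = d) →
        (e ∉ E ∨ ∃ X1 X2, PS G c v X1 ∧ PS G v d X2 ∧ E = X1 ∪ X2 ∧ (∀ x ∈ X1, x ∈ X2 → x = v) ∧
          e ∈ X2) → ∃ c ∈ C, ∃ d ∈ C, c ≠ d ∧ ∃ E ⊆ Y, PS G c d E ∧ z ∈ E ∧
            ∀ x ∈ E, x ∈ C → x = c ∨ x = d := by
      intro c d hc hd hcd hP hEC hcase
      rcases hcase with heE | ⟨X1, X2, h1, h2, rfl, h12, he2⟩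
      · obtain ⟨X1, X2, h1, h2, rfl, h12⟩ := hP.split hvE
        have := h1.left
        have := h1.right
        have := h2.right
        exact ⟨c, hc, e, by grind, by grind, X1 ∪ insert v X, by grind, h1.append hR (by grind),
          by grind, by grind⟩
      · obtain ⟨X3, X4, h3, h4, rfl, h34⟩ := h2.split he2
        have := h4.left
        have := h3.left
        have := h4.right
        have := h1.right
        have hve : v ≠ e := by grind
        have hv4 : v ∉ X4 := by grind
        have hXY : insert v X ⊆ Y := by grind
        have hXX : X1 ∪ (insert v X ∪ X4) ⊆ Y := by
          intro x; have := @hE x; have := @hXY x; grind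
        refine ⟨c, hc, d, hd, hcd, X1 ∪ (insert v X ∪ X4), hXX,
          h1.append (hR.append h4 (by grind)) ?_, by grind, ?_⟩
        · intro x hx hx'
          have := hRE x
          grind
        · intro x hx hxC
          have := hRE x
          grind
    by_cases heE : e ∈ E
    · obtain ⟨X1, X2, h1, h2, rfl, h12⟩ := hP.split hvE
      rcases Finset.mem_union.1 heE with h3 | h3
      · exact key2 d c hd hc hcd.symm hP.symm (by grind)
          (Or.inr ⟨X2, X1, h2.symm, h1.symm, by grind, by grind, h3⟩)
      · exact key2 c d hc hd hcd hP hEC (Or.inr ⟨X1, X2, h1, h2, rfl, h12, h3⟩)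
    · exact key2 c d hc hd hcd hP hEC (Or.inl heE)

/-- Closing an ear by an arc of the cycle. -/
theorem IsCyc.close {C E X : Finset V} {c d : V} (hcd : c ≠ d) (hE : PS G c d E)
    (hEC : ∀ x ∈ E, x ∈ C → x = c ∨ x = d) (hXC : X ⊆ C) (hX : PS G c d X) {z : V} (hz : z ∈ E)
    (hzC : z ∉ C) : IsCyc G (E ∪ X) := by
  have h1 := hX.left
  have h2 := hX.right
  refine isCyc_of hcd hE hX (fun x hx hx' => hEC x hx (hXC hx')) ?_
  have : ({z, c, d} : Finset V).card = 3 := by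
    rw [Finset.card_eq_three]; exact ⟨z, c, d, by grind, by grind, by grind, rfl⟩
  rw [← this]
  exact Finset.card_le_card (by grind)

/-- In a 2-connected set, a cycle through `u` can be rerouted through a further vertex. -/
theorem TwoConn.cyc_insert {Y C : Finset V} (h : TwoConn G Y) (hCY : C ⊆ Y) (hC : IsCyc G C)
    {u z : V} (hu : u ∈ C) (hz : z ∈ Y) : ∃ D ⊆ Y, IsCyc G D ∧ u ∈ D ∧ z ∈ D := by
  by_cases hzC : z ∈ C
  · exact ⟨C, hCY, hC, hu, hzC⟩
  obtain ⟨c, hc, d, hd, hcd, E, hE, hP, hzE, hEC⟩ := h.ear hCY hC hz hzC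
  obtain ⟨X, X', h1, h2, rfl, h3⟩ := hC.arcs hc hd hcd
  rcases Finset.mem_union.1 hu with hu | hu
  · exact ⟨E ∪ X, by grind, IsCyc.close hcd hP hEC (by grind) h1 hzE hzC, by grind, by grind⟩
  · exact ⟨E ∪ X', by grind, IsCyc.close hcd hP hEC (by grind) h2 hzE hzC, by grind, by grind⟩

/-- Three vertices of a 2-connected set lie on a common cycle, or are separated
from each other by the branch vertices of a theta graph. -/
theorem TwoConn.theta {Y : Finset V} (h : TwoConn G Y) {n : Fin 3 → V} (hn : ∀ i, n i ∈ Y) :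
    (∃ C ⊆ Y, IsCyc G C ∧ ∀ i, n i ∈ C) ∨
    ∃ p ∈ Y, ∃ q ∈ Y, p ≠ q ∧ ∃ Q : Fin 3 → Finset V,
      (∀ i, Q i ⊆ Y ∧ p ∉ Q i ∧ q ∉ Q i ∧ n i ∈ Q i ∧ Conn G (Q i) ∧ (∃ y ∈ Q i, G.Adj p y) ∧
        ∃ y ∈ Q i, G.Adj q y) ∧ ∀ i j, i ≠ j → ∀ x ∈ Q i, x ∉ Q j := by
  obtain ⟨C0, hC0, hc0⟩ := h.exists_cyc
  have hne : C0.Nonempty := by obtain ⟨a, b, h1, h2, h3⟩ := hc0; exact ⟨a, h1.left⟩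
  obtain ⟨u, hu⟩ := hne
  obtain ⟨C1, hC1, hc1, -, h01⟩ := h.cyc_insert hC0 hc0 hu (hn 0)
  obtain ⟨C, hCY, hC, h0, h1⟩ := h.cyc_insert hC1 hc1 h01 (hn 1)
  by_cases h2 : n 2 ∈ C
  · left; exact ⟨C, hCY, hC, by intro i; fin_cases i <;> assumption⟩
  obtain ⟨c, hc, d, hd, hcd, E, hE, hP, hzE, hEC⟩ := h.ear hCY hC (hn 2) h2
  obtain ⟨X, X', hX, hX', rfl, h3⟩ := hC.arcs hc hd hcd
  by_cases hXX : (n 0 ∈ X ∧ n 1 ∈ X) ∨ (n 0 ∈ X' ∧ n 1 ∈ X')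
  · left
    rcases hXX with ⟨ha, hb⟩ | ⟨ha, hb⟩
    · refine ⟨E ∪ X, by grind, IsCyc.close hcd hP hEC (by grind) hX hzE h2, ?_⟩
      intro i; fin_cases i <;> simp [*]
    · refine ⟨E ∪ X', by grind, IsCyc.close hcd hP hEC (by grind) hX' hzE h2, ?_⟩
      intro i; fin_cases i <;> simp [*]
  right
  have key : ∀ X X', PS G c d X → PS G c d X' → X ⊆ Y → X' ⊆ Y → (∀ x ∈ E, x ∈ X → x = c ∨ x = d) →
      (∀ x ∈ E, x ∈ X' → x = c ∨ x = d) → (∀ x ∈ X, x ∈ X' → x = c ∨ x = d) →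
      n 0 ∈ X → n 1 ∈ X' → n 0 ∉ X' → n 1 ∉ X → n 2 ∉ X →
      ∃ p ∈ Y, ∃ q ∈ Y, p ≠ q ∧ ∃ Q : Fin 3 → Finset V,
      (∀ i, Q i ⊆ Y ∧ p ∉ Q i ∧ q ∉ Q i ∧ n i ∈ Q i ∧ Conn G (Q i) ∧ (∃ y ∈ Q i, G.Adj p y) ∧
        ∃ y ∈ Q i, G.Adj q y) ∧ ∀ i j, i ≠ j → ∀ x ∈ Q i, x ∉ Q j := by
    intro X X' hX hX' hXY hXY' hEX hEX' hXX' a1 a2 a3 a4 a5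
    have l := hX.left
    have r := hX.right
    have l' := hX'.left
    have r' := hX'.right
    have i0 := hX.interior a1 (by grind) (by grind) hcd
    have i1 := hX'.interior a2 (by grind) (by grind) hcd
    have i2 := hP.interior hzE (by grind) (by grind) hcd
    refine ⟨c, hXY l, d, hXY r, hcd, ![X \ {c, d}, X' \ {c, d}, E \ {c, d}], ?_, ?_⟩
    · intro i
      fin_cases i
      · exact ⟨(show X \ {c, d} ⊆ Y by grind), (show c ∉ X \ {c, d} by grind),
          (show d ∉ X \ {c, d} by grind), (show n 0 ∈ X \ {c, d} by grind), i0⟩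
      · exact ⟨(show X' \ {c, d} ⊆ Y by grind), (show c ∉ X' \ {c, d} by grind),
          (show d ∉ X' \ {c, d} by grind), (show n 1 ∈ X' \ {c, d} by grind), i1⟩
      · exact ⟨(show E \ {c, d} ⊆ Y by grind), (show c ∉ E \ {c, d} by grind),
          (show d ∉ E \ {c, d} by grind), (show n 2 ∈ E \ {c, d} by grind), i2⟩
    · intro i j hij
      fin_cases i <;> fin_cases j <;> simp at hij ⊢ <;> grind
  rcases Finset.mem_union.1 h0 with a | a <;> rcases Finset.mem_union.1 h1 with b | b
  · exact absurd (Or.inl ⟨a, b⟩) hXX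
  · exact key X X' hX hX' (by grind) (by grind) (by grind) (by grind) h3 a b (by grind) (by grind)
      (by grind)
  · exact key X' X hX' hX (by grind) (by grind) (by grind) (by grind) (by grind) a b (by grind)
      (by grind) (by grind)
  · exact absurd (Or.inr ⟨a, b⟩) hXX

end HW

/-! ### Subdivisions of `K₃,₃` and `K₅` from connected sets -/

namespace HW

variable {V : Type} [DecidableEq V] {G : SimpleGraph V}

theorem mem_walkInterior {u v : V} (p : G.Walk u v) (hp : p.IsPath) (x : V) :
    x ∈ walkInterior p ↔ x ∈ p.support ∧ x ≠ u ∧ x ≠ v := by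
  unfold walkInterior
  cases p with
  | nil => simp
  | @cons _ w _ h q =>
    rw [SimpleGraph.Walk.cons_isPath_iff] at hp
    simp only [SimpleGraph.Walk.support_cons, List.tail_cons, List.mem_cons]
    have hq := hp.1.support_nodup
    have e : q.support = q.support.dropLast ++ [v] := by
      conv_lhs => rw [← List.dropLast_append_getLast (SimpleGraph.Walk.support_ne_nil q)]
      simp
    constructor
    · intro hx
      have hx' : x ∈ q.support := List.mem_of_mem_dropLast hx
      refine ⟨Or.inr hx', fun h => hp.2 (h ▸ hx'), ?_⟩
      rintro rfl
      rw [e, List.nodup_append] at hq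
      exact hq.2.2 x hx x (by simp) rfl
    · rintro ⟨h1, h2, h3⟩
      have : x ∈ q.support := by tauto
      rw [e, List.mem_append, List.mem_singleton] at this
      exact this.resolve_right h3

/-- `K33` as a system of connected sets joining two triples of vertices. -/
theorem k33_of_sets {a b : Fin 3 → V} (ha : Function.Injective a) (hb : Function.Injective b)
    (hab : ∀ i j, a i ≠ b j) (X : Fin 3 → Fin 3 → Finset V)
    (hX : ∀ i j, Conn G (X i j) ∧ a i ∈ X i j ∧ b j ∈ X i j)
    (ha' : ∀ i j k, a k ∈ X i j → k = i) (hb' : ∀ i j k, b k ∈ X i j → k = j)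
    (hd : ∀ i j i' j', (i, j) ≠ (i', j') → ∀ x ∈ X i j, x ∈ X i' j' → x = a i ∨ x = b j) :
    HasK33Subdivision G := by
  have : ∀ i j, ∃ p : G.Walk (a i) (b j), p.IsPath ∧ ∀ x ∈ p.support, x ∈ X i j := by
    intro i j
    obtain ⟨Y, hY, hp⟩ := (hX i j).1.path' (hX i j).2.1 (hX i j).2.2
    obtain ⟨p, h1, h2⟩ := hp.walk
    exact ⟨p, h1, fun x hx => hY ((h2 x).1 hx)⟩
  choose P hP hPX using this
  refine ⟨a, b, ha, hb, hab, P, hP, ?_, ?_⟩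
  · intro i j k
    simp only [mem_walkInterior _ (hP i j)]
    refine ⟨fun h => ?_, fun h => ?_⟩
    · exact h.2.1 (by rw [ha' i j k (hPX _ _ _ h.1)])
    · exact h.2.2 (by rw [hb' i j k (hPX _ _ _ h.1)])
  · intro i j i' j' hne x hx hx'
    rw [mem_walkInterior _ (hP i j)] at hx
    have := hd i j i' j' hne x (hPX _ _ _ hx.1) (hPX _ _ _ hx')
    tauto

/-- A `K33`-minor yields a subdivision of `K33`, since its branch sets have
three outgoing connections each. -/
theorem k33_of_minor (P Q : Fin 3 → Finset V) (hP : ∀ i, Conn G (P i)) (hQ : ∀ i, Conn G (Q i))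
    (hPP : ∀ i j, i ≠ j → ∀ x ∈ P i, x ∉ P j) (hQQ : ∀ i j, i ≠ j → ∀ x ∈ Q i, x ∉ Q j)
    (hPQ : ∀ i j, ∀ x ∈ P i, x ∉ Q j) (hadj : ∀ i j, Tch G (P i) (Q j)) :
    HasK33Subdivision G := by
  choose p hp q hq hpq using hadj
  have h1 := fun i => tripod (hP i) (p := fun j => p i j) (hp i)
  have h2 := fun j => tripod (hQ j) (p := fun i => q i j) (fun i => hq i j)
  choose a ha R hR hRd using h1
  choose b hb S hS hSd using h2
  have inj : ∀ i i' x, x ∈ P i → x ∈ P i' → i = i' := fun i i' x h h' => by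
    by_contra hne; exact hPP i i' hne x h h'
  have inj' : ∀ i i' x, x ∈ Q i → x ∈ Q i' → i = i' := fun i i' x h h' => by
    by_contra hne; exact hQQ i i' hne x h h'
  refine k33_of_sets (a := a) (b := b) (fun i i' h => inj i i' (a i) (ha i) (h ▸ ha i'))
    (fun i i' h => inj' i i' (b i) (hb i) (h ▸ hb i'))
    (fun i j h => hPQ i j (a i) (ha i) (h ▸ hb j)) (fun i j => R i j ∪ S j i) ?_ ?_ ?_ ?_
  · intro i j
    obtain ⟨-, h1, h2, h3⟩ := hR i j
    obtain ⟨-, h4, h5, h6⟩ := hS j i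
    exact ⟨h3.union h6 (Or.inr ⟨_, h2, _, h5, hpq i j⟩), by simp [h1], by simp [h4]⟩
  · intro i j k hk
    rcases Finset.mem_union.1 hk with h | h
    · exact inj k i _ (ha k) ((hR i j).1 h)
    · exact absurd ((hS j i).1 h) (hPQ k j _ (ha k))
  · intro i j k hk
    rcases Finset.mem_union.1 hk with h | h
    · exact absurd (hb k) (hPQ i k _ ((hR i j).1 h))
    · exact inj' k j _ (hb k) ((hS j i).1 h)
  · intro i j i' j' hne x hx hx'
    rcases Finset.mem_union.1 hx with h | h <;> rcases Finset.mem_union.1 hx' with h' | h'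
    · left
      obtain rfl := inj i i' x ((hR i j).1 h) ((hR i' j').1 h')
      exact hRd i j j' (by grind) x h h'
    · exact absurd ((hS j' i').1 h') (hPQ i j' _ ((hR i j).1 h))
    · exact absurd ((hS j i).1 h) (hPQ i' j _ ((hR i' j').1 h'))
    · right
      obtain rfl := inj' j j' x ((hS j i).1 h) ((hS j' i').1 h')
      exact hSd j i i' (by grind) x h h'

/-- `K5` as a system of connected sets joining five vertices pairwise. -/
def K5Sets (G : SimpleGraph V) : Prop :=
  ∃ (b : Fin 5 → V) (X : Fin 5 → Fin 5 → Finset V), Function.Injective b ∧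
    (∀ i j, i < j → Conn G (X i j) ∧ b i ∈ X i j ∧ b j ∈ X i j) ∧
    (∀ i j, i < j → ∀ k, b k ∈ X i j → k = i ∨ k = j) ∧
    ∀ i j i' j', i < j → i' < j' → (i, j) ≠ (i', j') → ∀ x ∈ X i j, x ∈ X i' j' → ∃ k, x = b k

theorem k5_iff : HasK5Subdivision G ↔ K5Sets G := by
  constructor
  · rintro ⟨b, hb, P, hP, hk, hd⟩
    refine ⟨b, fun i j => (P i j).support.toFinset, hb, ?_, ?_, ?_⟩
    · intro i j hij
      exact ⟨(ps_of_path _ (hP i j hij)).conn, by simp, by simp⟩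
    · intro i j hij k hkk
      have := hk i j hij k
      rw [mem_walkInterior _ (hP i j hij)] at this
      simp only [List.mem_toFinset] at hkk
      by_contra hne
      push Not at hne
      exact this ⟨hkk, fun h => hne.1 (hb h), fun h => hne.2 (hb h)⟩
    · intro i j i' j' hij hij' hne x hx hx'
      by_contra hc
      push Not at hc
      simp only [List.mem_toFinset] at hx hx'
      exact hd i j i' j' hij hij' hne x
        ((mem_walkInterior _ (hP i j hij) x).2 ⟨hx, hc i, hc j⟩) hx'
  · rintro ⟨b, X, hb, hX, hk, hd⟩
    have : ∀ i j, ∃ p : G.Walk (b i) (b j), i < j → p.IsPath ∧ ∀ x ∈ p.support, x ∈ X i j := by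
      intro i j
      by_cases hij : i < j
      · obtain ⟨Y, hY, hp⟩ := (hX i j hij).1.path' (hX i j hij).2.1 (hX i j hij).2.2
        obtain ⟨p, h1, h2⟩ := hp.walk
        exact ⟨p, fun _ => ⟨h1, fun x hx => hY ((h2 x).1 hx)⟩⟩
      · have hconn : ∀ i j, i < j → ∃ p : G.Walk (b i) (b j), True := by
          intro i j hij
          obtain ⟨Y, hY, hp⟩ := (hX i j hij).1.path' (hX i j hij).2.1 (hX i j hij).2.2
          obtain ⟨p, h1, h2⟩ := hp.walk
          exact ⟨p, trivial⟩
        rcases lt_or_eq_of_le (not_lt.1 hij) with h | h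
        · obtain ⟨p, -⟩ := hconn j i h
          exact ⟨p.reverse, fun h => absurd h hij⟩
        · subst h
          exact ⟨.nil, fun h => absurd h hij⟩
    choose P hP using this
    refine ⟨b, hb, P, fun i j h => (hP i j h).1, ?_, ?_⟩
    · intro i j hij k h
      rw [mem_walkInterior _ (hP i j hij).1] at h
      rcases hk i j hij k ((hP i j hij).2 _ h.1) with rfl | rfl
      · exact h.2.1 rfl
      · exact h.2.2 rfl
    · intro i j i' j' hij hij' hne x hx hx'
      rw [mem_walkInterior _ (hP i j hij).1] at hx
      obtain ⟨k, rfl⟩ := hd i j i' j' hij hij' hne x ((hP i j hij).2 _ hx.1) ((hP i' j' hij').2 _ hx')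
      rcases hk i j hij k ((hP i j hij).2 _ hx.1) with rfl | rfl
      · exact hx.2.1 rfl
      · exact hx.2.2 rfl

/-- Connected sets are mapped to connected sets by injective homomorphisms, and more generally
by maps preserving adjacency inside the set. -/
theorem Conn.map {W : Type} [DecidableEq W] {H : SimpleGraph W} (f : V → W) {X : Finset V}
    (hX : Conn G X) (hf : ∀ x ∈ X, ∀ y ∈ X, G.Adj x y → H.Adj (f x) (f y)) :
    Conn H (X.image f) := by
  refine ⟨hX.1.image f, fun Y hY hn hc => ?_⟩
  obtain ⟨y, hy⟩ := hn
  obtain ⟨x, hx, rfl⟩ := Finset.mem_image.1 (hY hy)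
  have := hX.induct (fun x => f x ∈ Y) hx hy (fun a ha b hb h1 h2 =>
    hc _ h1 _ (Finset.mem_image_of_mem f hb) (hf a ha b hb h2))
  refine Finset.Subset.antisymm hY fun z hz => ?_
  obtain ⟨x', hx', rfl⟩ := Finset.mem_image.1 hz
  exact this x' hx'

end HW

/-! ### Colourings of Hajós graphs -/

namespace HW

variable {V : Type} [DecidableEq V] {G : SimpleGraph V}

theorem K5Sets.map {W : Type} [DecidableEq W] {H : SimpleGraph W} (f : V → W)
    (hf : Function.Injective f) (hadj : ∀ x y, G.Adj x y → H.Adj (f x) (f y)) (h : K5Sets G) :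
    K5Sets H := by
  obtain ⟨b, X, hb, hX, hk, hd⟩ := h
  refine ⟨f ∘ b, fun i j => (X i j).image f, hf.comp hb, ?_, ?_, ?_⟩
  · intro i j hij
    obtain ⟨h1, h2, h3⟩ := hX i j hij
    exact ⟨h1.map f fun x _ y _ => hadj x y, Finset.mem_image_of_mem f h2,
      Finset.mem_image_of_mem f h3⟩
  · intro i j hij k h
    rw [Function.comp, hf.mem_finset_image] at h
    exact hk i j hij k h
  · intro i j i' j' hij hij' hne x hx hx'
    obtain ⟨y, hy, rfl⟩ := Finset.mem_image.1 hx
    rw [hf.mem_finset_image] at hx'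
    obtain ⟨k, rfl⟩ := hd i j i' j' hij hij' hne y hy hx'
    exact ⟨k, rfl⟩

variable [Fintype V]

/-- The minimality of a Hajós graph, for graphs on an arbitrary finite vertex type. -/
theorem IsHajos.small (hG : IsHajos G) {W : Type} [Fintype W]
    (hW : Fintype.card W < Fintype.card V) (H : SimpleGraph W) (hH : ¬ HasK5Subdivision H) :
    H.Colorable 4 := by
  classical
  let e := Fintype.equivFin W
  rcases hG.2.2 _ hW (H.comap e.symm) with h | h
  · exfalso
    apply hH
    rw [k5_iff] at h ⊢
    exact h.map e.symm e.symm.injective fun x y hxy => hxy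
  · obtain ⟨c⟩ := h
    exact ⟨⟨fun w => c (e w), fun {a b} hab => c.valid (by simpa using hab)⟩⟩

/-- `c` properly colours the subgraph induced by `X`. -/
def ProperOn (G : SimpleGraph V) (X : Finset V) (c : V → Fin 4) : Prop :=
  ∀ x ∈ X, ∀ y ∈ X, G.Adj x y → c x ≠ c y

/-- A proper induced subgraph of a Hajós graph, with an edge `uv` added when `u`, `v`
are joined by a path outside of it, is 4-colourable. -/
theorem IsHajos.color_add (hG : IsHajos G) {X : Finset V} (hX : ∃ z, z ∉ X) {u v : V}
    (hu : u ∈ X) (hv : v ∈ X) (huv : u ≠ v) {P : Finset V} (hP : Conn G P) (huP : u ∈ P)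
    (hvP : v ∈ P) (hPX : ∀ x ∈ P, x ∈ X → x = u ∨ x = v) :
    ∃ c, ProperOn G X c ∧ c u ≠ c v := by
  let H : SimpleGraph X := SimpleGraph.fromRel fun x y =>
    G.Adj x.1 y.1 ∨ (x.1 = u ∧ y.1 = v)
  have hHadj : ∀ x y : X, H.Adj x y ↔ G.Adj x.1 y.1 ∨ (x.1 = u ∧ y.1 = v) ∨
      (x.1 = v ∧ y.1 = u) := by
    intro x y
    simp only [H, SimpleGraph.fromRel_adj]
    constructor
    · rintro ⟨-, h | h⟩
      · tauto
      · rcases h with h | h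
        · exact Or.inl h.symm
        · tauto
    · intro h
      refine ⟨?_, ?_⟩
      · rintro rfl
        rcases h with h | h | h
        · exact h.ne rfl
        · exact huv (h.1.symm.trans h.2)
        · exact huv (h.2.symm.trans h.1)
      · tauto
  have hcard : Fintype.card X < Fintype.card V := by
    rw [Fintype.card_coe]
    obtain ⟨z, hz⟩ := hX
    exact Finset.card_lt_univ_of_notMem hz
  have hcol := IsHajos.small hG hcard H (fun hH => by
    apply hG.1
    rw [k5_iff] at hH ⊢
    obtain ⟨b, Y, hb, hY, hk, hd⟩ := hH
    let Z : Fin 5 → Fin 5 → Finset V := fun i j =>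
      (Y i j).image Subtype.val ∪ (if (⟨u, hu⟩ : X) ∈ Y i j ∧ (⟨v, hv⟩ : X) ∈ Y i j then P else ∅)
    have hmemX : ∀ i j (x : X), x.1 ∈ Z i j → x ∈ Y i j := by
      intro i j x hx
      rcases Finset.mem_union.1 hx with h | h
      · exact (Subtype.val_injective.mem_finset_image).1 h
      · split_ifs at h with h1
        · rcases hPX _ h x.2 with h2 | h2
          · have : x = ⟨u, hu⟩ := Subtype.ext h2
            rw [this]; exact h1.1
          · have : x = ⟨v, hv⟩ := Subtype.ext h2
            rw [this]; exact h1.2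
        · simp at h
    refine ⟨fun i => (b i).1, Z, Subtype.val_injective.comp hb, ?_, ?_, ?_⟩
    · intro i j hij
      obtain ⟨h1, h2, h3⟩ := hY i j hij
      refine ⟨?_, by simp [Z, h2], by simp [Z, h3]⟩
      by_cases hc : (⟨u, hu⟩ : X) ∈ Y i j ∧ (⟨v, hv⟩ : X) ∈ Y i j
      · have hZ : Z i j = (Y i j).image Subtype.val ∪ P := by simp [Z, hc]
        rw [hZ]
        refine ⟨⟨u, by simp [huP]⟩, fun S hS hn hcl => ?_⟩
        have hPS : (∃ s ∈ P, s ∈ S) → P ⊆ S := by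
          rintro ⟨s, hs, hsS⟩ p hp
          exact hP.induct (· ∈ S) hs hsS (fun x hx y hy h1 h2 => hcl x h1 y (by simp [hy]) h2) p hp
        have hYS : (∃ s ∈ Y i j, s.1 ∈ S) → ∀ s ∈ Y i j, s.1 ∈ S := by
          rintro ⟨s, hs, hsS⟩ p hp
          refine h1.induct (fun s => s.1 ∈ S) hs hsS (fun x hx y hy h1 h2 => ?_) p hp
          rcases (hHadj x y).1 h2 with h | ⟨h3, h4⟩ | ⟨h3, h4⟩
          · refine hcl x.1 h1 y.1 ?_ h
            exact Finset.mem_union_left _ (Finset.mem_image_of_mem _ hy)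
          · rw [h4]; rw [h3] at h1; exact hPS ⟨u, huP, h1⟩ hvP
          · rw [h4]; rw [h3] at h1; exact hPS ⟨v, hvP, h1⟩ huP
        have huS : u ∈ S := by
          obtain ⟨s, hs⟩ := hn
          rcases Finset.mem_union.1 (hS hs) with h | h
          · obtain ⟨t, ht, rfl⟩ := Finset.mem_image.1 h
            exact hYS ⟨t, ht, hs⟩ _ hc.1
          · exact hPS ⟨s, h, hs⟩ huP
        refine Finset.Subset.antisymm hS (Finset.union_subset ?_ (hPS ⟨u, huP, huS⟩))
        intro x hx
        obtain ⟨t, ht, rfl⟩ := Finset.mem_image.1 hx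
        exact hYS ⟨_, hc.1, huS⟩ t ht
      · have hZ : Z i j = (Y i j).image Subtype.val := by simp [Z, hc]
        rw [hZ]
        refine h1.map _ fun x hx y hy hxy => ?_
        rcases (hHadj x y).1 hxy with h | ⟨h3, h4⟩ | ⟨h3, h4⟩
        · exact h
        · exfalso; subst h3; subst h4; exact hc ⟨hx, hy⟩
        · exfalso; subst h3; subst h4; exact hc ⟨hy, hx⟩
    · intro i j hij k h
      exact hk i j hij k (hmemX _ _ _ h)
    · intro i j i' j' hij hij' hne x hx hx'
      by_cases hxX : x ∈ X
      · obtain ⟨k, hk⟩ := hd i j i' j' hij hij' hne ⟨x, hxX⟩ (hmemX i j ⟨x, hxX⟩ hx)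
          (hmemX i' j' ⟨x, hxX⟩ hx')
        exact ⟨k, congrArg Subtype.val hk⟩
      · exfalso
        have hboth : ∀ i j, x ∈ Z i j → (⟨u, hu⟩ : X) ∈ Y i j ∧ (⟨v, hv⟩ : X) ∈ Y i j := by
          intro i j hx
          by_contra hc
          have hZ : Z i j = (Y i j).image Subtype.val := by simp [Z, hc]
          rw [hZ] at hx
          obtain ⟨t, ht, rfl⟩ := Finset.mem_image.1 hx
          exact hxX t.2
        have h1 := hboth i j hx
        have h2 := hboth i' j' hx'
        obtain ⟨k, hku⟩ := hd i j i' j' hij hij' hne _ h1.1 h2.1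
        obtain ⟨l, hlv⟩ := hd i j i' j' hij hij' hne _ h1.2 h2.2
        rw [hku, hlv] at h1 h2
        have a1 := hk i j hij k h1.1
        have a2 := hk i j hij l h1.2
        have a3 := hk i' j' hij' k h2.1
        have a4 := hk i' j' hij' l h2.2
        have hkl : k ≠ l := by
          rintro rfl
          rw [← hlv] at hku
          exact huv (congrArg Subtype.val hku)
        apply hne
        simp only [Prod.mk.injEq]
        omega)
  obtain ⟨c⟩ := hcol
  refine ⟨fun x => if h : x ∈ X then c ⟨x, h⟩ else 0, ?_, ?_⟩
  · intro x hx y hy hxy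
    simp only [hx, hy, dif_pos]
    exact c.valid ((hHadj _ _).2 (Or.inl hxy))
  · simp only [hu, hv, dif_pos]
    exact c.valid ((hHadj _ _).2 (Or.inr (Or.inl ⟨rfl, rfl⟩)))

theorem IsHajos.color (hG : IsHajos G) {X : Finset V} (hX : ∃ z, z ∉ X) :
    ∃ c, ProperOn G X c := by
  have hcard : Fintype.card X < Fintype.card V := by
    rw [Fintype.card_coe]
    obtain ⟨z, hz⟩ := hX
    exact Finset.card_lt_univ_of_notMem hz
  obtain ⟨c⟩ := IsHajos.small hG hcard (G.comap (Subtype.val : X → V)) (fun h => hG.1 (by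
    rw [k5_iff] at h ⊢
    exact h.map _ Subtype.val_injective fun x y hxy => hxy))
  refine ⟨fun x => if h : x ∈ X then c ⟨x, h⟩ else 0, ?_⟩
  intro x hx y hy hxy
  simp only [hx, hy, dif_pos]
  exact c.valid hxy

/-- The neighbours of `v`. -/
noncomputable def nb (G : SimpleGraph V) (v : V) : Finset V := by
  classical exact Finset.univ.filter (G.Adj v)

@[simp] theorem mem_nb {v x : V} : x ∈ nb G v ↔ G.Adj v x := by simp [nb]

/-- The vertices outside `B` with a neighbour in `B`. -/
noncomputable def onb (G : SimpleGraph V) (B : Finset V) : Finset V := by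
  classical exact Finset.univ.filter fun x => x ∉ B ∧ ∃ b ∈ B, G.Adj b x

theorem mem_onb {B : Finset V} {x : V} : x ∈ onb G B ↔ x ∉ B ∧ ∃ b ∈ B, G.Adj b x := by simp [onb]

theorem IsHajos.not_proper (hG : IsHajos G) {c : V → Fin 4}
    (h : ∀ x y, G.Adj x y → c x ≠ c y) : False :=
  hG.2.1 ⟨⟨c, fun {_ _} hab => h _ _ hab⟩⟩

theorem IsHajos.degree (hG : IsHajos G) (v : V) : 4 ≤ (nb G v).card := by
  by_contra hlt
  obtain ⟨c, hc⟩ := IsHajos.color hG (X := Finset.univ.erase v) ⟨v, by simp⟩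
  obtain ⟨k, hk⟩ : ∃ k, k ∉ (nb G v).image c := by
    by_contra h
    push Not at h
    have h1 : (nb G v).image c = Finset.univ := by ext; simp only [h, Finset.mem_univ]
    have h2 : ((nb G v).image c).card ≤ (nb G v).card := Finset.card_image_le
    rw [h1] at h2
    simp at h2
    omega
  refine IsHajos.not_proper hG (c := fun x => if x = v then k else c x) fun x y hxy => ?_
  have hk' : ∀ y, G.Adj v y → c y ≠ k := fun y hy h =>
    hk (Finset.mem_image.2 ⟨y, by simpa using hy, h⟩)
  by_cases hx : x = v
  · have hy : y ≠ v := by rintro rfl; exact hxy.ne hx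
    subst hx
    simp only [if_true, hy, if_false]
    exact (hk' y hxy).symm
  · by_cases hy : y = v
    · subst hy
      simp only [if_true, hx, if_false]
      exact hk' x hxy.symm
    · simp only [hx, hy, if_false]
      exact hc x (by simp [hx]) y (by simp [hy]) hxy

/-- Colourings of the two sides of a cut which agree on the cut can be glued. -/
theorem IsHajos.glue (hG : IsHajos G) {A : Finset V} {c c' : V → Fin 4}
    (h : ProperOn G (A ∪ onb G A) c) (h' : ProperOn G (Finset.univ \ A) c')
    (σ : Equiv.Perm (Fin 4)) (hσ : ∀ t ∈ onb G A, σ (c t) = c' t) : False := by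
  have key : ∀ x y, x ∈ A → y ∉ A → G.Adj x y → σ (c x) ≠ c' y := by
    intro x y hx hy hxy
    have hyo : y ∈ onb G A := mem_onb.2 ⟨hy, x, hx, hxy⟩
    rw [← hσ y hyo]
    exact fun e => h x (by simp [hx]) y (by simp [hyo]) hxy (σ.injective e)
  refine IsHajos.not_proper hG (c := fun x => if x ∈ A then σ (c x) else c' x) fun x y hxy => ?_
  by_cases hx : x ∈ A <;> by_cases hy : y ∈ A <;> simp only [hx, hy, if_true, if_false]
  · exact fun e => h x (by simp [hx]) y (by simp [hy]) hxy (σ.injective e)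
  · exact key x y hx hy hxy
  · exact (key y x hy hx hxy.symm).symm
  · exact h' x (by simp [hx]) y (by simp [hy]) hxy

/-- Colour pairs of the same pattern (equal or distinct) are exchanged by a permutation. -/
theorem exists_perm (a b a' b' : Fin 4) (h : a = b ↔ a' = b') :
    ∃ σ : Equiv.Perm (Fin 4), σ a = a' ∧ σ b = b' := by
  by_cases hab : a = b
  · refine ⟨Equiv.swap a a', by simp, ?_⟩
    rw [← hab, ← h.1 hab]; simp
  · have hab' : a' ≠ b' := fun e => hab (h.2 e)
    refine ⟨(Equiv.swap a a').trans (Equiv.swap (Equiv.swap a a' b) b'), ?_, ?_⟩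
    · simp only [Equiv.trans_apply, Equiv.swap_apply_left]
      apply Equiv.swap_apply_of_ne_of_ne _ hab'
      intro e
      have : Equiv.swap a a' a = Equiv.swap a a' b := by simpa using e
      exact hab ((Equiv.swap a a').injective this)
    · simp

/-- If two vertices of `X` are not linked inside `X`, a colouring of `X` can be changed
so that it has either pattern on them. -/
theorem ProperOn.flex {X : Finset V} {c : V → Fin 4} (h : ProperOn G X c) {s t : V} (hs : s ∈ X)
    (hnl : ¬ ∃ P ⊆ X, Conn G P ∧ s ∈ P ∧ t ∈ P) (k : Fin 4) :
    ∃ c', ProperOn G X c' ∧ c' s = k ∧ c' t = c t := by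
  obtain ⟨Y, hY, hsY, hYc, hcl⟩ := exists_comp (G := G) hs
  have ht : t ∉ Y := fun ht => hnl ⟨Y, hY, hYc, hsY, ht⟩
  refine ⟨fun x => if x ∈ Y then Equiv.swap (c s) k (c x) else c x, ?_, by simp [hsY], by simp [ht]⟩
  intro x hx y hy hxy
  by_cases hxY : x ∈ Y
  · have hyY := hcl x hxY y hy hxy
    simp only [hxY, hyY, if_true]
    exact fun e => h x hx y hy hxy ((Equiv.swap (c s) k).injective e)
  · have hyY : y ∉ Y := fun hyY => hxY (hcl y hyY x hx hxy.symm)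
    simp only [hxY, hyY, if_false]
    exact h x hx y hy hxy

/-- In a Hajós graph no vertex set `A` is cut off by at most two vertices. -/
theorem IsHajos.two_cut (hG : IsHajos G) {A : Finset V} (hA : A.Nonempty)
    (hz : ∃ z, z ∉ A ∧ z ∉ onb G A) : 3 ≤ (onb G A).card := by
  by_contra hlt
  obtain ⟨z, hzA, hzT⟩ := hz
  obtain ⟨a, ha⟩ := hA
  have hX1 : ∃ z, z ∉ A ∪ onb G A := ⟨z, by simp [hzA, hzT]⟩
  have hX2 : ∃ z, z ∉ Finset.univ \ A := ⟨a, by simp [ha]⟩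
  obtain ⟨c1, hc1⟩ := IsHajos.color hG hX1
  obtain ⟨c2, hc2⟩ := IsHajos.color hG hX2
  have hTA : ∀ t ∈ onb G A, t ∉ A := fun t ht => (mem_onb.1 ht).1
  by_cases h2 : (onb G A).card = 2
  · obtain ⟨s, t, hst, hT⟩ := Finset.card_eq_two.1 h2
    have hsT : s ∈ onb G A := by simp [hT]
    have htT : t ∈ onb G A := by simp [hT]
    have hs1 : s ∈ A ∪ onb G A := Finset.mem_union_right _ hsT
    have ht1 : t ∈ A ∪ onb G A := Finset.mem_union_right _ htT
    have hs2 : s ∈ Finset.univ \ A := by simp [hTA s hsT]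
    have ht2 : t ∈ Finset.univ \ A := by simp [hTA t htT]
    have fin : ∀ c c', ProperOn G (A ∪ onb G A) c → ProperOn G (Finset.univ \ A) c' →
        (c s = c t ↔ c' s = c' t) → False := by
      intro c c' h h' e
      obtain ⟨σ, h1, h2⟩ := exists_perm _ _ _ _ e
      refine IsHajos.glue hG h h' σ fun x hx => ?_
      rw [hT] at hx
      simp only [Finset.mem_insert, Finset.mem_singleton] at hx
      rcases hx with rfl | rfl <;> assumption
    have hcap : ∀ x ∈ A ∪ onb G A, x ∈ Finset.univ \ A → x = s ∨ x = t := by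
      intro x hx hx'
      simp only [hT, Finset.mem_union, Finset.mem_insert, Finset.mem_singleton,
        Finset.mem_sdiff] at hx hx'
      tauto
    obtain ⟨d, hd⟩ : ∃ d : Fin 4, d ≠ c2 t := exists_ne _
    obtain ⟨d1, hd1⟩ : ∃ d : Fin 4, d ≠ c1 t := exists_ne _
    by_cases l1 : ∃ P ⊆ A ∪ onb G A, Conn G P ∧ s ∈ P ∧ t ∈ P
    · by_cases l2 : ∃ P ⊆ Finset.univ \ A, Conn G P ∧ s ∈ P ∧ t ∈ P
      · obtain ⟨P1, hP1, hC1, hsP1, htP1⟩ := l1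
        obtain ⟨P2, hP2, hC2, hsP2, htP2⟩ := l2
        obtain ⟨e1, he1, hne1⟩ := IsHajos.color_add hG hX1 hs1 ht1 hst hC2 hsP2 htP2
          (fun x hx hx' => hcap x hx' (hP2 hx))
        obtain ⟨e2, he2, hne2⟩ := IsHajos.color_add hG hX2 hs2 ht2 hst hC1 hsP1 htP1
          (fun x hx hx' => hcap x (hP1 hx) hx')
        exact fin e1 e2 he1 he2 (by simp [hne1, hne2])
      · by_cases e : c1 s = c1 t
        · obtain ⟨c', h1, h2, h3⟩ := hc2.flex hs2 l2 (c2 t)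
          exact fin c1 c' hc1 h1 (by simp [e, h2, h3])
        · obtain ⟨c', h1, h2, h3⟩ := hc2.flex hs2 l2 d
          exact fin c1 c' hc1 h1 (by simp [e, h2, h3, hd])
    · by_cases e : c2 s = c2 t
      · obtain ⟨c', h1, h2, h3⟩ := hc1.flex hs1 l1 (c1 t)
        exact fin c' c2 h1 hc2 (by simp [e, h2, h3])
      · obtain ⟨c', h1, h2, h3⟩ := hc1.flex hs1 l1 d1
        exact fin c' c2 h1 hc2 (by simp [e, h2, h3, hd1])
  · have h1 : (onb G A).card ≤ 1 := by omega
    obtain ⟨t, ht⟩ : ∃ t, onb G A ⊆ {t} := by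
      have : Nonempty V := ⟨a⟩
      exact Finset.card_le_one_iff_subset_singleton.1 h1
    refine IsHajos.glue hG hc1 hc2 (Equiv.swap (c1 t) (c2 t)) fun x hx => ?_
    have := ht hx
    simp only [Finset.mem_singleton] at this
    subst this
    simp

end HW

/-! ### The reduced configuration and its 2-cuts -/

namespace HW

variable {V : Type} [DecidableEq V] {G : SimpleGraph V}

/-- The vertices of `T` with a neighbour in `X`. -/
noncomputable def tn (G : SimpleGraph V) (T X : Finset V) : Finset V := by
  classical exact T.filter fun t => ∃ x ∈ X, G.Adj x t

theorem mem_tn {T X : Finset V} {t : V} : t ∈ tn G T X ↔ t ∈ T ∧ ∃ x ∈ X, G.Adj x t := by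
  simp [tn]

theorem mem_tn1 {T : Finset V} {t x : V} : t ∈ tn G T {x} ↔ t ∈ T ∧ G.Adj x t := by
  simp [tn]

theorem tn_sub {T X : Finset V} : tn G T X ⊆ T := fun _ h => (mem_tn.1 h).1

theorem tn_mono {T X Y : Finset V} (h : X ⊆ Y) : tn G T X ⊆ tn G T Y := fun t ht => by
  rw [mem_tn] at ht ⊢
  exact ⟨ht.1, ht.2.imp fun x hx => ⟨h hx.1, hx.2⟩⟩

theorem tn_union {T X Y : Finset V} : tn G T (X ∪ Y) = tn G T X ∪ tn G T Y := by
  ext t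
  simp only [mem_tn, Finset.mem_union]
  grind

/-- The neighbours of `v` in `A`. -/
noncomputable def an (G : SimpleGraph V) (A : Finset V) (v : V) : Finset V := by
  classical exact A.filter fun a => G.Adj v a

theorem mem_an {A : Finset V} {v a : V} : a ∈ an G A v ↔ a ∈ A ∧ G.Adj v a := by
  simp [an]

variable [Fintype V]

/-- The situation after the reduction: `A` is a set of at least two vertices, with outer
neighbourhood `T` of size three or four, which is minimal for having a small neighbourhood,
and the planarity and absence of good wheels are recorded as `K1`, `K2` and `W`. -/
structure Core (G : SimpleGraph V) (A T : Finset V) : Prop where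
  disj : ∀ x ∈ A, x ∉ T
  nbr : ∀ x ∈ A, ∀ y, G.Adj x y → y ∈ A ∨ y ∈ T
  deg : ∀ x ∈ A, 4 ≤ (nb G x).card
  T3 : 3 ≤ T.card
  T4 : T.card ≤ 4
  n2 : 2 ≤ A.card
  P1a : ∀ B ⊆ A, 2 ≤ B.card → B.card + 2 ≤ A.card → 5 ≤ (onb G B).card
  P1b : ∀ B ⊆ A, 2 ≤ B.card → B.card + 1 = A.card → T.card + 1 ≤ (onb G B).card
  K1 : ∀ X ⊆ A, ∀ Y ⊆ A, (∀ x ∈ X, x ∉ Y) → Conn G X → Conn G Y →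
    (tn G T X ∩ tn G T Y).card ≤ 2
  K2 : ∀ (D : Fin 3 → Finset V) (x y : V), x ∈ A → y ∈ A → x ≠ y →
    (∀ i, D i ⊆ A ∧ Conn G (D i) ∧ x ∉ D i ∧ y ∉ D i ∧ (∃ d ∈ D i, G.Adj x d) ∧
      (∃ d ∈ D i, G.Adj y d) ∧ (tn G T (D i)).Nonempty) →
    (∀ i j, i ≠ j → ∀ z ∈ D i, z ∉ D j) → False
  W : ∀ w ∈ A, ∀ t, G.Adj w t → ∀ Y ⊆ insert t A, w ∉ Y → TwoConn G Y →
    (an G Y w).card ≤ 2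

theorem Conn.sub_closed {C X Y : Finset V} (hC : Conn G C) (hCX : C ⊆ X)
    (hY : ∀ a ∈ Y, ∀ b ∈ X, G.Adj a b → b ∈ Y) {c : V} (hc : c ∈ C) (hcY : c ∈ Y) : C ⊆ Y :=
  fun x hx => hC.induct (· ∈ Y) hc hcY (fun a _ b hb h1 h2 => hY a h1 b (hCX hb) h2) x hx

theorem Conn.erase_leaf {X : Finset V} (hX : Conn G X) {d v : V} (hv : v ∈ X) (hvd : v ≠ d)
    (hd : ∀ y ∈ X, G.Adj d y → y = v) : Conn G (X.erase d) := by
  refine ⟨⟨v, by simp [hv, hvd]⟩, fun S hS hn hc => ?_⟩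
  by_cases hvS : v ∈ S
  · by_cases hdX : d ∈ X
    · have := hX.2 (Insert.insert d S) (by grind) (by simp) (by
        intro a ha b hb hab
        by_cases hbd : b = d
        · simp [hbd]
        rcases Finset.mem_insert.1 ha with rfl | ha
        · rw [hd b hb hab]; simp [hvS]
        · exact Finset.mem_insert_of_mem (hc a ha b (by simp [hb, hbd]) hab))
      rw [← this]
      ext x; have := @hS x; grind
    · rw [Finset.erase_eq_of_notMem hdX] at hS hc ⊢
      exact hX.2 S hS hn hc
  · have := hX.2 S (hS.trans (Finset.erase_subset _ _)) hn (by
      intro a ha b hb hab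
      by_cases hbd : b = d
      · subst hbd
        have h1 := hd a (Finset.mem_of_mem_erase (hS ha)) hab.symm
        exact absurd (h1 ▸ ha) hvS
      · exact hc a ha b (by simp [hb, hbd]) hab)
    rw [this] at hvS
    exact absurd hv hvS

namespace Core

variable {A T : Finset V} (h : Core G A T)
include h

/-- If all neighbours of `B ⊆ A` within `A` lie in `B ∪ Z`, then the boundary of `B` is at most as
large as its neighbourhood in `T` together with `Z`. -/
theorem onb_le {B Z : Finset V} (hB : B ⊆ A)
    (hZ : ∀ b ∈ B, ∀ y ∈ A, G.Adj b y → y ∈ B ∨ y ∈ Z) :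
    (onb G B).card ≤ (tn G T B).card + Z.card := by
  refine le_trans (Finset.card_le_card ?_) (Finset.card_union_le _ _)
  intro x hx
  obtain ⟨hxB, b, hb, hbx⟩ := mem_onb.1 hx
  rcases h.nbr b (hB hb) x hbx with hxA | hxT
  · rcases hZ b hb x hxA hbx with h1 | h1
    · exact absurd h1 hxB
    · exact Finset.mem_union_right _ h1
  · exact Finset.mem_union_left _ (mem_tn.2 ⟨hxT, b, hb, hbx⟩)

theorem tn_ge {B Z : Finset V} (hB : B ⊆ A) (h1 : 2 ≤ B.card) (h2 : B.card + 2 ≤ A.card)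
    (hZ : ∀ b ∈ B, ∀ y ∈ A, G.Adj b y → y ∈ B ∨ y ∈ Z) : 5 ≤ (tn G T B).card + Z.card :=
  (h.P1a B hB h1 h2).trans (h.onb_le hB hZ)

theorem deg_le {v : V} (hv : v ∈ A) {Z : Finset V} (hZ : ∀ y ∈ A, G.Adj v y → y ∈ Z) :
    4 ≤ (tn G T {v}).card + Z.card := by
  refine (h.deg v hv).trans (le_trans (Finset.card_le_card ?_) (Finset.card_union_le _ _))
  intro x hx
  rw [mem_nb] at hx
  rcases h.nbr v hv x hx with hxA | hxT
  · exact Finset.mem_union_right _ (hZ x hxA hx)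
  · exact Finset.mem_union_left _ (mem_tn1.2 ⟨hxT, hx⟩)

theorem deg_an {v : V} (hv : v ∈ A) : 4 ≤ (tn G T {v}).card + (an G A v).card :=
  h.deg_le hv fun _ hy hvy => mem_an.2 ⟨hy, hvy⟩

theorem tn_union_le (X Y : Finset V) :
    (tn G T X).card + (tn G T Y).card ≤ (tn G T X ∩ tn G T Y).card + T.card := by
  have h1 := Finset.card_union_add_card_inter (tn G T X) (tn G T Y)
  have h2 : (tn G T X ∪ tn G T Y).card ≤ T.card :=
    Finset.card_le_card (Finset.union_subset tn_sub tn_sub)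
  omega

theorem K1' {X Y : Finset V} (hX : X ⊆ A) (hY : Y ⊆ A) (hXY : ∀ x ∈ X, x ∉ Y) (cX : Conn G X)
    (cY : Conn G Y) : (tn G T X).card + (tn G T Y).card ≤ 6 := by
  have h1 := h.tn_union_le X Y
  have h2 := h.K1 X hX Y hY hXY cX cY
  have := h.T4
  omega

/-- `A` is connected, since otherwise two of its components would share three vertices of `T`. -/
theorem connA : Conn G A := by
  have h2 := h.n2
  have hT3 := h.T3
  have hT4 := h.T4
  obtain ⟨a, ha⟩ := Finset.card_pos.1 (show 0 < A.card by omega)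
  obtain ⟨C, hC, haC, cC, clC⟩ := exists_comp (G := G) ha
  by_cases hCA : C = A
  · rwa [hCA] at cC
  exfalso
  obtain ⟨b, hb, hbC⟩ : ∃ b ∈ A, b ∉ C := by
    by_contra hc
    push Not at hc
    exact hCA (Finset.Subset.antisymm hC hc)
  obtain ⟨D, hD, hbD, cD, clD⟩ := exists_comp (G := G) hb
  have hdis : ∀ x ∈ C, x ∉ D := fun x hx hxD => hbC (cD.sub_closed hD clC hxD hx hbD)
  have hsum : C.card + D.card ≤ A.card := by
    rw [← Finset.card_union_of_disjoint (Finset.disjoint_left.2 hdis)]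
    exact Finset.card_le_card (Finset.union_subset hC hD)
  have hCp := Finset.card_pos.2 cC.1
  have hDp := Finset.card_pos.2 cD.1
  have key : ∀ B ⊆ A, Conn G B → (∀ x ∈ B, ∀ y ∈ A, G.Adj x y → y ∈ B) → 0 < B.card →
      B.card + 1 ≤ A.card → 4 ≤ (tn G T B).card := by
    intro B hB cB cl h0 h1
    have hle := h.onb_le (Z := ∅) hB (fun b hb y hy hby => Or.inl (cl b hb y hy hby))
    have hT : (tn G T B).card ≤ T.card := Finset.card_le_card tn_sub
    simp at hle
    by_cases hB1 : B.card = 1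
    · obtain ⟨v, rfl⟩ := Finset.card_eq_one.1 hB1
      have := h.deg_le (v := v) (hB (by simp)) (Z := ∅) (fun y hy hvy => by
        have := cl v (by simp) y hy hvy
        simp only [Finset.mem_singleton] at this
        exact absurd this hvy.ne')
      simpa using this
    · by_cases hB2 : B.card + 1 = A.card
      · have := h.P1b B hB (by omega) hB2
        omega
      · have := h.P1a B hB (by omega) (by omega)
        omega
  have k1 := key C hC cC clC hCp (by omega)
  have k2 := key D hD cD clD hDp (by omega)
  have := h.K1' hC hD hdis cC cD
  omega

theorem tn_erase (h3 : 3 ≤ A.card) {v : V} (hv : v ∈ A) : tn G T (A.erase v) = T := by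
  have hc := Finset.card_erase_of_mem hv
  have h1 := h.P1b (A.erase v) (Finset.erase_subset _ _) (by omega) (by omega)
  have h2 := h.onb_le (B := A.erase v) (Z := {v}) (Finset.erase_subset _ _) (by
    intro b hb y hy hby
    by_cases e : y = v
    · simp [e]
    · simp [e, hy])
  simp at h2
  exact Finset.eq_of_subset_of_card_le tn_sub (by omega)

theorem tn_le_aux (h3 : 3 ≤ A.card) {v : V} (hv : v ∈ A) (hc : Conn G (A.erase v)) :
    (tn G T {v}).card ≤ 2 := by
  have := h.K1 {v} (by simpa) (A.erase v) (Finset.erase_subset _ _) (by simp) (conn_single v) hc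
  rw [h.tn_erase h3 hv, Finset.inter_eq_left.2 tn_sub] at this
  exact this

/-- No single vertex disconnects `A`. -/
theorem conn_erase (h3 : 3 ≤ A.card) {v : V} (hv : v ∈ A) : Conn G (A.erase v) := by
  have hT3 := h.T3
  have hce := Finset.card_erase_of_mem hv
  obtain ⟨a, ha⟩ := Finset.card_pos.1 (show 0 < (A.erase v).card by omega)
  obtain ⟨C, hC, haC, cC, clC⟩ := exists_comp (G := G) ha
  by_cases hCA : C = A.erase v
  · rwa [hCA] at cC
  exfalso
  obtain ⟨b, hb, hbC⟩ : ∃ b ∈ A.erase v, b ∉ C := by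
    by_contra hc
    push Not at hc
    exact hCA (Finset.Subset.antisymm hC hc)
  obtain ⟨D, hD, hbD, cD, clD⟩ := exists_comp (G := G) hb
  have hdis : ∀ x ∈ C, x ∉ D := fun x hx hxD => hbC (cD.sub_closed hD clC hxD hx hbD)
  have hsum : C.card + D.card ≤ (A.erase v).card := by
    rw [← Finset.card_union_of_disjoint (Finset.disjoint_left.2 hdis)]
    exact Finset.card_le_card (Finset.union_subset hC hD)
  have hCp := Finset.card_pos.2 cC.1
  have hDp := Finset.card_pos.2 cD.1
  have hEA := Finset.erase_subset v A
  have key : ∀ B ⊆ A.erase v, (∀ x ∈ B, ∀ y ∈ A.erase v, G.Adj x y → y ∈ B) → 0 < B.card →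
      B.card + 2 ≤ A.card → 3 ≤ (tn G T B).card ∧ (2 ≤ B.card → 4 ≤ (tn G T B).card) := by
    intro B hB cl h0 h1
    by_cases hB1 : B.card = 1
    · obtain ⟨d, rfl⟩ := Finset.card_eq_one.1 hB1
      have := h.deg_le (v := d) (hEA (hB (by simp))) (Z := {v}) (fun y hy hvy => by
        by_contra hyv
        have := cl d (by simp) y (by simpa [hy] using hyv) hvy
        simp only [Finset.mem_singleton] at this
        exact absurd this hvy.ne')
      simp at this ⊢
      omega
    · have := h.tn_ge (B := B) (Z := {v}) (hB.trans hEA) (by omega) h1 (by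
        intro b hb y hy hby
        by_cases e : y = v
        · simp [e]
        · exact Or.inl (cl b hb y (by simp [hy, e]) hby))
      simp at this
      omega
  have k1 := key C hC clC hCp (by omega)
  have k2 := key D hD clD hDp (by omega)
  have := h.K1' (hC.trans hEA) (hD.trans hEA) hdis cC cD
  have hC1 : C.card = 1 := by omega
  obtain ⟨d, rfl⟩ := Finset.card_eq_one.1 hC1
  have hdA : d ∈ A.erase v := hC (by simp)
  have := h.tn_le_aux h3 (hEA hdA) (h.connA.erase_leaf hv (by grind) (fun y hy hdy => by
    by_contra hyv
    have := clC d (by simp) y (by simp [hy, hyv]) hdy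
    simp only [Finset.mem_singleton] at this
    exact absurd this hdy.ne'))
  omega

theorem tn_le (h3 : 3 ≤ A.card) {v : V} (hv : v ∈ A) : (tn G T {v}).card ≤ 2 :=
  h.tn_le_aux h3 hv (h.conn_erase h3 hv)

end Core

/-- `x`, `y` separate `A` into exactly two connected parts `L` and `R`. -/
structure Cut (G : SimpleGraph V) (A : Finset V) (x y : V) (L R : Finset V) : Prop where
  hx : x ∈ A
  hy : y ∈ A
  ne : x ≠ y
  LA : L ⊆ A
  RA : R ⊆ A
  cL : Conn G L
  cR : Conn G R
  xL : x ∉ L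
  yL : y ∉ L
  xR : x ∉ R
  yR : y ∉ R
  dis : ∀ z ∈ L, z ∉ R
  cov : ∀ a ∈ A, a = x ∨ a = y ∨ a ∈ L ∨ a ∈ R
  noE : ∀ a ∈ L, ∀ b ∈ R, ¬ G.Adj a b
  axL : ∃ d ∈ L, G.Adj x d
  ayL : ∃ d ∈ L, G.Adj y d
  axR : ∃ d ∈ R, G.Adj x d
  ayR : ∃ d ∈ R, G.Adj y d

namespace Cut
variable {A L R : Finset V} {x y : V} (c : Cut G A x y L R)
include c

theorem swap : Cut G A x y R L :=
  ⟨c.hx, c.hy, c.ne, c.RA, c.LA, c.cR, c.cL, c.xR, c.yR, c.xL, c.yL,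
    fun z h1 h2 => c.dis z h2 h1, fun a ha => by have := c.cov a ha; tauto,
    fun a ha b hb e => c.noE b hb a ha e.symm, c.axR, c.ayR, c.axL, c.ayL⟩

theorem symm : Cut G A y x L R :=
  ⟨c.hy, c.hx, c.ne.symm, c.LA, c.RA, c.cL, c.cR, c.yL, c.xL, c.yR, c.xR,
    c.dis, fun a ha => by have := c.cov a ha; tauto,
    c.noE, c.ayL, c.axL, c.ayR, c.axR⟩

theorem card : A.card = L.card + R.card + 2 := by
  have e : A = (L ∪ R) ∪ {x, y} := by
    ext a
    have h1 := c.cov a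
    have h2 : a ∈ L → a ∈ A := fun z => c.LA z
    have h3 : a ∈ R → a ∈ A := fun z => c.RA z
    have := c.hx
    have := c.hy
    simp only [Finset.mem_union, Finset.mem_insert, Finset.mem_singleton]
    grind
  have := c.xL
  have := c.xR
  have := c.yL
  have := c.yR
  have := c.ne
  rw [e, Finset.card_union_of_disjoint, Finset.card_union_of_disjoint
    (Finset.disjoint_left.2 c.dis), Finset.card_pair c.ne]
  rw [Finset.disjoint_left]
  grind

theorem nbL : ∀ b ∈ L, ∀ z ∈ A, G.Adj b z → z ∈ L ∨ z ∈ ({x, y} : Finset V) := by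
  intro b hb z hz hbz
  have := c.noE b hb z
  have := c.cov z hz
  simp only [Finset.mem_insert, Finset.mem_singleton]
  tauto

theorem conn_insL : Conn G (insert x L) := c.cL.insert c.axL

theorem posL : 0 < L.card := Finset.card_pos.2 c.cL.1

end Cut

namespace Core
variable {A T : Finset V} (h : Core G A T)
include h

/-- The single vertex on a small side of a cut (an ear) has two neighbours in `T`. -/
theorem tnL1 {x y : V} {L R : Finset V} (c : Cut G A x y L R) (hL : L.card = 1) :
    (tn G T L).card = 2 := by
  obtain ⟨d, rfl⟩ := Finset.card_eq_one.1 hL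
  have hdA : d ∈ A := c.LA (by simp)
  have h1 := h.tn_le (by have := c.card; omega) hdA
  have h2 := h.deg_le hdA (Z := {x, y}) (fun z hz hdz => by
    have := c.nbL d (by simp) z hz hdz
    simp only [Finset.mem_singleton] at this
    exact this.resolve_left hdz.ne')
  rw [Finset.card_pair c.ne] at h2
  omega

theorem tnL2 {x y : V} {L R : Finset V} (c : Cut G A x y L R) (hL : 2 ≤ L.card) :
    3 ≤ (tn G T L).card := by
  have h2 := h.tn_ge c.LA hL (by have := c.card; omega) c.nbL
  rw [Finset.card_pair c.ne] at h2
  omega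

/-- If deleting `x` and `y` disconnects `A`, exactly two components remain, as a third one would
give the configuration excluded by `K2`. -/
theorem cut_of (h3 : 3 ≤ A.card) {x y : V} (hx : x ∈ A) (hy : y ∈ A) (hne : x ≠ y)
    (hnc : ¬ Conn G (A \ {x, y})) : ∃ L R, Cut G A x y L R := by
  have hpair : ({x, y} : Finset V) ⊆ A := by grind
  have hcs := Finset.card_sdiff_of_subset hpair
  rw [Finset.card_pair hne] at hcs
  have hEA : A \ {x, y} ⊆ A := Finset.sdiff_subset
  obtain ⟨a, ha⟩ := Finset.card_pos.1 (show 0 < (A \ {x, y}).card by omega)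
  obtain ⟨C, hC, haC, cC, clC⟩ := exists_comp (G := G) ha
  have hCA : C ≠ A \ {x, y} := fun e => hnc (e ▸ cC)
  obtain ⟨b, hb, hbC⟩ : ∃ b ∈ A \ {x, y}, b ∉ C := by
    by_contra hc
    push Not at hc
    exact hCA (Finset.Subset.antisymm hC hc)
  obtain ⟨D, hD, hbD, cD, clD⟩ := exists_comp (G := G) hb
  have hdis : ∀ x ∈ C, x ∉ D := fun x hx hxD => hbC (cD.sub_closed hD clC hxD hx hbD)
  have att : ∀ x y, x ∈ A → y ∈ A → x ≠ y → ∀ B, B ⊆ A \ {x, y} → B.Nonempty →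
      (∀ u ∈ B, ∀ v ∈ A \ {x, y}, G.Adj u v → v ∈ B) → ∃ d ∈ B, G.Adj x d := by
    intro x y hx hy hne B hB hn cl
    by_contra hc
    push Not at hc
    have := (h.conn_erase h3 hy).2 B (by intro z hz; have := hB hz; grind) hn (by
      intro u hu v hv huv
      by_cases e : v = x
      · subst e; exact absurd huv.symm (hc u hu)
      · exact cl u hu v (by grind) huv)
    have hxB : x ∈ B := by rw [this]; grind
    have := hB hxB
    grind
  have hpc : A \ {y, x} = A \ {x, y} := by rw [Finset.pair_comm]
  have cl_noE : ∀ B B' : Finset V, (∀ u ∈ B, ∀ v ∈ A \ {x, y}, G.Adj u v → v ∈ B) →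
      B' ⊆ A \ {x, y} → (∀ z ∈ B, z ∉ B') → ∀ a ∈ B, ∀ b ∈ B', ¬ G.Adj a b :=
    fun B B' cl hB' hd a ha b hb e => hd b (cl a ha b (hB' hb) e) hb
  have tnn : ∀ B ⊆ A \ {x, y}, B.Nonempty → B ≠ A \ {x, y} →
      (∀ u ∈ B, ∀ v ∈ A \ {x, y}, G.Adj u v → v ∈ B) → (tn G T B).Nonempty := by
    intro B hB hn hBne cl
    rw [← Finset.card_pos] at hn ⊢
    have hlt : B.card < (A \ {x, y}).card :=
      Finset.card_lt_card (Finset.ssubset_iff_subset_ne.2 ⟨hB, hBne⟩)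
    by_cases hB1 : B.card = 1
    · obtain ⟨d, rfl⟩ := Finset.card_eq_one.1 hB1
      have := h.deg_le (v := d) (hEA (hB (by simp))) (Z := {x, y}) (fun z hz hvz => by
        by_contra hzv
        have := cl d (by simp) z (by simp only [Finset.mem_sdiff]; exact ⟨hz, hzv⟩) hvz
        simp only [Finset.mem_singleton] at this
        exact absurd this hvz.ne')
      rw [Finset.card_pair hne] at this
      omega
    · have := h.tn_ge (B := B) (Z := {x, y}) (hB.trans hEA) (by omega) (by omega) (by
        intro b hb z hz hbz
        by_cases e : z ∈ ({x, y} : Finset V)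
        · exact Or.inr e
        · exact Or.inl (cl b hb z (by simp only [Finset.mem_sdiff]; exact ⟨hz, e⟩) hbz))
      rw [Finset.card_pair hne] at this
      omega
  have nx : ∀ B ⊆ A \ {x, y}, x ∉ B := fun B hB hxB => by have := hB hxB; grind
  have ny : ∀ B ⊆ A \ {x, y}, y ∉ B := fun B hB hxB => by have := hB hxB; grind
  refine ⟨C, D, hx, hy, hne, hC.trans hEA, hD.trans hEA, cC, cD, nx C hC, ny C hC, nx D hD, ny D hD,
    hdis, ?_, cl_noE C D clC hD hdis, att x y hx hy hne C hC cC.1 clC,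
    att y x hy hx hne.symm C (hpc ▸ hC) cC.1 (hpc ▸ clC), att x y hx hy hne D hD cD.1 clD,
    att y x hy hx hne.symm D (hpc ▸ hD) cD.1 (hpc ▸ clD)⟩
  intro e he
  by_contra hcov
  push Not at hcov
  have heM : e ∈ A \ {x, y} := by grind
  obtain ⟨E, hE, heE, cE, clE⟩ := exists_comp (G := G) heM
  have hdCE : ∀ x ∈ C, x ∉ E := fun z hz hzE => hcov.2.2.1 (cE.sub_closed hE clC hzE hz heE)
  have hdDE : ∀ x ∈ D, x ∉ E := fun z hz hzE => hcov.2.2.2 (cE.sub_closed hE clD hzE hz heE)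
  refine h.K2 ![C, D, E] x y hx hy hne ?_ ?_
  · have main : ∀ B ⊆ A \ {x, y}, Conn G B → B ≠ A \ {x, y} →
      (∀ u ∈ B, ∀ v ∈ A \ {x, y}, G.Adj u v → v ∈ B) → B ⊆ A ∧ Conn G B ∧ x ∉ B ∧ y ∉ B ∧
        (∃ d ∈ B, G.Adj x d) ∧ (∃ d ∈ B, G.Adj y d) ∧ (tn G T B).Nonempty :=
      fun B hB cB hBne cl => ⟨hB.trans hEA, cB, nx B hB, ny B hB, att x y hx hy hne B hB cB.1 cl,
        att y x hy hx hne.symm B (hpc ▸ hB) cB.1 (hpc ▸ cl), tnn B hB cB.1 hBne cl⟩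
    intro i
    fin_cases i
    · exact main C hC cC hCA clC
    · exact main D hD cD (fun e => hdis a haC (e ▸ ha)) clD
    · exact main E hE cE (fun e => hdCE a haC (e ▸ ha)) clE
  · intro i j hij
    fin_cases i <;> fin_cases j <;> simp at hij ⊢ <;> grind

end Core
end HW

/-! ### Large cuts and ears -/

namespace HW

variable {V : Type} [DecidableEq V] {G : SimpleGraph V} [Fintype V]

namespace Core
variable {A T : Finset V} (h : Core G A T)
include h

/-- A vertex with three neighbours in `A` lies in a 2-cut, for otherwise the rest of `A` is
2-connected and there is a wheel. -/
theorem exists_cut (h4 : 4 ≤ A.card) {w : V} (hw : w ∈ A) (hd : 3 ≤ (an G A w).card) :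
    ∃ y L R, Cut G A w y L R := by
  by_contra hc
  have hcc : ∀ y ∈ A, w ≠ y → Conn G (A \ {w, y}) := fun y hy hne => by
    by_contra hn
    obtain ⟨L, R, c⟩ := h.cut_of (by omega) hw hy hne hn
    exact hc ⟨y, L, R, c⟩
  have h2 : TwoConn G (A.erase w) := by
    refine ⟨by rw [Finset.card_erase_of_mem hw]; omega, h.conn_erase (by omega) hw, fun y hy => ?_⟩
    have := hcc y (by grind) (by grind)
    convert this using 1
    grind
  obtain ⟨t, ht⟩ := Finset.card_pos.1 (show 0 < (an G A w).card by omega)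
  have := h.W w hw t (mem_an.1 ht).2 (A.erase w) (by grind) (by simp) h2
  have e : an G (A.erase w) w ⊇ an G A w := fun z hz => by
    rw [mem_an] at hz ⊢
    exact ⟨Finset.mem_erase.2 ⟨hz.2.ne', hz.1⟩, hz.2⟩
  have := Finset.card_le_card e
  omega

/-- The wheel condition at `w` for the rest of `A` together with a neighbour `t ∈ T` of `w`: either
`t` has few neighbours in `A`, or a 2-cut containing `w` has a side not reaching `t`. -/
theorem wheel_t (h4 : 4 ≤ A.card) {w t : V} (hw : w ∈ A) (ht : t ∈ tn G T {w}) :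
    (∃ v ∈ A, an G A t ⊆ {w, v}) ∨ ∃ v L R, Cut G A w v L R ∧ t ∉ tn G T L := by
  by_contra hc
  push Not at hc
  obtain ⟨hc1, hc2⟩ := hc
  obtain ⟨htT, hwt⟩ := mem_tn1.1 ht
  have htA : t ∉ A := fun e => h.disj t e htT
  have hx : ∀ v ∈ A, ∃ x ∈ A, G.Adj t x ∧ x ≠ w ∧ x ≠ v := by
    intro v hv
    obtain ⟨x, hx, hxn⟩ := Finset.not_subset.1 (hc1 v hv)
    rw [mem_an] at hx
    simp only [Finset.mem_insert, Finset.mem_singleton, not_or] at hxn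
    exact ⟨x, hx.1, hx.2, hxn⟩
  have hce := h.conn_erase (by omega) hw
  have h2 : TwoConn G (insert t (A.erase w)) := by
    refine ⟨?_, ?_, ?_⟩
    · rw [Finset.card_insert_of_notMem (by grind), Finset.card_erase_of_mem hw]
      omega
    · obtain ⟨x, hx, htx, hxw, -⟩ := hx w hw
      exact hce.insert ⟨x, by grind, htx⟩
    · intro v hv
      rcases Finset.mem_insert.1 hv with rfl | hv
      · rwa [Finset.erase_insert (by grind)]
      · have hvA : v ∈ A := Finset.mem_of_mem_erase hv
        have hwv : w ≠ v := by grind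
        by_cases hcn : Conn G (A \ {w, v})
        · obtain ⟨x, hx, htx, hxw, hxv⟩ := hx v hvA
          have := hcn.insert (a := t) ⟨x, by grind, htx⟩
          convert this using 1
          grind
        · obtain ⟨L, R, c⟩ := h.cut_of (by omega) hw hvA hwv hcn
          obtain ⟨-, l, hl, hlt⟩ := mem_tn.1 (hc2 v L R c)
          obtain ⟨-, r, hr, hrt⟩ := mem_tn.1 (hc2 v R L c.swap)
          have := (c.cL.insert (a := t) ⟨l, hl, hlt.symm⟩).union
            (c.cR.insert (a := t) ⟨r, hr, hrt.symm⟩) (Or.inl ⟨t, by simp, by simp⟩)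
          convert this using 1
          ext a
          have := c.cov a
          have : a ∈ L → a ∈ A := fun z => c.LA z
          have : a ∈ R → a ∈ A := fun z => c.RA z
          have := c.xL
          have := c.xR
          have := c.yL
          have := c.yR
          simp only [Finset.mem_erase, Finset.mem_insert, Finset.mem_union]
          grind
  have h3 := h.W w hw t hwt _ (Finset.insert_subset_insert t (Finset.erase_subset w A))
    (by simp [hwt.ne]) h2
  have h5 : insert t (an G A w) ⊆ an G (insert t (A.erase w)) w := by
    intro z hz
    rw [mem_an]
    rcases Finset.mem_insert.1 hz with rfl | hz
    · exact ⟨by simp, hwt⟩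
    · rw [mem_an] at hz
      exact ⟨Finset.mem_insert_of_mem (Finset.mem_erase.2 ⟨hz.2.ne', hz.1⟩), hz.2⟩
  have h6 := Finset.card_le_card h5
  rw [Finset.card_insert_of_notMem (fun z => htA (mem_an.1 z).1)] at h6
  have := h.tn_le (by omega) hw
  have := h.deg_an hw
  omega

/-- Cardinalities at a cut with two large sides. -/
theorem big_cut_aux {x y : V} {L R : Finset V} (c : Cut G A x y L R)
    (hL : 2 ≤ L.card) (hR : 2 ≤ R.card) :
    (tn G T L).card = 3 ∧ (tn G T R).card = 3 ∧ tn G T {x} ⊆ tn G T L ∧ tn G T {x} ⊆ tn G T R := by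
  have h1 := h.tnL2 c hL
  have h2 := h.tnL2 c.swap hR
  have h3 := h.K1' c.LA c.RA c.dis c.cL c.cR
  have h4 := h.tn_union_le (tn G T L) (tn G T R)
  have h5 := h.K1 L c.LA R c.RA c.dis c.cL c.cR
  have h6 := h.T4
  have h7 := Finset.card_union_add_card_inter (tn G T L) (tn G T R)
  have h8 : (tn G T L ∪ tn G T R).card ≤ T.card :=
    Finset.card_le_card (Finset.union_subset tn_sub tn_sub)
  have hT : tn G T L ∪ tn G T R = T :=
    Finset.eq_of_subset_of_card_le (Finset.union_subset tn_sub tn_sub) (by omega)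
  have sub : ∀ L R : Finset V, Cut G A x y L R → 2 ≤ (tn G T L ∩ tn G T R).card →
      tn G T {x} ∩ tn G T R ⊆ tn G T L := by
    intro L R c hi
    have := h.K1 (insert x L) (by have := c.hx; have := c.LA; grind) R c.RA
      (by have := c.xR; have := c.dis; grind) c.conn_insL c.cR
    rw [Finset.insert_eq, tn_union] at this
    have e : tn G T L ∩ tn G T R = (tn G T {x} ∪ tn G T L) ∩ tn G T R :=
      Finset.eq_of_subset_of_card_le (by grind) (by omega)
    intro t ht
    have : t ∈ (tn G T {x} ∪ tn G T L) ∩ tn G T R := by grind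
    rw [← e] at this
    grind
  have s1 := sub L R c (by omega)
  have s2 := sub R L c.swap (by rw [Finset.inter_comm]; omega)
  have s3 : tn G T {x} ⊆ T := tn_sub
  refine ⟨by omega, by omega, ?_, ?_⟩ <;> intro t ht <;>
    have : t ∈ tn G T L ∪ tn G T R := by rw [hT]; exact s3 ht
  · rcases Finset.mem_union.1 this with h | h
    · exact h
    · exact s1 (by simp [ht, h])
  · rcases Finset.mem_union.1 this with h | h
    · exact s2 (by simp [ht, h])
    · exact h

/-- Two crossing cuts at a vertex `x` with a neighbour `a ∈ T` are incompatible when the first has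
two large sides and a side of the second does not reach `a`. -/
theorem big_cut_aux2 {x y v a : V} {L R C C' : Finset V} (c : Cut G A x y L R)
    (hL : 2 ≤ L.card) (hR : 2 ≤ R.card) (ha : a ∈ tn G T {x}) (c' : Cut G A x v C C')
    (haC : a ∉ tn G T C) (hv : v ∈ L) : False := by
  obtain ⟨hL3, hR3, hxL, hxR⟩ := h.big_cut_aux c hL hR
  have hRA := c.RA
  have hvR : v ∉ R := c.dis v hv
  have hyv : y ≠ v := fun e => c.yL (e ▸ hv)
  have cRy : Conn G (insert y R) := c.swap.symm.conn_insL
  have clC : ∀ z ∈ C, ∀ b ∈ insert y R, G.Adj z b → b ∈ C := by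
    intro z hz b hb e
    have hbA : b ∈ A := by have := c.hy; grind
    rcases c'.nbL z hz b hbA e with h1 | h1
    · exact h1
    · have := c.xR; have := c.ne; grind
  have hdis : ∀ z ∈ C, z ∉ insert y R := by
    intro z hz hzR
    have hsub := cRy.sub_closed subset_rfl clC hzR hz
    exact haC (tn_mono (fun r hr => hsub (by simp [hr])) (hxR ha))
  have hCL : C ⊆ L := by
    intro z hz
    have := c.cov z (c'.LA hz)
    have := hdis z hz
    have := c'.xL
    grind
  have hle : (tn G T C).card ≤ ((tn G T L).erase a).card := Finset.card_le_card fun t ht =>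
    Finset.mem_erase.2 ⟨fun e => haC (e ▸ ht), tn_mono hCL ht⟩
  rw [Finset.card_erase_of_mem (hxL ha)] at hle
  have hC1 : C.card = 1 := by
    by_contra hC1
    have := h.tnL2 c' (by have := c'.posL; omega)
    omega
  have hC2 := h.tnL1 c' hC1
  have hCe : tn G T C = (tn G T L).erase a := Finset.eq_of_subset_of_card_le
    (fun t ht => Finset.mem_erase.2 ⟨fun e => haC (e ▸ ht), tn_mono hCL ht⟩)
    (by rw [Finset.card_erase_of_mem (hxL ha)]; omega)
  obtain ⟨e, rfl⟩ := Finset.card_eq_one.1 hC1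
  have heA : e ∈ A := c'.LA (by simp)
  have hRC' : R ⊆ insert v C' := by
    intro r hr
    have := c'.cov r (c.RA hr)
    have := c.xR
    have := hdis r
    grind
  have hk := h.K1 (insert x {e}) (by have := c.hx; grind) (insert v C')
    (by have := c'.hy; have := c'.RA; grind)
    (by have := c'.ne; have := c'.xR; have := c'.yL; have := c'.dis; grind)
    c'.conn_insL c'.swap.symm.conn_insL
  have hsub : tn G T L ⊆ tn G T (insert x {e}) ∩ tn G T (insert v C') := by
    intro t ht
    by_cases hta : t = a
    · subst hta
      exact Finset.mem_inter.2 ⟨tn_mono (by simp) ha, tn_mono hRC' (hxR ha)⟩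
    · have hte : t ∈ tn G T {e} := by rw [hCe]; exact Finset.mem_erase.2 ⟨hta, ht⟩
      refine Finset.mem_inter.2 ⟨tn_mono (by simp) hte, ?_⟩
      by_cases htx : t ∈ tn G T {x}
      · exact tn_mono hRC' (hxR htx)
      · have h1 : t ∈ tn G T (A.erase e) := by
          rw [h.tn_erase (by have := c.card; omega) heA]; exact tn_sub hte
        obtain ⟨htT, z, hz, hzt⟩ := mem_tn.1 h1
        refine mem_tn.2 ⟨htT, z, ?_, hzt⟩
        have := c'.cov z (by grind)
        have : z ≠ x := fun e => htx (mem_tn1.2 ⟨htT, e ▸ hzt⟩)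
        grind
  have := Finset.card_le_card hsub
  omega

/-- A cut with two large sides uses vertices without neighbours in `T`. -/
theorem big_cut {x y : V} {L R : Finset V} (c : Cut G A x y L R)
    (hL : 2 ≤ L.card) (hR : 2 ≤ R.card) : tn G T {x} = ∅ := by
  by_contra hne
  obtain ⟨a, ha⟩ := Finset.nonempty_iff_ne_empty.2 hne
  obtain ⟨hL3, hR3, hxL, hxR⟩ := h.big_cut_aux c hL hR
  rcases h.wheel_t (by have := c.card; omega) c.hx ha with ⟨v, hv, hsub⟩ | ⟨v, C, C', c', haC⟩
  · obtain ⟨-, l, hl, hla⟩ := mem_tn.1 (hxL ha)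
    obtain ⟨-, r, hr, hra⟩ := mem_tn.1 (hxR ha)
    have h1 := hsub (mem_an.2 ⟨c.LA hl, hla.symm⟩)
    have h2 := hsub (mem_an.2 ⟨c.RA hr, hra.symm⟩)
    have := c.xL; have := c.xR; have := c.dis
    grind
  · rcases c.cov v c'.hy with e | rfl | hv | hv
    · exact c'.ne e.symm
    · obtain ⟨z, hz⟩ := c'.cL.1
      have clC : ∀ B ⊆ A, x ∉ B → v ∉ B → ∀ z ∈ C, ∀ b ∈ B, G.Adj z b → b ∈ C := by
        intro B hB hxB hvB z hz b hb e
        rcases c'.nbL z hz b (hB hb) e with h1 | h1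
        · exact h1
        · grind
      have := c.cov z (c'.LA hz)
      have := c'.xL; have := c'.yL
      rcases (show z ∈ L ∨ z ∈ R by grind) with hzL | hzR
      · exact haC (tn_mono (c.cL.sub_closed subset_rfl (clC L c.LA c.xL c.yL) hzL hz) (hxL ha))
      · exact haC (tn_mono (c.cR.sub_closed subset_rfl (clC R c.RA c.xR c.yR) hzR hz) (hxR ha))
    · exact h.big_cut_aux2 c hL hR ha c' haC hv
    · exact h.big_cut_aux2 c.swap hR hL ha c' haC hv

/-- For an ear `e` at `w`, either the neighbours of `w` in `T` are neighbours of `e`, or some vertex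
of `T` is attached to `A` only by `w` and `e`. -/
theorem ear {w z e : V} {D : Finset V} (c : Cut G A w z {e} D) :
    tn G T {w} ⊆ tn G T {e} ∨ ∃ t ∈ tn G T {w}, t ∈ tn G T {e} ∧ an G A t ⊆ {w, e} := by
  by_contra hc
  push Not at hc
  obtain ⟨hc1, hc2⟩ := hc
  have heA : e ∈ A := c.LA (by simp)
  have hn : 3 ≤ A.card := by have := c.card; have := c.posL; omega
  have hk := h.K1 (insert w {e}) (by have := c.hx; grind) (insert z D)
    (by have := c.hy; have := c.RA; grind)
    (by have := c.ne; have := c.xR; have := c.yL; have := c.dis; grind)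
    c.conn_insL c.swap.symm.conn_insL
  obtain ⟨a, haw, hae⟩ := Finset.not_subset.1 hc1
  have he2 := h.tnL1 c (by simp)
  have key : ∀ u v, u ∈ A → (∀ z' ∈ A, z' = u ∨ z' = v ∨ z' ∈ insert z D) →
      ∀ t ∈ tn G T {u}, t ∉ tn G T {v} → t ∈ tn G T (insert z D) := by
    intro u v hu hcov t ht htv
    have h1 : t ∈ tn G T (A.erase u) := by rw [h.tn_erase hn hu]; exact tn_sub ht
    obtain ⟨htT, x, hx, hxt⟩ := mem_tn.1 h1
    refine mem_tn.2 ⟨htT, x, ?_, hxt⟩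
    have : x ≠ v := fun e => htv (mem_tn1.2 ⟨htT, e ▸ hxt⟩)
    have := hcov x (by grind)
    grind
  have cov : ∀ z' ∈ A, z' = w ∨ z' = e ∨ z' ∈ insert z D := by
    intro z' hz'
    have := c.cov z' hz'
    grind
  have hsub : insert a (tn G T {e}) ⊆ tn G T (insert w {e}) ∩ tn G T (insert z D) := by
    intro t ht
    by_cases hte : t ∈ tn G T {e}
    · refine Finset.mem_inter.2 ⟨tn_mono (by simp) hte, ?_⟩
      by_cases htw : t ∈ tn G T {w}
      · obtain ⟨x, hx, hxn⟩ := Finset.not_subset.1 (hc2 t htw hte)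
        rw [mem_an] at hx
        have := cov x hx.1
        exact mem_tn.2 ⟨tn_sub hte, x, by grind, hx.2.symm⟩
      · exact key e w heA (fun z' hz' => by have := cov z' hz'; tauto) t hte htw
    · have : t = a := by grind
      subst this
      exact Finset.mem_inter.2 ⟨tn_mono (by simp) haw, key w e c.hx cov t haw hae⟩
  have := Finset.card_le_card hsub
  rw [Finset.card_insert_of_notMem hae] at this
  omega

theorem two_le_an (h3 : 3 ≤ A.card) {t : V} (ht : t ∈ T) : 2 ≤ (an G A t).card := by
  have key : ∀ v ∈ A, ∃ x ∈ A, x ≠ v ∧ G.Adj t x := by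
    intro v hv
    rw [← h.tn_erase h3 hv] at ht
    obtain ⟨-, x, hx, hxt⟩ := mem_tn.1 ht
    exact ⟨x, by grind, by grind, hxt.symm⟩
  obtain ⟨v, hv⟩ := Finset.card_pos.1 (show 0 < A.card by omega)
  obtain ⟨x, hx, -, hxt⟩ := key v hv
  obtain ⟨y, hy, hxy, hyt⟩ := key x hx
  exact Finset.one_lt_card.2 ⟨x, mem_an.2 ⟨hx, hxt⟩, y, mem_an.2 ⟨hy, hyt⟩, hxy.symm⟩

/-- A neighbour `w` of a vertex `t ∈ T` of degree at least three into `A` has a private partner `d`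
sharing with `w` a vertex `t0 ∈ T` that sees nothing else of `A`. -/
theorem an_le_aux (h5 : 5 ≤ A.card) {t : V} (ht : t ∈ T) (h3 : 3 ≤ (an G A t).card) {w : V}
    (hw : w ∈ an G A t) : ∃ d t0, d ∈ A ∧ t0 ∈ T ∧ G.Adj t0 w ∧ G.Adj t0 d ∧ an G A t0 ⊆ {w, d} ∧
      ¬ G.Adj d t ∧ (tn G T {d}).card = 2 := by
  have big : ∀ w ∈ an G A t, ∃ v C C', Cut G A w v C C' ∧ t ∉ tn G T C := by
    intro w hw
    rw [mem_an] at hw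
    rcases h.wheel_t (by omega) hw.1 (mem_tn1.2 ⟨ht, hw.2.symm⟩) with ⟨v, hv, hs⟩ | hh
    · have := Finset.card_le_card hs
      have := Finset.card_le_two (a := w) (b := v)
      omega
    · exact hh
  obtain ⟨v, C, C', c, htC⟩ := big w hw
  rw [mem_an] at hw
  have htw : t ∈ tn G T {w} := mem_tn1.2 ⟨ht, hw.2.symm⟩
  by_cases hC1 : C.card = 1
  · have hd2 := h.tnL1 c hC1
    obtain ⟨d, rfl⟩ := Finset.card_eq_one.1 hC1
    rcases h.ear c with hs | ⟨t0, h1, h2, h3⟩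
    · exact absurd (hs htw) htC
    · exact ⟨d, t0, c.LA (by simp), tn_sub h1, (mem_tn1.1 h1).2.symm, (mem_tn1.1 h2).2.symm, h3,
        fun e => htC (mem_tn1.2 ⟨ht, e⟩), hd2⟩
  exfalso
  by_cases hC1' : C'.card = 1
  · obtain ⟨e, rfl⟩ := Finset.card_eq_one.1 hC1'
    have hsub : an G A t ⊆ {w, v, e} := by
      intro z hz
      have hz' := mem_an.1 hz
      have := c.cov z hz'.1
      have : z ∉ C := fun hzC => htC (mem_tn.2 ⟨ht, z, hzC, hz'.2.symm⟩)
      grind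
    have heq : an G A t = {w, v, e} := Finset.eq_of_subset_of_card_le hsub
      (Finset.card_le_three.trans h3)
    obtain ⟨v2, C2, C2', c2, htC2⟩ := big e (by simp [heq])
    obtain ⟨d, hd, hed⟩ := c2.axL
    have h1 := c.swap.nbL e (by simp) d (c2.LA hd) hed
    have : d ∈ an G A t := by
      rw [heq]
      have := hed.ne
      grind
    exact htC2 (mem_tn.2 ⟨ht, d, hd, (mem_an.1 this).2.symm⟩)
  · have := h.big_cut c (by have := c.posL; omega) (by have := c.swap.posL; omega)
    rw [this] at htw
    simp at htw

/-- Each vertex of `T` has exactly two neighbours in `A`: the partners of three neighbours of `t`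
would have to coincide, giving a vertex of `A` with three neighbours in `T`. -/
theorem an_card (h5 : 5 ≤ A.card) {t : V} (ht : t ∈ T) : (an G A t).card = 2 := by
  by_contra hne
  have h3 : 3 ≤ (an G A t).card := by have := h.two_le_an (by omega) ht; omega
  obtain ⟨w1, m1, w2, m2, w3, m3, n12, n13, n23⟩ := Finset.two_lt_card.1 h3
  obtain ⟨d1, t1, a1, b1, c1, e1, f1, g1, i1⟩ := h.an_le_aux h5 ht h3 m1
  obtain ⟨d2, t2, a2, b2, c2, e2, f2, g2, i2⟩ := h.an_le_aux h5 ht h3 m2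
  obtain ⟨d3, t3, a3, b3, c3, e3, f3, g3, i3⟩ := h.an_le_aux h5 ht h3 m3
  rw [mem_an] at m1 m2 m3
  have noadj : ∀ {w d t0 u : V}, an G A t0 ⊆ {w, d} → u ∈ A → G.Adj t u → u ≠ w → ¬ G.Adj d t →
      ¬ G.Adj t0 u := by
    intro w d t0 u hs hu htu huw hdt hh
    rcases Finset.mem_insert.1 (hs (mem_an.2 ⟨hu, hh⟩)) with e | e
    · exact huw e
    · exact hdt (Finset.mem_singleton.1 e ▸ htu.symm)
  have t12 : t1 ≠ t2 := fun e => noadj f1 m2.1 m2.2 n12.symm g1 (e ▸ c2)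
  have t13 : t1 ≠ t3 := fun e => noadj f1 m3.1 m3.2 n13.symm g1 (e ▸ c3)
  have t23 : t2 ≠ t3 := fun e => noadj f2 m3.1 m3.2 n23.symm g2 (e ▸ c3)
  have t01 : t ≠ t1 := fun e => noadj f1 m2.1 m2.2 n12.symm g1 (e ▸ m2.2)
  have t02 : t ≠ t2 := fun e => noadj f2 m1.1 m1.2 n12 g2 (e ▸ m1.2)
  have t03 : t ≠ t3 := fun e => noadj f3 m1.1 m1.2 n13 g3 (e ▸ m1.2)
  have hT : ({t, t1, t2, t3} : Finset V) = T := by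
    refine Finset.eq_of_subset_of_card_le ?_ ?_
    · simp only [Finset.insert_subset_iff, Finset.singleton_subset_iff]
      exact ⟨ht, b1, b2, b3⟩
    · rw [Finset.card_insert_of_notMem (by simp [t01, t02, t03]),
          Finset.card_insert_of_notMem (by simp [t12, t13]), Finset.card_pair t23]
      exact h.T4
  have mT : ∀ {x}, x ∈ T → x = t ∨ x = t1 ∨ x = t2 ∨ x = t3 := fun {x} hx => by
    rw [← hT] at hx; simpa using hx
  have other : ∀ {d ti tj tk : V}, (∀ {x}, x ∈ T → x = t ∨ x = ti ∨ x = tj ∨ x = tk) →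
      (tn G T {d}).card = 2 → ¬ G.Adj d t → G.Adj tj d ∨ G.Adj tk d := by
    intro d ti tj tk hm hcd hdt
    obtain ⟨p, q, hpq, e⟩ := Finset.card_eq_two.1 hcd
    have hp : p ∈ tn G T {d} := by simp [e]
    have hq : q ∈ tn G T {d} := by simp [e]
    rw [mem_tn1] at hp hq
    have hp' := hp.2.symm
    have hq' := hq.2.symm
    rcases hm hp.1 with rfl | rfl | rfl | rfl
    · exact absurd hp.2 hdt
    · rcases hm hq.1 with rfl | rfl | rfl | rfl
      · exact absurd hq.2 hdt
      · exact absurd rfl hpq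
      · exact Or.inl hq'
      · exact Or.inr hq'
    · exact Or.inl hp'
    · exact Or.inr hp'
  have eqd : ∀ {d wj dj tj : V}, an G A tj ⊆ {wj, dj} → d ∈ A → G.Adj tj d → ¬ G.Adj d t →
      G.Adj t wj → d = dj := by
    intro d wj dj tj hs hd hh hdt htw
    rcases Finset.mem_insert.1 (hs (mem_an.2 ⟨hd, hh⟩)) with e | e
    · exact absurd (e ▸ htw.symm) hdt
    · exact Finset.mem_singleton.1 e
  have o1 := (other (ti := t1) (tj := t2) (tk := t3) (fun hx => mT hx) i1 g1).imp
    (fun hh => eqd f2 a1 hh g1 m2.2) (fun hh => eqd f3 a1 hh g1 m3.2)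
  have o2 := (other (ti := t2) (tj := t1) (tk := t3)
    (fun hx => by rcases mT hx with e | e | e | e <;> simp [e]) i2 g2).imp
    (fun hh => eqd f1 a2 hh g2 m1.2) (fun hh => eqd f3 a2 hh g2 m3.2)
  have o3 := (other (ti := t3) (tj := t1) (tk := t2)
    (fun hx => by rcases mT hx with e | e | e | e <;> simp [e]) i3 g3).imp
    (fun hh => eqd f1 a3 hh g3 m1.2) (fun hh => eqd f2 a3 hh g3 m2.2)
  have hall : d1 = d2 ∧ d1 = d3 := by
    clear * - o1 o2 o3
    grind
  obtain ⟨rfl, rfl⟩ := hall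
  have : 3 ≤ (tn G T {d1}).card := Finset.two_lt_card.2 ⟨t1, mem_tn1.2 ⟨b1, e1.symm⟩,
    t2, mem_tn1.2 ⟨b2, e2.symm⟩, t3, mem_tn1.2 ⟨b3, e3.symm⟩, t12, t13, t23⟩
  omega

end Core
end HW

/-! ### A vertex with exactly one neighbour in the boundary -/

namespace HW

variable {V : Type} [DecidableEq V] {G : SimpleGraph V} [Fintype V]

theorem Cut.ear_adj {A D : Finset V} {x y e : V} (c : Cut G A x y {e} D) {z : V} (hz : z ∈ A) :
    G.Adj e z ↔ z = x ∨ z = y := by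
  constructor
  · intro hh
    have := c.nbL e (by simp) z hz hh
    simp only [Finset.mem_singleton, Finset.mem_insert] at this
    exact this.resolve_left hh.ne'
  · rintro (rfl | rfl)
    · obtain ⟨d, hd, hh⟩ := c.axL
      rw [Finset.mem_singleton] at hd
      exact hd ▸ hh.symm
    · obtain ⟨d, hd, hh⟩ := c.ayL
      rw [Finset.mem_singleton] at hd
      exact hd ▸ hh.symm

theorem Cut.insD {A D : Finset V} {x y e : V} (c : Cut G A x y {e} D) : insert y D = A \ {x, e} := by
  ext a
  have := c.cov a
  have h1 : a ∈ D → a ∈ A := fun z => c.RA z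
  have := c.xR
  have := c.yR
  have := c.xL
  have := c.yL
  have := c.dis
  have := c.hy
  have := c.ne
  simp only [Finset.mem_insert, Finset.mem_sdiff, Finset.mem_singleton] at *
  grind

namespace Core
variable {A T : Finset V} (h : Core G A T)
include h

theorem an_pair (h5 : 5 ≤ A.card) {t a b : V} (ht : t ∈ T) (ha : a ∈ A) (hb : b ∈ A) (hab : a ≠ b)
    (hat : G.Adj a t) (hbt : G.Adj b t) : ∀ x ∈ A, G.Adj x t ↔ x = a ∨ x = b := by
  have hc := h.an_card h5 ht
  have e : ({a, b} : Finset V) = an G A t := by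
    refine Finset.eq_of_subset_of_card_le ?_ (by rw [hc, Finset.card_pair hab])
    intro x hx
    rw [Finset.mem_insert, Finset.mem_singleton] at hx
    rcases hx with rfl | rfl
    · exact mem_an.2 ⟨ha, hat.symm⟩
    · exact mem_an.2 ⟨hb, hbt.symm⟩
  intro x hx
  have : x ∈ an G A t ↔ x = a ∨ x = b := by rw [← e]; simp
  rw [← this, mem_an, G.adj_comm]
  simp [hx]

/-- The other neighbour of `t`. -/
theorem other (h5 : 5 ≤ A.card) {t a : V} (ht : t ∈ T) (ha : a ∈ A) (hat : G.Adj a t) :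
    ∃ b ∈ A, b ≠ a ∧ G.Adj b t ∧ ∀ x ∈ A, G.Adj x t ↔ x = a ∨ x = b := by
  have hc := h.an_card h5 ht
  obtain ⟨b, hb, hne⟩ := Finset.exists_mem_ne (by omega : 1 < (an G A t).card) a
  rw [mem_an] at hb
  exact ⟨b, hb.1, hne, hb.2.symm, h.an_pair h5 ht ha hb.1 hne.symm hat hb.2.symm⟩

/-- If `t` is the only neighbour of `w` in `T`, every cut at `w` has an ear adjacent to `t`. -/
theorem single_ear {w t y : V} {L R : Finset V} (ht : tn G T {w} = {t})
    (c : Cut G A w y L R) : ∃ e, G.Adj e t ∧ (L = {e} ∨ R = {e}) := by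
  have key : ∀ L R, Cut G A w y L R → L.card = 1 → ∃ e, G.Adj e t ∧ L = {e} := by
    intro L R c hL
    obtain ⟨e, rfl⟩ := Finset.card_eq_one.1 hL
    refine ⟨e, ?_, rfl⟩
    have : t ∈ tn G T {e} := by
      rcases h.ear c with hs | ⟨t0, h1, h2, -⟩
      · exact hs (by simp [ht])
      · rw [ht, Finset.mem_singleton] at h1
        exact h1 ▸ h2
    exact (mem_tn1.1 this).2
  by_cases hL : L.card = 1
  · obtain ⟨e, h1, h2⟩ := key L R c hL
    exact ⟨e, h1, Or.inl h2⟩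
  by_cases hR : R.card = 1
  · obtain ⟨e, h1, h2⟩ := key R L c.swap hR
    exact ⟨e, h1, Or.inr h2⟩
  · have := h.big_cut c (by have := c.posL; omega) (by have := c.swap.posL; omega)
    rw [this] at ht
    simp [Finset.ext_iff] at ht

/-- The surroundings of a vertex `w` whose only neighbour in `T` is `t`. -/
theorem single (h5 : 5 ≤ A.card) {w t : V} (hw : w ∈ A) (ht : tn G T {w} = {t}) :
    ∃ e z s D, Cut G A w z {e} D ∧ (∀ x ∈ A, G.Adj x t ↔ x = w ∨ x = e) ∧ s ≠ t ∧
      tn G T {e} = {t, s} ∧ ¬ G.Adj w z ∧ tn G T {z} = ∅ ∧ T.card = 4 := by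
  have htw : t ∈ tn G T {w} := by simp [ht]
  obtain ⟨htT, hwt⟩ := mem_tn1.1 htw
  have hdw := h.deg_an hw
  rw [ht, Finset.card_singleton] at hdw
  obtain ⟨z, L, R, c⟩ := h.exists_cut (by omega) hw (by omega)
  obtain ⟨e, D, c, het⟩ : ∃ e D, Cut G A w z {e} D ∧ G.Adj e t := by
    obtain ⟨e, he, rfl | rfl⟩ := h.single_ear ht c
    · exact ⟨e, R, c, he⟩
    · exact ⟨e, L, c.swap, he⟩
  have heA : e ∈ A := c.LA (by simp)
  have hew : e ≠ w := fun hh => c.xL (by simp [hh])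
  have hez : e ≠ z := fun hh => c.yL (by simp [hh])
  have nt := h.an_pair h5 htT hw heA hew.symm hwt het
  have hte : t ∈ tn G T {e} := mem_tn1.2 ⟨htT, het⟩
  have he2 := h.tnL1 c (by simp)
  obtain ⟨s, hse, hst⟩ := Finset.exists_mem_ne (by omega : 1 < (tn G T {e}).card) t
  have hee : tn G T {e} = {t, s} := (Finset.eq_of_subset_of_card_le (by
    intro x hx; rw [Finset.mem_insert, Finset.mem_singleton] at hx
    rcases hx with rfl | rfl <;> assumption) (by rw [he2, Finset.card_pair hst.symm])).symm
  have hcard := c.card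
  rw [Finset.card_singleton] at hcard
  have hins := c.insD
  have two : TwoConn G (insert z D) := by
    refine ⟨by rw [Finset.card_insert_of_notMem c.yR]; omega, c.swap.symm.conn_insL, fun y hy => ?_⟩
    by_cases hyz : y = z
    · subst hyz
      rw [Finset.erase_insert c.yR]
      exact c.cR
    have hyA : y ∈ A := by rw [hins] at hy; grind
    have hyw : y ≠ w := by rw [hins] at hy; grind
    have hye : y ≠ e := by rw [hins] at hy; grind
    by_cases hcn : Conn G (A \ {w, y})
    · have := hcn.erase_leaf (d := e) (v := z) (by have := c.hy; have := c.ne; grind) hez.symm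
        (fun x hx hex => by
          rcases (c.ear_adj (Finset.mem_sdiff.1 hx).1).1 hex with rfl | hh
          · grind
          · exact hh)
      rw [hins]
      convert this using 1
      grind
    · exfalso
      obtain ⟨L, R, c'⟩ := h.cut_of (by omega) hw hyA hyw.symm hcn
      have fin : ∀ e' L, Cut G A w y {e'} L → G.Adj e' t → False := by
        intro e' L c' he'
        have he'A : e' ∈ A := c'.LA (by simp)
        have : e' = e := ((nt e' he'A).1 he').resolve_left (fun hh => c'.xL (by simp [hh]))
        subst this
        rcases (c.ear_adj hyA).1 ((c'.ear_adj hyA).2 (Or.inr rfl)) with hh | hh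
        · exact hyw hh
        · exact hyz hh
      obtain ⟨e', he', rfl | rfl⟩ := h.single_ear ht c'
      · exact fin e' R c' he'
      · exact fin e' L c'.swap he'
  have hW := h.W w hw t hwt (insert z D) (by rw [hins]; grind) (by rw [hins]; grind) two
  have hsub : an G A w ⊆ insert e (an G (insert z D) w) := by
    intro x hx
    rw [mem_an] at hx
    by_cases hxe : x = e
    · simp [hxe]
    · refine Finset.mem_insert_of_mem (mem_an.2 ⟨?_, hx.2⟩)
      rw [hins]
      have := hx.2.ne
      grind
  have hwz : ¬ G.Adj w z := by
    intro hwz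
    have h1 := h.tn_ge (B := {w, e}) (Z := an G (insert z D) w) (by grind)
      (by rw [Finset.card_pair hew.symm]) (by rw [Finset.card_pair hew.symm]; omega) (by
        intro b hb y hy hby
        rw [Finset.mem_insert, Finset.mem_singleton] at hb
        rcases hb with rfl | rfl
        · have := hsub (mem_an.2 ⟨hy, hby⟩)
          grind
        · rcases (c.ear_adj hy).1 hby with rfl | rfl
          · simp
          · exact Or.inr (mem_an.2 ⟨by simp, hwz⟩))
    have h2 : tn G T {w, e} = tn G T {e} := by
      rw [Finset.insert_eq, tn_union, ht, hee]
      grind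
    rw [h2] at h1
    omega
  have hD3 := h.tnL2 c.swap (by omega)
  have htD : t ∉ tn G T D := by
    intro hh
    obtain ⟨-, x, hx, hxt⟩ := mem_tn.1 hh
    rcases (nt x (c.RA hx)).1 hxt with rfl | rfl
    · exact c.xR hx
    · exact c.dis x (by simp) hx
  have hDsub : tn G T D ⊆ T.erase t := fun x hx =>
    Finset.mem_erase.2 ⟨fun e => htD (e ▸ hx), tn_sub hx⟩
  have hDle := Finset.card_le_card hDsub
  rw [Finset.card_erase_of_mem htT] at hDle
  have hT4 := h.T4
  have hDeq : tn G T D = T.erase t := Finset.eq_of_subset_of_card_le hDsub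
    (by rw [Finset.card_erase_of_mem htT]; omega)
  refine ⟨e, z, s, D, c, nt, hst, hee, hwz, ?_, by omega⟩
  by_contra hne
  obtain ⟨a, ha⟩ := Finset.nonempty_iff_ne_empty.2 hne
  obtain ⟨t0, h1, h2⟩ : ∃ t0 ∈ tn G T {z}, t0 ∈ tn G T {e} := by
    rcases h.ear c.symm with hs | ⟨t0, h1, h2, -⟩
    · exact ⟨a, ha, hs ha⟩
    · exact ⟨t0, h1, h2⟩
  have h0t : t0 ≠ t := by
    rintro rfl
    rcases (nt z c.hy).1 (mem_tn1.1 h1).2 with hh | hh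
    · exact c.ne hh.symm
    · exact hez hh.symm
  have h0D : t0 ∈ tn G T D := by rw [hDeq]; exact Finset.mem_erase.2 ⟨h0t, tn_sub h1⟩
  obtain ⟨h0T, x, hx, hx0⟩ := mem_tn.1 h0D
  rcases (h.an_pair h5 h0T c.hy heA hez.symm (mem_tn1.1 h1).2 (mem_tn1.1 h2).2 x (c.RA hx)).1 hx0 with
    rfl | rfl
  · exact c.yR hx
  · exact c.dis x (by simp) hx

end Core
end HW

/-! ### Excluding a vertex with exactly one neighbour in the boundary -/

namespace HW

variable {V : Type} [DecidableEq V] {G : SimpleGraph V} [Fintype V]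

/-- The configuration forced by a vertex `w` with exactly one neighbour in `T`: the vertices
of `A` with neighbours in `T = {t, s, u, v}` are `w, e, g, f, k`, and `e`, `f` are the ears of
cuts `w, z` and `k, y`. -/
structure Chain (G : SimpleGraph V) (A T : Finset V) (w e g f k z y t s u v : V) : Prop where
  gA : g ∈ A
  cut : ∃ D, Cut G A w z {e} D
  cut' : ∃ D, Cut G A k y {f} D
  tT : t ∈ T
  sT : s ∈ T
  uT : u ∈ T
  vT : v ∈ T
  cov : ∀ x ∈ T, x = t ∨ x = s ∨ x = u ∨ x = v
  ts : t ≠ s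
  tu : t ≠ u
  tv : t ≠ v
  su : s ≠ u
  sv : s ≠ v
  uv : u ≠ v
  nt : ∀ x ∈ A, G.Adj x t ↔ x = w ∨ x = e
  ns : ∀ x ∈ A, G.Adj x s ↔ x = e ∨ x = g
  nu : ∀ x ∈ A, G.Adj x u ↔ x = g ∨ x = f
  nv : ∀ x ∈ A, G.Adj x v ↔ x = f ∨ x = k
  we : w ≠ e
  wg : w ≠ g
  wf : w ≠ f
  wk : w ≠ k
  eg : e ≠ g
  ef : e ≠ f
  ek : e ≠ k
  gf : g ≠ f
  gk : g ≠ k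
  fk : f ≠ k
  wz : ¬ G.Adj w z
  ky : ¬ G.Adj k y
  zT : tn G T {z} = ∅
  yT : tn G T {y} = ∅

namespace Chain
variable {A T : Finset V} {w e g f k z y t s u v : V} (h : Core G A T)
  (c : Chain G A T w e g f k z y t s u v)

include c in
/-- The configuration is symmetric under reversal. -/
theorem rev : Chain G A T k f g e w y z v u s t :=
  { gA := c.gA, cut := c.cut', cut' := c.cut, tT := c.vT, sT := c.uT, uT := c.sT, vT := c.tT,
    cov := fun x hx => by rcases c.cov x hx with e | e | e | e <;> simp [e]
    ts := c.uv.symm, tu := c.sv.symm, tv := c.tv.symm, su := c.su.symm, sv := c.tu.symm,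
    uv := c.ts.symm,
    nt := fun x hx => (c.nv x hx).trans or_comm, ns := fun x hx => (c.nu x hx).trans or_comm,
    nu := fun x hx => (c.ns x hx).trans or_comm, nv := fun x hx => (c.nt x hx).trans or_comm,
    we := c.fk.symm, wg := c.gk.symm, wf := c.ek.symm, wk := c.wk.symm, eg := c.gf.symm,
    ef := c.ef.symm, ek := c.wf.symm, gf := c.eg.symm, gk := c.wg.symm, fk := c.we.symm,
    wz := c.ky, ky := c.wz, zT := c.yT, yT := c.zT }

include c in
theorem wA : w ∈ A := c.cut.choose_spec.hx
include c in
theorem eA : e ∈ A := c.cut.choose_spec.LA (by simp)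
include c in
theorem zA : z ∈ A := c.cut.choose_spec.hy

include c in
/-- A vertex of `A` with a neighbour in `T` is one of the five listed. -/
theorem touch {x : V} (hx : x ∈ A) (ht : tn G T {x} ≠ ∅) :
    x = w ∨ x = e ∨ x = g ∨ x = f ∨ x = k := by
  obtain ⟨a, ha⟩ := Finset.nonempty_iff_ne_empty.2 ht
  obtain ⟨haT, hxa⟩ := mem_tn1.1 ha
  have h1 := c.nt x hx
  have h2 := c.ns x hx
  have h3 := c.nu x hx
  have h4 := c.nv x hx
  rcases c.cov a haT with rfl | rfl | rfl | rfl
  · rcases h1.1 hxa with e | e <;> simp [e]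
  · rcases h2.1 hxa with e | e <;> simp [e]
  · rcases h3.1 hxa with e | e <;> simp [e]
  · rcases h4.1 hxa with e | e <;> simp [e]

include c in
theorem tn_w : (tn G T {w}).card ≤ 1 := by
  have : tn G T {w} ⊆ {t} := by
    intro a ha
    obtain ⟨haT, hxa⟩ := mem_tn1.1 ha
    have h2 := c.ns w c.wA
    have h3 := c.nu w c.wA
    have h4 := c.nv w c.wA
    rcases c.cov a haT with rfl | rfl | rfl | rfl
    · simp
    · exact ((h2.1 hxa).elim c.we c.wg).elim
    · exact ((h3.1 hxa).elim c.wg c.wf).elim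
    · exact ((h4.1 hxa).elim c.wf c.wk).elim
  exact (Finset.card_le_card this).trans (by simp)

include c in
theorem not_touch {x a : V} (hx : tn G T {x} = ∅) (ha : a ∈ T) : ¬ G.Adj x a := fun hh => by
  have : a ∈ tn G T {x} := mem_tn1.2 ⟨ha, hh⟩
  rw [hx] at this
  simp at this

include h c

/-- Ears have two neighbours in `T`, and only `e`, `g` and `f` do. -/
theorem ear_mem {x' y' e' : V} {D : Finset V} (c' : Cut G A x' y' {e'} D) :
    e' = e ∨ e' = g ∨ e' = f := by
  have h2 := h.tnL1 c' (by simp)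
  have := c.tn_w
  have := c.rev.tn_w
  rcases c.touch (c'.LA (Finset.mem_singleton_self e')) (fun hh => by rw [hh] at h2; simp at h2) with
    rfl | rfl | rfl | rfl | rfl
  · omega
  · simp
  · simp
  · simp
  · omega

theorem no_big_aux {x' y' : V} {L R : Finset V} (c' : Cut G A x' y' L R) :
    t ∉ tn G T L ∨ t ∉ tn G T R := by
  by_contra hc
  push Not at hc
  obtain ⟨D, c1⟩ := c.cut
  have hwe : G.Adj e w := (c1.ear_adj c.wA).2 (by simp)
  obtain ⟨-, l, hl, hlt⟩ := mem_tn.1 hc.1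
  obtain ⟨-, r, hr, hrt⟩ := mem_tn.1 hc.2
  have h1 := (c.nt l (c'.LA hl)).1 hlt
  have h2 := (c.nt r (c'.RA hr)).1 hrt
  have h3 := c'.noE l hl r hr
  have h4 : l ≠ r := fun e => c'.dis l hl (e ▸ hr)
  rcases h1 with rfl | rfl <;> rcases h2 with rfl | rfl
  · exact h4 rfl
  · exact h3 hwe.symm
  · exact h3 hwe
  · exact h4 rfl

/-- Every 2-cut of `A` has an ear. -/
theorem no_big {x' y' : V} {L R : Finset V} (c' : Cut G A x' y' L R) : L.card = 1 ∨ R.card = 1 := by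
  by_contra hc
  push Not at hc
  have hL : 2 ≤ L.card := by have := c'.posL; omega
  have hR : 2 ≤ R.card := by have := c'.swap.posL; omega
  have ht := no_big_aux h c c'
  have hv := no_big_aux h c.rev c'
  obtain ⟨hL3, hR3, -, -⟩ := h.big_cut_aux c' hL hR
  have hx0 := h.big_cut c' hL hR
  have hy0 := h.big_cut c'.symm hL hR
  have hcu := h.tn_union_le L R
  have hT4 := h.T4
  have hi : tn G T L ∩ tn G T R ⊆ {s, u} := by
    intro a ha
    rw [Finset.mem_inter] at ha
    rcases c.cov a (tn_sub ha.1) with rfl | rfl | rfl | rfl <;> first | tauto | simp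
  have hieq : tn G T L ∩ tn G T R = {s, u} := Finset.eq_of_subset_of_card_le hi (by
    rw [Finset.card_pair c.su]; omega)
  have hs : s ∈ tn G T L ∩ tn G T R := by simp [hieq]
  have hu : u ∈ tn G T L ∩ tn G T R := by simp [hieq]
  rw [Finset.mem_inter] at hs hu
  have side : ∀ a x, x ∈ A → a ∈ T → G.Adj x a → x ∈ L ∨ x ∈ R := by
    intro a x hx ha hxa
    rcases c'.cov x hx with rfl | rfl | hh | hh
    · exact absurd hxa (c.not_touch hx0 ha)
    · exact absurd hxa (c.not_touch hy0 ha)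
    · exact Or.inl hh
    · exact Or.inr hh
  have get : ∀ S ⊆ A, ∀ a, a ∈ tn G T S → ∀ p q, (∀ x ∈ A, G.Adj x a ↔ x = p ∨ x = q) →
      p ∈ S ∨ q ∈ S := by
    intro S hS a ha p q hpq
    obtain ⟨-, x, hx, hxa⟩ := mem_tn.1 ha
    rcases (hpq x (hS hx)).1 hxa with rfl | rfl
    · exact Or.inl hx
    · exact Or.inr hx
  have mk : ∀ S : Finset V, S ⊆ A → (tn G T S).card = 3 → e ∈ S → f ∈ S → s ∈ tn G T S →
      u ∈ tn G T S → False := by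
    intro S hS h3 he hf hs hu
    have h4 : ({t, s, u, v} : Finset V) ⊆ tn G T S := by
      simp only [Finset.insert_subset_iff, Finset.singleton_subset_iff]
      exact ⟨mem_tn.2 ⟨c.tT, e, he, (c.nt e (hS he)).2 (by simp)⟩, hs, hu,
        mem_tn.2 ⟨c.vT, f, hf, (c.nv f (hS hf)).2 (by simp)⟩⟩
    have := Finset.card_le_card h4
    rw [Finset.card_insert_of_notMem (by simp [c.ts, c.tu, c.tv]),
      Finset.card_insert_of_notMem (by simp [c.su, c.sv]), Finset.card_pair c.uv] at this
    omega
  have s1 := get L c'.LA s hs.1 _ _ c.ns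
  have s2 := get R c'.RA s hs.2 _ _ c.ns
  have u1 := get L c'.LA u hu.1 _ _ c.nu
  have u2 := get R c'.RA u hu.2 _ _ c.nu
  have de := c'.dis e
  have dg := c'.dis g
  have df := c'.dis f
  by_cases hg : g ∈ L
  · exact mk R c'.RA hR3 (s2.resolve_right (dg hg)) (u2.resolve_left (dg hg)) hs.2 hu.2
  · have hgR : g ∈ R := by
      rcases side s g c.gA c.sT ((c.ns g c.gA).2 (by simp)) with hh | hh
      · exact absurd hh hg
      · exact hh
    exact mk L c'.LA hL3 (s1.resolve_right hg) (u1.resolve_left hg) hs.1 hu.1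

theorem zy : z ≠ y := by
  rintro rfl
  obtain ⟨D, c1⟩ := c.cut
  obtain ⟨D', c2⟩ := c.cut'
  have hz := c.zT
  have nz : ∀ {x}, tn G T {x} ≠ ∅ → x ≠ z := fun hx e => hx (e ▸ hz)
  have tne : ∀ {x a}, a ∈ T → G.Adj x a → tn G T {x} ≠ ∅ := fun ha hx e => c.not_touch e ha hx
  have hwz := nz (tne c.tT ((c.nt w c.wA).2 (by simp)))
  have hez := nz (tne c.tT ((c.nt e c.eA).2 (by simp)))
  have hgz := nz (tne c.sT ((c.ns g c.gA).2 (by simp)))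
  have hfz := nz (tne c.vT ((c.nv f c.rev.eA).2 (by simp)))
  have hkz := nz (tne c.vT ((c.nv k c.rev.wA).2 (by simp)))
  have cY0 : Conn G (A \ {z, e}) := by
    rw [← c1.symm.insD]; exact c1.swap.conn_insL
  have cY := cY0.erase_leaf (d := f) (v := k) (by
      have := c.rev.wA; have := c.ek; grind) c.fk.symm (fun x hx hfx => by
    rw [Finset.mem_sdiff] at hx
    rcases (c2.ear_adj hx.1).1 hfx with e | e
    · exact e
    · exact absurd (by simp [e]) hx.2)
  have cX : Conn G (insert f (insert z {e})) :=
    c1.symm.conn_insL.insert ⟨z, by simp, (c2.ear_adj c.zA).2 (by simp)⟩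
  have hk := h.K1 _ (by have := c.eA; have := c.zA; have := c.rev.eA; grind) _
    (by grind) (by grind) cX cY
  have hwA := c.wA
  have hkA := c.rev.wA
  have hsub : ({t, s, v} : Finset V) ⊆ tn G T (insert f (insert z {e})) ∩
      tn G T ((A \ {z, e}).erase f) := by
    simp only [Finset.insert_subset_iff, Finset.singleton_subset_iff, Finset.mem_inter]
    refine ⟨⟨mem_tn.2 ⟨c.tT, e, by simp, (c.nt e c.eA).2 (by simp)⟩,
      mem_tn.2 ⟨c.tT, w, ?_, (c.nt w c.wA).2 (by simp)⟩⟩,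
      ⟨mem_tn.2 ⟨c.sT, e, by simp, (c.ns e c.eA).2 (by simp)⟩,
      mem_tn.2 ⟨c.sT, g, ?_, (c.ns g c.gA).2 (by simp)⟩⟩,
      mem_tn.2 ⟨c.vT, f, by simp, (c.nv f c.rev.eA).2 (by simp)⟩,
      mem_tn.2 ⟨c.vT, k, ?_, (c.nv k c.rev.wA).2 (by simp)⟩⟩
    · simp [c.wf, hwz, c.we, c.wA]
    · simp [c.gf, hgz, c.eg.symm, c.gA]
    · simp [c.fk.symm, hkz, c.ek.symm, c.rev.wA]
  have := Finset.card_le_card hsub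
  rw [Finset.card_insert_of_notMem (by simp [c.ts, c.tv]), Finset.card_pair c.sv] at this
  omega

/-- A vertex without neighbours in `T` lies in a cut with an ear. -/
theorem cut_at (h5 : 5 ≤ A.card) {x : V} (hx : x ∈ A) (hx0 : tn G T {x} = ∅) :
    ∃ y' h' D, Cut G A x y' {h'} D := by
  have hd := h.deg_an hx
  rw [hx0, Finset.card_empty] at hd
  obtain ⟨y', L, R, c'⟩ := h.exists_cut (by omega) hx (by omega)
  rcases no_big h c c' with h1 | h1
  · obtain ⟨e', rfl⟩ := Finset.card_eq_one.1 h1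
    exact ⟨y', e', R, c'⟩
  · obtain ⟨e', rfl⟩ := Finset.card_eq_one.1 h1
    exact ⟨y', e', L, c'.swap⟩

/-- The vertex `g` is an ear at `z`, since otherwise `A` without `z` and `e` would be 2-connected
and contain three neighbours of `z`. -/
theorem g_ear (h5 : 5 ≤ A.card) : ∃ x D, Cut G A z x {g} D := by
  obtain ⟨D, c1⟩ := c.cut
  obtain ⟨D', c2⟩ := c.cut'
  have hins := c1.symm.insD
  have hcard := c1.card
  rw [Finset.card_singleton] at hcard
  have hd := h.deg_an c.zA
  rw [c.zT, Finset.card_empty] at hd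
  have hez : G.Adj z e := ((c1.ear_adj c.zA).2 (by simp)).symm
  have ntwo : ¬ TwoConn G (insert w D) := by
    intro two
    have hW := h.W z c.zA e hez (insert w D) (by rw [hins]; grind) (by rw [hins]; grind) two
    have hsub : an G A z ⊆ insert e (an G (insert w D) z) := by
      intro x hx
      rw [mem_an] at hx
      by_cases hxe : x = e
      · simp [hxe]
      · refine Finset.mem_insert_of_mem (mem_an.2 ⟨?_, hx.2⟩)
        rw [hins]
        have := hx.2.ne
        grind
    have h1 := Finset.card_le_card hsub
    have h2 := Finset.card_insert_le e (an G (insert w D) z)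
    omega
  obtain ⟨x, hx, hxn⟩ : ∃ x ∈ insert w D, ¬ Conn G ((insert w D).erase x) := by
    by_contra hc
    push Not at hc
    exact ntwo ⟨by rw [Finset.card_insert_of_notMem c1.xR]; omega, c1.swap.conn_insL, hc⟩
  have hxw : x ≠ w := by
    rintro rfl
    rw [Finset.erase_insert c1.xR] at hxn
    exact hxn c1.cR
  have hxm : x ∈ A \ {z, e} := by rw [← hins]; exact hx
  have hxA : x ∈ A := (Finset.mem_sdiff.1 hxm).1
  have hxz : x ≠ z := by grind
  have hxe : x ≠ e := by grind
  have hncn : ¬ Conn G (A \ {z, x}) := by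
    intro hcn
    apply hxn
    have := hcn.erase_leaf (d := e) (v := w) (by have := c1.hx; have := c1.ne; grind) c.we
        (fun y' hy' hey => by
          rcases (c1.ear_adj (Finset.mem_sdiff.1 hy').1).1 hey with hh | hh
          · exact hh
          · exact absurd (by simp [hh]) (Finset.mem_sdiff.1 hy').2)
    rw [hins]
    convert this using 1
    grind
  obtain ⟨L, R, c'⟩ := h.cut_of (by omega) c.zA hxA hxz.symm hncn
  have fin : ∀ h' L, Cut G A z x {h'} L → h' = g := by
    intro h' L c'
    rcases ear_mem h c c' with rfl | rfl | rfl
    · rcases (c1.ear_adj hxA).1 ((c'.ear_adj hxA).2 (by simp)) with hh | hh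
      · exact absurd hh hxw
      · exact absurd hh hxz
    · rfl
    · rcases (c2.ear_adj c.zA).1 ((c'.ear_adj c.zA).2 (by simp)) with hh | hh
      · exact absurd ((c.nv z c.zA).2 (by simp [hh])) (c.not_touch c.zT c.vT)
      · exact absurd hh (zy h c)
  rcases no_big h c c' with h1 | h1
  · obtain ⟨h', rfl⟩ := Finset.card_eq_one.1 h1
    have := fin h' R c'
    subst this
    exact ⟨x, R, c'⟩
  · obtain ⟨h', rfl⟩ := Finset.card_eq_one.1 h1
    have := fin h' L c'.swap
    subst this
    exact ⟨x, L, c'.swap⟩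

theorem adj_all (h5 : 5 ≤ A.card) : G.Adj z k ∧ G.Adj z e ∧ G.Adj z g := by
  obtain ⟨D, c1⟩ := c.cut
  obtain ⟨D', c2⟩ := c.cut'
  obtain ⟨x1, D1, c3⟩ := g_ear h c h5
  obtain ⟨x2, D2, c4⟩ := g_ear h c.rev h5
  have hzy := zy h c
  have hyA := c.rev.zA
  have hzA := c.zA
  have hgy : G.Adj g y := (c4.ear_adj hyA).2 (by simp)
  have hgz : G.Adj g z := (c3.ear_adj hzA).2 (by simp)
  have hx1 : x1 = y := by
    rcases (c3.ear_adj hyA).1 hgy with hh | hh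
    · exact absurd hh.symm hzy
    · exact hh.symm
  subst hx1
  have hU : ∀ x ∈ A, x = w ∨ x = e ∨ x = g ∨ x = f ∨ x = k ∨ x = z ∨ x = x1 := by
    intro x hx
    by_cases hx0 : tn G T {x} = ∅
    · obtain ⟨y', h', D3, c5⟩ := cut_at h c h5 hx hx0
      have hh := (c5.ear_adj hx).2 (by simp)
      rcases ear_mem h c c5 with rfl | rfl | rfl
      · rcases (c1.ear_adj hx).1 hh with hh | hh <;> simp [hh]
      · rcases (c3.ear_adj hx).1 hh with hh | hh <;> simp [hh]
      · rcases (c2.ear_adj hx).1 hh with hh | hh <;> simp [hh]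
    · rcases c.touch hx hx0 with hh | hh | hh | hh | hh <;> simp [hh]
  have hsub : an G A z ⊆ {e, g, k, x1} := by
    intro x hx
    rw [mem_an] at hx
    rcases hU x hx.1 with rfl | rfl | rfl | rfl | rfl | rfl | rfl
    · exact absurd hx.2.symm c.wz
    · simp
    · simp
    · rcases (c2.ear_adj hzA).1 hx.2.symm with hh | hh
      · exact absurd ((c.nv z c.zA).2 (by simp [hh])) (c.not_touch c.zT c.vT)
      · exact absurd hh hzy
    · simp
    · exact absurd hx.2 (G.loopless.irrefl _)
    · simp
  have hd := h.deg_an c.zA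
  rw [c.zT, Finset.card_empty] at hd
  have heq : an G A z = {e, g, k, x1} := Finset.eq_of_subset_of_card_le hsub
    (Finset.card_le_four.trans (by omega))
  have hk : k ∈ an G A z := by simp [heq]
  exact ⟨(mem_an.1 hk).2, ((c1.ear_adj hzA).2 (by simp)).symm, hgz.symm⟩

theorem false (h5 : 5 ≤ A.card) : False := by
  obtain ⟨a1, a2, a3⟩ := adj_all h c h5
  obtain ⟨b1, b2, b3⟩ := adj_all h c.rev h5
  have hz := c.zT
  have hy := c.yT
  have tne : ∀ {x a}, a ∈ T → G.Adj x a → tn G T {x} ≠ ∅ := fun ha hx e => c.not_touch e ha hx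
  have nz : ∀ {x}, tn G T {x} ≠ ∅ → x ≠ z := fun hx e => hx (e ▸ hz)
  have ny : ∀ {x}, tn G T {x} ≠ ∅ → x ≠ y := fun hx e => hx (e ▸ hy)
  have tw := tne c.tT ((c.nt w c.wA).2 (by simp))
  have te := tne c.tT ((c.nt e c.eA).2 (by simp))
  have tg := tne c.sT ((c.ns g c.gA).2 (by simp))
  have tf := tne c.vT ((c.nv f c.rev.eA).2 (by simp))
  have tk := tne c.vT ((c.nv k c.rev.wA).2 (by simp))
  have cX : Conn G (insert k (insert z {e})) :=
    ((conn_single e).insert ⟨e, by simp, a2⟩).insert ⟨z, by simp, a1.symm⟩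
  have cY : Conn G (insert g (insert f (insert w {y}))) :=
    (((conn_single y).insert ⟨y, by simp, b1.symm⟩).insert ⟨y, by simp, b2.symm⟩).insert
      ⟨y, by simp, b3.symm⟩
  have hk := h.K1 _ (by
      simp only [Finset.insert_subset_iff, Finset.singleton_subset_iff]
      exact ⟨c.rev.wA, c.zA, c.eA⟩) _ (by
      simp only [Finset.insert_subset_iff, Finset.singleton_subset_iff]
      exact ⟨c.gA, c.rev.eA, c.wA, c.rev.zA⟩) (by
      intro x hx
      simp only [Finset.mem_insert, Finset.mem_singleton] at hx ⊢
      rcases hx with rfl | rfl | rfl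
      · simp [c.gk.symm, c.fk.symm, c.wk.symm, ny tk]
      · simp [(nz tg).symm, (nz tf).symm, (nz tw).symm, zy h c]
      · simp [c.eg, c.ef, c.we.symm, ny te]) cX cY
  have hsub : ({t, s, v} : Finset V) ⊆ tn G T (insert k (insert z {e})) ∩
      tn G T (insert g (insert f (insert w {y}))) := by
    simp only [Finset.insert_subset_iff, Finset.singleton_subset_iff, Finset.mem_inter]
    exact ⟨⟨mem_tn.2 ⟨c.tT, e, by simp, (c.nt e c.eA).2 (by simp)⟩,
      mem_tn.2 ⟨c.tT, w, by simp, (c.nt w c.wA).2 (by simp)⟩⟩,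
      ⟨mem_tn.2 ⟨c.sT, e, by simp, (c.ns e c.eA).2 (by simp)⟩,
      mem_tn.2 ⟨c.sT, g, by simp, (c.ns g c.gA).2 (by simp)⟩⟩,
      mem_tn.2 ⟨c.vT, k, by simp, (c.nv k c.rev.wA).2 (by simp)⟩,
      mem_tn.2 ⟨c.vT, f, by simp, (c.nv f c.rev.eA).2 (by simp)⟩⟩
  have := Finset.card_le_card hsub
  rw [Finset.card_insert_of_notMem (by simp [c.ts, c.tv]), Finset.card_pair c.sv] at this
  omega

end Chain

namespace Core
variable {A T : Finset V} (h : Core G A T)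
include h

/-- No vertex of `A` has exactly one neighbour in `T`: following the vertices of `T`, each with two
neighbours in `A`, produces the impossible configuration `Chain`. -/
theorem no_single (h5 : 5 ≤ A.card) {w t : V} (hw : w ∈ A) (ht : tn G T {w} = {t}) : False := by
  obtain ⟨e, z, s, D, c1, nt, hst, he, hwz, hz, hT4⟩ := h.single h5 hw ht
  have adj : ∀ {x a S}, tn G T {x} = S → a ∈ S → a ∈ T ∧ G.Adj x a := fun hx ha => by
    rw [← hx] at ha
    exact mem_tn1.1 ha
  have nadj : ∀ {x a S}, tn G T {x} = S → a ∉ S → a ∈ T → ¬ G.Adj x a := fun hx ha haT hh => by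
    rw [← hx] at ha
    exact ha (mem_tn1.2 ⟨haT, hh⟩)
  have heA : e ∈ A := c1.LA (by simp)
  have htT := (adj (a := t) ht (by simp)).1
  obtain ⟨hsT, hes⟩ := adj (a := s) he (by simp)
  have hwe : w ≠ e := by rintro rfl; exact c1.xL (by simp)
  obtain ⟨g, hgA, hge, hgs, ns⟩ := h.other h5 hsT heA hes
  have hgw : g ≠ w := by rintro rfl; exact nadj ht (by simp [hst]) hsT hgs
  have hgz : g ≠ z := by rintro rfl; exact nadj hz (by simp) hsT hgs
  have hgt : ¬ G.Adj g t := fun hh => by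
    rcases (nt g hgA).1 hh with hh | hh
    · exact hgw hh
    · exact hge hh
  have hg1 : 1 < (tn G T {g}).card := by
    by_contra hc
    have hsg : s ∈ tn G T {g} := mem_tn1.2 ⟨hsT, hgs⟩
    have : tn G T {g} = {s} := (Finset.eq_of_subset_of_card_le (by simpa using hsg)
      (by rw [Finset.card_singleton]; omega)).symm
    obtain ⟨e', z', s', D', c1', nt', -⟩ := h.single h5 hgA this
    have he' : e = e' := by
      rcases (nt' e heA).1 hes with hh | hh
      · exact absurd hh.symm hge
      · exact hh
    subst he'
    rcases (c1.ear_adj hgA).1 ((c1'.ear_adj hgA).2 (by simp)) with hh | hh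
    · exact hgw hh
    · exact hgz hh
  obtain ⟨u, hug, hus⟩ := Finset.exists_mem_ne hg1 s
  obtain ⟨huT, hgu⟩ := mem_tn1.1 hug
  have hut : u ≠ t := by rintro rfl; exact hgt hgu
  obtain ⟨f, hfA, hfg, hfu, nu⟩ := h.other h5 huT hgA hgu
  have hfw : f ≠ w := by rintro rfl; exact nadj ht (by simp [hut]) huT hfu
  have hfe : f ≠ e := by rintro rfl; exact nadj he (by simp [hut, hus]) huT hfu
  have hfz : f ≠ z := by rintro rfl; exact nadj hz (by simp) huT hfu
  obtain ⟨v, hvT, hvn⟩ : ∃ v ∈ T, v ∉ ({t, s, u} : Finset V) := by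
    by_contra hc
    push Not at hc
    have := Finset.card_le_card (show T ⊆ _ from hc)
    have := Finset.card_le_three (a := t) (b := s) (c := u)
    omega
  simp only [Finset.mem_insert, Finset.mem_singleton, not_or] at hvn
  obtain ⟨hvt, hvs, hvu⟩ := hvn
  have hcov : ∀ x ∈ T, x = t ∨ x = s ∨ x = u ∨ x = v := by
    have : ({t, s, u, v} : Finset V) = T := by
      refine Finset.eq_of_subset_of_card_le ?_ ?_
      · simp only [Finset.insert_subset_iff, Finset.singleton_subset_iff]
        exact ⟨htT, hsT, huT, hvT⟩
      · rw [Finset.card_insert_of_notMem (by simp [hst.symm, hut.symm, Ne.symm hvt]),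
          Finset.card_insert_of_notMem (by simp [hus.symm, Ne.symm hvs]),
          Finset.card_pair (Ne.symm hvu)]
        omega
    intro x hx
    rw [← this] at hx
    simpa using hx
  -- a neighbour of `v` other than `f` sees nothing else in `T`
  have only : ∀ x ∈ A, G.Adj x v → x ≠ f → tn G T {x} = {v} := by
    intro x hx hxv hxf
    have hxw : x ≠ w := by rintro rfl; exact nadj ht (by simp [hvt]) hvT hxv
    have hxe : x ≠ e := by rintro rfl; exact nadj he (by simp [hvt, hvs]) hvT hxv
    have hxg : x ≠ g := by
      rintro rfl
      have : 3 ≤ (tn G T {x}).card := Finset.two_lt_card.2 ⟨s, mem_tn1.2 ⟨hsT, hgs⟩, u, hug, v,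
        mem_tn1.2 ⟨hvT, hxv⟩, hus.symm, Ne.symm hvs, Ne.symm hvu⟩
      have := h.tn_le (by omega) hx
      omega
    refine Finset.Subset.antisymm (fun a ha => ?_) (by simpa using mem_tn1.2 ⟨hvT, hxv⟩)
    obtain ⟨haT, hxa⟩ := mem_tn1.1 ha
    rcases hcov a haT with rfl | rfl | rfl | rfl
    · exact (((nt x hx).1 hxa).elim hxw hxe).elim
    · exact (((ns x hx).1 hxa).elim hxe hxg).elim
    · exact (((nu x hx).1 hxa).elim hxg hxf).elim
    · simp
  have hfv : G.Adj f v := by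
    by_contra hfv
    obtain ⟨p, hp⟩ := Finset.card_pos.1 (show 0 < (an G A v).card by rw [h.an_card h5 hvT]; omega)
    rw [mem_an] at hp
    have hpf : p ≠ f := by rintro rfl; exact hfv hp.2.symm
    obtain ⟨q, _, _, D', c1', nt', hs', he', -⟩ := h.single h5 hp.1 (only p hp.1 hp.2.symm hpf)
    have hqA : q ∈ A := c1'.LA (by simp)
    have hqv : G.Adj q v := (nt' q hqA).2 (by simp)
    have hqf : q ≠ f := by rintro rfl; exact hfv hqv
    rw [only q hqA hqv hqf] at he'
    have := congrArg Finset.card he'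
    rw [Finset.card_pair hs'.symm] at this
    simp at this
  obtain ⟨k, hkA, hkf, hkv, nv⟩ := h.other h5 hvT hfA hfv
  have hk := only k hkA hkv hkf
  obtain ⟨f', y, s', D', c2, nv', hs', hf', hky, hy, -⟩ := h.single h5 hkA hk
  have : f' = f := by
    rcases (nv f' (c2.LA (by simp))).1 ((nv' f' (c2.LA (by simp))).2 (by simp)) with hh | hh
    · exact hh
    · exact absurd (by simp [hh]) c2.xL
  subst this
  have hkw : k ≠ w := by rintro rfl; exact nadj ht (by simp [hvt]) hvT hkv
  have hke : k ≠ e := by rintro rfl; exact nadj he (by simp [hvt, hvs]) hvT hkv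
  have hkg : k ≠ g := by rintro rfl; exact nadj hk (by simp [Ne.symm hvs]) hsT hgs
  exact Chain.false (g := g) h
    { gA := hgA, cut := ⟨D, c1⟩, cut' := ⟨D', c2⟩, tT := htT, sT := hsT, uT := huT, vT := hvT,
      cov := hcov, ts := hst.symm, tu := hut.symm, tv := Ne.symm hvt, su := hus.symm,
      sv := Ne.symm hvs, uv := Ne.symm hvu, nt := nt, ns := ns, nu := nu, nv := nv, we := hwe,
      wg := hgw.symm, wf := hfw.symm, wk := hkw.symm, eg := hge.symm, ef := hfe.symm,
      ek := hke.symm, gf := hfg.symm, gk := hkg.symm, fk := hkf.symm, wz := hwz, ky := hky,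
      zT := hz, yT := hy } h5

end Core
end HW

/-! ### Extending colourings: two and three vertices -/

namespace HW

/-- Colours for an edge with boundary colours `{a, b, c}` and `{a, b, d}`. -/
theorem e2 : ∀ a b c d : Fin 4, c ≠ d → ∃ x, x ≠ a ∧ x ≠ b ∧ x ≠ c ∧
    ∃ y, y ≠ a ∧ y ≠ b ∧ y ≠ d ∧ x ≠ y := by decide

/-- Colours for a triangle whose vertices see two each of three boundary colours. -/
theorem e3 : ∀ a b c : Fin 4, ∃ x, x ≠ b ∧ x ≠ c ∧ ∃ y, y ≠ a ∧ y ≠ c ∧ x ≠ y ∧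
    ∃ z, z ≠ a ∧ z ≠ b ∧ z ≠ x ∧ z ≠ y := by decide

/-- Colours for `K₄` minus the edge `uv`. -/
theorem e4 : ∀ p q c d : Fin 4, p ≠ d → ∃ x, x ≠ p ∧ x ≠ c ∧ ∃ y, y ≠ q ∧ y ≠ d ∧ x ≠ y ∧
  (∃ u, u ≠ p ∧ u ≠ q ∧ u ≠ x ∧ u ≠ y) ∧ ∃ v, v ≠ c ∧ v ≠ d ∧ v ≠ x ∧ v ≠ y := by decide
set_option synthInstance.maxHeartbeats 400000 in
set_option synthInstance.maxSize 1000 in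
/-- Colours for a hub `p` joined to a path `e, y, r, s`, with boundary colours `{a, b}`, `{b, c}`,
`{c, d}`, `{a, d}` along the path. -/
theorem e5a : ∀ a b c d : Fin 4, ∃ p e : Fin 4, e ≠ p ∧ e ≠ a ∧ e ≠ b ∧
  ∃ y, y ≠ p ∧ y ≠ e ∧ y ≠ b ∧ y ≠ c ∧
  ∃ r, r ≠ p ∧ r ≠ y ∧ r ≠ c ∧ r ≠ d ∧ ∃ s, s ≠ p ∧ s ≠ r ∧ s ≠ a ∧ s ≠ d := by decide
set_option synthInstance.maxHeartbeats 400000 in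
set_option synthInstance.maxSize 1000 in
/-- Colours for a hub `p` joined to a path `e, y, r, s`, with boundary colours `{a, b}`, `{b, c}`,
`{a, d}`, `{c, d}` along the path. -/
theorem e5b : ∀ a b c d : Fin 4, ∃ p e : Fin 4, e ≠ p ∧ e ≠ a ∧ e ≠ b ∧
  ∃ y, y ≠ p ∧ y ≠ e ∧ y ≠ b ∧ y ≠ c ∧
  ∃ r, r ≠ p ∧ r ≠ y ∧ r ≠ a ∧ r ≠ d ∧ ∃ s, s ≠ p ∧ s ≠ r ∧ s ≠ c ∧ s ≠ d := by decide

/-- Two distinct colours that exhaust the complement of `{c, d}` are determined up to order. -/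
theorem e6 : ∀ x y x' y' c d : Fin 4, x ≠ y → x' ≠ y' →
    (∀ z, z ≠ c → z ≠ d → z ≠ x → z = y) → (∀ z, z ≠ c → z ≠ d → z ≠ x' → z = y') →
    (x' = x ∧ y' = y) ∨ (x' = y ∧ y' = x) := by decide

theorem e7 : ∀ a b c : Fin 4, ∃ x, x ≠ a ∧ x ≠ b ∧ x ≠ c := by decide

theorem e8 : ∀ a b : Fin 4, ∃ x, x ≠ a ∧ x ≠ b ∧ ∃ y, y ≠ a ∧ y ≠ b ∧ x ≠ y := by decide

/-- The 4-cycle is 2-choosable (for lists inside a set of four colours). -/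
theorem c4_choose (a a' b b' c c' d d' : Fin 4) : ∃ x, x ≠ a ∧ x ≠ a' ∧ ∃ y, y ≠ b ∧ y ≠ b' ∧
    (∃ z, z ≠ c ∧ z ≠ c' ∧ z ≠ x ∧ z ≠ y) ∧ ∃ u, u ≠ d ∧ u ≠ d' ∧ u ≠ x ∧ u ≠ y := by
  by_contra hcon
  have key : ∀ x y, x ≠ a → x ≠ a' → y ≠ b → y ≠ b' →
      (∀ z, z ≠ c → z ≠ c' → z ≠ x → z = y) ∨ (∀ z, z ≠ d → z ≠ d' → z ≠ x → z = y) := by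
    intro x y h1 h2 h3 h4
    by_contra h
    push Not at h
    exact hcon ⟨x, h1, h2, y, h3, h4, h.1, h.2⟩
  obtain ⟨x1, p1, q1, x2, p2, q2, hx⟩ := e8 a a'
  obtain ⟨y1, r1, s1, y2, r2, s2, hy⟩ := e8 b b'
  have hne : ∀ x, x ≠ a → x ≠ a' → x ≠ b → x ≠ b' → False := by
    intro x h1 h2 h3 h4
    obtain ⟨z, hz⟩ := e7 c c' x
    obtain ⟨u, hu⟩ := e7 d d' x
    rcases key x x h1 h2 h3 h4 with h | h
    · exact hz.2.2 (h z hz.1 hz.2.1 hz.2.2)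
    · exact hu.2.2 (h u hu.1 hu.2.1 hu.2.2)
  have n11 : x1 ≠ y1 := fun e => hne x1 p1 q1 (e ▸ r1) (e ▸ s1)
  have n12 : x1 ≠ y2 := fun e => hne x1 p1 q1 (e ▸ r2) (e ▸ s2)
  have n21 : x2 ≠ y1 := fun e => hne x2 p2 q2 (e ▸ r1) (e ▸ s1)
  have i1 : ¬ ((x1 = x1 ∧ y2 = y1) ∨ (x1 = y1 ∧ y2 = x1)) := by
    rintro (h | h)
    · exact hy h.2.symm
    · exact n11 h.1
  have i2 : ¬ ((x2 = x1 ∧ y1 = y1) ∨ (x2 = y1 ∧ y1 = x1)) := by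
    rintro (h | h)
    · exact hx h.1.symm
    · exact n21 h.1
  have i3 : ¬ ((x2 = x1 ∧ y1 = y2) ∨ (x2 = y2 ∧ y1 = x1)) := by
    rintro (h | h)
    · exact hx h.1.symm
    · exact n11 h.2.symm
  rcases key x1 y1 p1 q1 r1 s1 with h1 | h1 <;> rcases key x1 y2 p1 q1 r2 s2 with h2 | h2 <;>
    rcases key x2 y1 p2 q2 r1 s1 with h3 | h3
  · exact i1 (e6 _ _ _ _ _ _ n11 n12 h1 h2)
  · exact i1 (e6 _ _ _ _ _ _ n11 n12 h1 h2)
  · exact i2 (e6 _ _ _ _ _ _ n11 n21 h1 h3)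
  · exact i3 (e6 _ _ _ _ _ _ n12 n21 h2 h3)
  · exact i3 (e6 _ _ _ _ _ _ n12 n21 h2 h3)
  · exact i2 (e6 _ _ _ _ _ _ n11 n21 h1 h3)
  · exact i1 (e6 _ _ _ _ _ _ n11 n12 h1 h2)
  · exact i1 (e6 _ _ _ _ _ _ n11 n12 h1 h2)

variable {V : Type} [DecidableEq V] [Fintype V] {G : SimpleGraph V}

namespace Core

variable {A T : Finset V} (h : Core G A T)
include h

/-- A 4-colouring of `G - A` does not extend to `A`. -/
theorem ext (hG : IsHajos G) {c : V → Fin 4} (hc : ProperOn G (Finset.univ \ A) c) (f : V → Fin 4)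
    (h1 : ∀ x ∈ A, ∀ y ∈ A, G.Adj x y → f x ≠ f y)
    (h2 : ∀ x ∈ A, ∀ t ∈ tn G T {x}, f x ≠ c t) : False := by
  refine IsHajos.not_proper hG (c := fun z => if z ∈ A then f z else c z) fun x y hxy => ?_
  have key : ∀ x y, x ∈ A → y ∉ A → G.Adj x y → f x ≠ c y := fun x y hx hy hxy => by
    rcases h.nbr x hx y hxy with h3 | h3
    · exact absurd h3 hy
    · exact h2 x hx y (mem_tn1.2 ⟨h3, hxy⟩)
  by_cases hx : x ∈ A <;> by_cases hy : y ∈ A <;> simp only [hx, hy, if_true, if_false]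
  · exact h1 x hx y hy hxy
  · exact key x y hx hy hxy
  · exact (key y x hy hx hxy.symm).symm
  · exact hc x (by simp [hx]) y (by simp [hy]) hxy

/-- Each of the two adjacent vertices of `A` has one private neighbour in `T`, and `G - A` is
coloured with an additional edge between these two. -/
theorem case2 (hG : IsHajos G) (hA : A.card = 2) : False := by
  obtain ⟨u, v, huv, rfl⟩ := Finset.card_eq_two.1 hA
  have hT4 := h.T4
  have hu := h.deg_le (v := u) (by simp) (Z := {v}) (fun y hy e => by
    simp only [Finset.mem_insert, Finset.mem_singleton] at hy ⊢
    rcases hy with rfl | rfl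
    · exact absurd rfl e.ne
    · rfl)
  have hv := h.deg_le (v := v) (by simp) (Z := {u}) (fun y hy e => by
    simp only [Finset.mem_insert, Finset.mem_singleton] at hy ⊢
    rcases hy with rfl | rfl
    · rfl
    · exact absurd rfl e.ne)
  have hadj : G.Adj u v := by
    obtain ⟨a, ha, b, hb, hba, hab⟩ := h.connA.edge (Y := {u}) (by simp) (by simp) (by
      intro e
      have : v ∈ ({u} : Finset V) := by rw [e]; simp
      simp at this; exact huv this.symm)
    simp at ha hb hba; subst ha
    rcases hb with rfl | rfl
    · exact absurd rfl hba
    · exact hab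
  have k1 := h.K1 {u} (by simp) {v} (by simp) (by simpa using huv) (conn_single u) (conn_single v)
  have k2 := h.tn_union_le {u} {v}
  simp only [Finset.card_singleton] at hu hv
  have hi : (tn G T {u} ∩ tn G T {v}).card = 2 := by omega
  obtain ⟨a, b, hab, hi'⟩ := Finset.card_eq_two.1 hi
  have hd1 : (tn G T {u} \ tn G T {v}).card = 1 := by
    have := Finset.card_sdiff_add_card_inter (tn G T {u}) (tn G T {v}); omega
  have hd2 : (tn G T {v} \ tn G T {u}).card = 1 := by
    have := Finset.card_sdiff_add_card_inter (tn G T {v}) (tn G T {u})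
    rw [Finset.inter_comm] at this; omega
  obtain ⟨p, hp⟩ := Finset.card_eq_one.1 hd1
  obtain ⟨q, hq⟩ := Finset.card_eq_one.1 hd2
  have hp' : p ∈ tn G T {u} \ tn G T {v} := by rw [hp]; simp
  have hq' : q ∈ tn G T {v} \ tn G T {u} := by rw [hq]; simp
  rw [Finset.mem_sdiff] at hp' hq'
  have hpq : p ≠ q := fun e => hp'.2 (e ▸ hq'.1)
  have pA : p ∉ ({u, v} : Finset V) := fun hh => h.disj p hh (tn_sub hp'.1)
  have qA : q ∉ ({u, v} : Finset V) := fun hh => h.disj q hh (tn_sub hq'.1)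
  obtain ⟨c, hc, hcpq⟩ := IsHajos.color_add hG (X := Finset.univ \ {u, v}) ⟨u, by simp⟩ (u := p)
    (v := q) (by simpa using pA) (by simpa using qA) hpq (P := {p, u, v, q})
    ((((conn_single (G := G) q).insert (a := v) ⟨q, by simp, (mem_tn1.1 hq'.1).2⟩).insert (a := u)
      ⟨v, by simp, hadj⟩).insert (a := p) ⟨u, by simp, (mem_tn1.1 hp'.1).2.symm⟩) (by simp) (by simp)
    (by
      intro x hx hx'
      simp only [Finset.mem_insert, Finset.mem_singleton, Finset.mem_sdiff] at hx hx'
      rcases hx with hx | hx | hx | hx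
      · exact .inl hx
      · exact absurd (.inl hx) hx'.2
      · exact absurd (.inr hx) hx'.2
      · exact .inr hx)
  obtain ⟨x, xa, xb, xp, y, ya, yb, yq, hxy⟩ := e2 (c a) (c b) (c p) (c q) hcpq
  have mu : ∀ t ∈ tn G T {u}, t = a ∨ t = b ∨ t = p := by
    intro t ht
    by_cases htv : t ∈ tn G T {v}
    · have := Finset.mem_inter.2 ⟨ht, htv⟩
      rw [hi'] at this; simp at this; rcases this with e | e
      · exact .inl e
      · exact .inr (.inl e)
    · have := Finset.mem_sdiff.2 ⟨ht, htv⟩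
      rw [hp] at this; simp at this; exact .inr (.inr this)
  have mv : ∀ t ∈ tn G T {v}, t = a ∨ t = b ∨ t = q := by
    intro t ht
    by_cases htv : t ∈ tn G T {u}
    · have := Finset.mem_inter.2 ⟨htv, ht⟩
      rw [hi'] at this; simp at this; rcases this with e | e
      · exact .inl e
      · exact .inr (.inl e)
    · have := Finset.mem_sdiff.2 ⟨ht, htv⟩
      rw [hq] at this; simp at this; exact .inr (.inr this)
  refine h.ext hG hc (fun z => if z = u then x else y) ?_ ?_
  · intro s hs t ht hst
    simp only [Finset.mem_insert, Finset.mem_singleton] at hs ht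
    rcases hs with rfl | rfl <;> rcases ht with rfl | rfl
    · exact absurd rfl hst.ne
    · simp [huv.symm, hxy]
    · simp [huv.symm, hxy.symm]
    · exact absurd rfl hst.ne
  · intro s hs t ht
    simp only [Finset.mem_insert, Finset.mem_singleton] at hs
    rcases hs with rfl | rfl
    · rcases mu t ht with rfl | rfl | rfl <;> simpa
    · rcases mv t ht with rfl | rfl | rfl <;> simpa [huv.symm]

/-- For three vertices, `A` is a triangle, `|T| = 3`, and any colouring of `G - A` extends. -/
theorem case3 (hG : IsHajos G) (hA : A.card = 3) : False := by
  obtain ⟨u, v, w, huv, huw, hvw, rfl⟩ := Finset.card_eq_three.1 hA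
  have hT3 := h.T3
  have hT4 := h.T4
  have key : ∀ x y z, ({x, y, z} : Finset V) = {u, v, w} → x ≠ y → x ≠ z → y ≠ z →
      (tn G T {x}).card = 2 ∧ G.Adj x y ∧ T = tn G T {x} ∪ tn G T {y} := by
    intro x y z e hxy hxz hyz
    rw [← e] at h
    have h1 := h.tn_le (v := x) (by rw [e, hA]) (by simp)
    have h2 := h.deg_le (v := x) (by simp) (Z := {y, z}) (fun a ha e => by
      simp only [Finset.mem_insert, Finset.mem_singleton] at ha ⊢
      rcases ha with rfl | ha
      · exact absurd rfl e.ne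
      · exact ha)
    rw [Finset.card_pair hyz] at h2
    refine ⟨by omega, ?_, ?_⟩
    · by_contra hn
      have h2 := h.deg_le (v := x) (by simp) (Z := {z}) (fun a ha hxa => by
        simp only [Finset.mem_insert, Finset.mem_singleton] at ha ⊢
        rcases ha with rfl | rfl | ha
        · exact absurd rfl hxa.ne
        · exact absurd hxa hn
        · exact ha)
      rw [Finset.card_singleton] at h2
      omega
    · have h3 := h.tn_erase (v := z) (by rw [e, hA]) (by simp)
      have e2 : ({x, y, z} : Finset V).erase z = {x} ∪ {y} := by
        ext a; simp; constructor
        · rintro ⟨n, r | r | r⟩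
          · exact .inl r
          · exact .inr r
          · exact absurd r n
        · rintro (rfl | rfl)
          · exact ⟨hxz, .inl rfl⟩
          · exact ⟨hyz, .inr (.inl rfl)⟩
      rw [e2, tn_union] at h3
      exact h3.symm
  have k1 := key u v w rfl huv huw hvw
  have k2 := key v w u (by ext a; simp; grind) hvw huv.symm huw.symm
  have k3 := key w u v (by ext a; simp; grind) huw.symm hvw.symm huv
  clear key
  obtain ⟨cu, auv, T1⟩ := k1
  obtain ⟨cv, avw, T2⟩ := k2
  obtain ⟨cw, awu, T3'⟩ := k3
  have hTc : T.card = 3 := by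
    by_contra hne
    have : T.card = 4 := by omega
    have d : ∀ X Y : Finset V, T = X ∪ Y → X.card = 2 → Y.card = 2 → ∀ t, t ∈ X → t ∉ Y := by
      intro X Y e cX cY t tX tY
      have := Finset.card_union_add_card_inter X Y
      rw [← e] at this
      have : 0 < (X ∩ Y).card := Finset.card_pos.2 ⟨t, by simp [tX, tY]⟩
      omega
    obtain ⟨t, ht⟩ := Finset.card_pos.1 (show 0 < (tn G T {u}).card by omega)
    have hv' := d _ _ T1 cu cv t ht
    have hw' : t ∉ tn G T {w} := fun hw' => d _ _ T3' cw cu t hw' ht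
    have : t ∈ T := tn_sub ht
    rw [T2] at this
    simp at this
    rcases this with e | e
    · exact hv' e
    · exact hw' e
  have m : ∀ x, (tn G T {x}).card = 2 → ∃ t, T \ tn G T {x} = {t} := by
    intro x hx
    apply Finset.card_eq_one.1
    have := Finset.card_sdiff_of_subset (tn_sub (G := G) (T := T) (X := {x}))
    omega
  obtain ⟨a, ha⟩ := m u cu
  obtain ⟨b, hb⟩ := m v cv
  obtain ⟨d, hd⟩ := m w cw
  obtain ⟨aT, au⟩ := Finset.mem_sdiff.1 (show a ∈ T \ tn G T {u} by rw [ha]; simp)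
  obtain ⟨bT, bv⟩ := Finset.mem_sdiff.1 (show b ∈ T \ tn G T {v} by rw [hb]; simp)
  obtain ⟨dT, dw⟩ := Finset.mem_sdiff.1 (show d ∈ T \ tn G T {w} by rw [hd]; simp)
  have hab : a ≠ b := by
    rintro rfl
    rw [T1, Finset.mem_union] at aT
    exact aT.elim au bv
  have hbd : b ≠ d := by
    rintro rfl
    rw [T2, Finset.mem_union] at bT
    exact bT.elim bv dw
  have had : a ≠ d := by
    rintro rfl
    rw [T3', Finset.mem_union] at aT
    exact aT.elim dw au
  have hT : ({a, b, d} : Finset V) = T := Finset.eq_of_subset_of_card_le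
    (by simp only [Finset.insert_subset_iff, Finset.singleton_subset_iff]; exact ⟨aT, bT, dT⟩)
    (by rw [hTc, Finset.card_eq_three.2 ⟨a, b, d, hab, had, hbd, rfl⟩])
  have mT : ∀ x t, t ∈ tn G T {x} → t = a ∨ t = b ∨ t = d := by
    intro x t ht
    have := tn_sub ht
    rw [← hT] at this
    simpa using this
  obtain ⟨c, hc⟩ := IsHajos.color hG (X := Finset.univ \ {u, v, w}) ⟨u, by simp⟩
  obtain ⟨x, xb, xd, y, ya, yd, hxy, z, za, zb, zx, zy⟩ := e3 (c a) (c b) (c d)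
  refine h.ext hG hc (fun s => if s = u then x else if s = v then y else z) ?_ ?_
  · intro s hs t ht hst
    simp only [Finset.mem_insert, Finset.mem_singleton] at hs ht
    rcases hs with rfl | rfl | rfl <;> rcases ht with rfl | rfl | rfl <;>
      first
      | exact absurd rfl hst.ne
      | simp [huv, huw, hvw, huv.symm, huw.symm, hvw.symm, hxy, zx, zy, hxy.symm, zx.symm, zy.symm]
  · intro s hs t ht
    simp only [Finset.mem_insert, Finset.mem_singleton] at hs
    rcases hs with rfl | rfl | rfl <;> rcases mT _ t ht with rfl | rfl | rfl <;>
      first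
      | exact absurd ht (by assumption)
      | simpa [huv.symm, huw.symm, hvw.symm]

end Core

end HW

/-! ### Extending colourings: four vertices -/

namespace HW

variable {V : Type} [DecidableEq V] [Fintype V] {G : SimpleGraph V}

namespace Core

variable {A T : Finset V} (h : Core G A T)
include h

/-- The attachments of `x`, `y` and `r` to `T` in a four-vertex `A` cut by `x`, `y`. -/
theorem case4_aux {x y l r : V} (k : Cut G A x y {l} {r}) (hT : T.card = 4)
    (hl : (tn G T {l}).card = 2) (hr : (tn G T {r}).card = 2)
    (hlx : (tn G T {l, x}).card = 3) (hly : (tn G T {l, y}).card = 3) :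
    ∃ c d, c ≠ d ∧ tn G T {r} = {c, d} ∧ c ∈ tn G T {x} ∧ d ∈ tn G T {y} ∧ c ∉ tn G T {l} ∧
      d ∉ tn G T {l} := by
  have hc4 : A.card = 4 := by have := k.card; simpa using this
  have one : ∀ z, (tn G T {l, z}).card = 3 → ∃ c, tn G T {z} \ tn G T {l} = {c} := by
    intro z hz
    apply Finset.card_eq_one.1
    have e : tn G T {l, z} = tn G T {l} ∪ tn G T {z} := by
      rw [← tn_union]; rfl
    have := Finset.card_sdiff_add_card (tn G T {z}) (tn G T {l})
    rw [Finset.union_comm, ← e] at this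
    omega
  obtain ⟨c, hc⟩ := one x hlx
  obtain ⟨d, hd⟩ := one y hly
  obtain ⟨cx, cl⟩ := Finset.mem_sdiff.1 (show c ∈ tn G T {x} \ tn G T {l} by rw [hc]; simp)
  obtain ⟨dy, dl⟩ := Finset.mem_sdiff.1 (show d ∈ tn G T {y} \ tn G T {l} by rw [hd]; simp)
  have mx : ∀ t ∈ tn G T {x}, t ∉ tn G T {l} → t = c := fun t h1 h2 => by
    have := Finset.mem_sdiff.2 ⟨h1, h2⟩
    rw [hc] at this; simpa using this
  have my : ∀ t ∈ tn G T {y}, t ∉ tn G T {l} → t = d := fun t h1 h2 => by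
    have := Finset.mem_sdiff.2 ⟨h1, h2⟩
    rw [hd] at this; simpa using this
  have lA : l ∈ A := k.LA (by simp)
  have rA : r ∈ A := k.RA (by simp)
  have er : ∀ v ∈ A, ∀ t ∈ T, ∃ z, z ≠ v ∧ t ∈ tn G T {z} ∧ (z = x ∨ z = y ∨ z = l ∨ z = r) := by
    intro v hv t ht
    rw [← h.tn_erase (by omega) hv] at ht
    obtain ⟨tT, z, hz, hzt⟩ := mem_tn.1 ht
    obtain ⟨hz1, hz2⟩ := Finset.mem_erase.1 hz
    have := k.cov z hz2
    simp only [Finset.mem_singleton] at this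
    exact ⟨z, hz1, mem_tn1.2 ⟨tT, hzt⟩, this⟩
  have hcd : c ≠ d := by
    rintro rfl
    have : T ⊆ insert c (tn G T {l}) := by
      intro t ht
      rw [Finset.mem_insert]
      by_cases htl : t ∈ tn G T {l}
      · exact .inr htl
      left
      obtain ⟨z, hz, htz, e⟩ := er r rA t ht
      rcases e with rfl | rfl | rfl | rfl
      · exact mx t htz htl
      · exact my t htz htl
      · exact absurd htz htl
      · exact absurd rfl hz
    have := Finset.card_le_card this
    have := Finset.card_insert_le c (tn G T {l})
    omega
  have cr : c ∈ tn G T {r} := by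
    obtain ⟨z, hz, htz, e⟩ := er x k.hx c (tn_sub cx)
    rcases e with rfl | rfl | rfl | rfl
    · exact absurd rfl hz
    · exact absurd (my c htz cl) hcd
    · exact absurd htz cl
    · exact htz
  have dr : d ∈ tn G T {r} := by
    obtain ⟨z, hz, htz, e⟩ := er y k.hy d (tn_sub dy)
    rcases e with rfl | rfl | rfl | rfl
    · exact absurd (mx d htz dl).symm hcd
    · exact absurd rfl hz
    · exact absurd htz dl
    · exact htz
  refine ⟨c, d, hcd, (Finset.eq_of_subset_of_card_le ?_ ?_).symm, cx, dy, cl, dl⟩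
  · simp only [Finset.insert_subset_iff, Finset.singleton_subset_iff]; exact ⟨cr, dr⟩
  · rw [Finset.card_pair hcd, hr]

/-- Four vertices, one of them adjacent to the three others: `A` is `K₄` minus an edge, and `G - A`
is coloured with an additional edge between two vertices of `T`. -/
theorem case4_wheel (hG : IsHajos G) (hA : A.card = 4) {x : V} (hx : x ∈ A)
    (hd : 3 ≤ (an G A x).card) : False := by
  obtain ⟨y, L, R, k⟩ := h.exists_cut (by omega) hx hd
  have hT4 := h.T4
  have hLR := k.card
  have hLp := k.posL
  have hRp := k.swap.posL
  have hL2 := h.tnL1 k (by omega)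
  have hR2 := h.tnL1 k.swap (by omega)
  obtain ⟨l, rfl⟩ := Finset.card_eq_one.1 (show L.card = 1 by omega)
  obtain ⟨r, rfl⟩ := Finset.card_eq_one.1 (show R.card = 1 by omega)
  have lA : l ∈ A := k.LA (by simp)
  have rA : r ∈ A := k.RA (by simp)
  have xl : x ≠ l := by simpa using k.xL
  have yl : y ≠ l := by simpa using k.yL
  have xr : x ≠ r := by simpa using k.xR
  have yr : y ≠ r := by simpa using k.yR
  have lr : l ≠ r := by simpa using k.dis
  have xy := k.ne
  have nlr : ¬ G.Adj l r := k.noE l (by simp) r (by simp)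
  have cov : ∀ z ∈ A, z = x ∨ z = y ∨ z = l ∨ z = r := by simpa using k.cov
  have axl : G.Adj x l := by simpa using k.axL
  have axr : G.Adj x r := by simpa using k.axR
  have ayl : G.Adj y l := by simpa using k.ayL
  have ayr : G.Adj y r := by simpa using k.ayR
  have axy : G.Adj x y := by
    by_contra hn
    have : an G A x ⊆ {l, r} := by
      intro z hz
      obtain ⟨hz, hxz⟩ := mem_an.1 hz
      simp only [Finset.mem_insert, Finset.mem_singleton]
      rcases cov z hz with rfl | rfl | e | e
      · exact absurd rfl hxz.ne
      · exact absurd hxz hn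
      · exact .inl e
      · exact .inr e
    have := Finset.card_le_card this
    rw [Finset.card_pair lr] at this
    omega
  have ge : ∀ a b c d, a ≠ b → c ≠ d → a ∈ A → b ∈ A →
      (∀ z ∈ A, z = a ∨ z = b ∨ z = c ∨ z = d) → 3 ≤ (tn G T {a, b}).card := by
    intro a b c d hab hcd ha hb hcov
    have := h.tn_ge (B := {a, b}) (Z := {c, d})
      (by simp only [Finset.insert_subset_iff, Finset.singleton_subset_iff]; exact ⟨ha, hb⟩)
      (by rw [Finset.card_pair hab]) (by rw [Finset.card_pair hab, hA])
      (fun s _ z hz _ => by have := hcov z hz; simpa [or_assoc] using this)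
    rw [Finset.card_pair hcd] at this
    omega
  have g1 := ge l x y r xl.symm yr lA k.hx (fun z hz => by
    rcases cov z hz with e | e | e | e <;> simp [e])
  have g2 := ge l y x r yl.symm xr lA k.hy (fun z hz => by
    rcases cov z hz with e | e | e | e <;> simp [e])
  have g3 := ge r x y l xr.symm yl rA k.hx (fun z hz => by
    rcases cov z hz with e | e | e | e <;> simp [e])
  have g4 := ge r y x l yr.symm xl rA k.hy (fun z hz => by
    rcases cov z hz with e | e | e | e <;> simp [e])
  have cc : ∀ a b, G.Adj a b → Conn G {a, b} := fun a b hab =>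
    (conn_single b).insert ⟨b, by simp, hab⟩
  have s1 := h.K1 {l, x} (by grind) {r, y} (by have := k.hy; grind)
    (by simp; exact ⟨⟨lr, yl.symm⟩, xr, xy⟩) (cc _ _ axl.symm) (cc _ _ ayr.symm)
  have s2 := h.K1 {l, y} (by have := k.hy; grind) {r, x} (by grind)
    (by simp; exact ⟨⟨lr, xl.symm⟩, yr, xy.symm⟩) (cc _ _ ayl.symm) (cc _ _ axr.symm)
  have u1 := h.tn_union_le {l, x} {r, y}
  have u2 := h.tn_union_le {l, y} {r, x}
  obtain ⟨c, d, hcd, er, cx, dy, cl, dl⟩ := h.case4_aux k (by omega) hL2 hR2 (by omega) (by omega)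
  obtain ⟨p, q, hpq, el, px, qy, pr, qr⟩ :=
    h.case4_aux k.swap (by omega) hR2 hL2 (by omega) (by omega)
  have pd : p ≠ d := by rintro rfl; exact pr (by rw [er]; simp)
  have pc : p ≠ c := by rintro rfl; exact pr (by rw [er]; simp)
  have qd : q ≠ d := by rintro rfl; exact qr (by rw [er]; simp)
  have ex : ({p, c} : Finset V) = tn G T {x} := Finset.eq_of_subset_of_card_le
    (by simp only [Finset.insert_subset_iff, Finset.singleton_subset_iff]; exact ⟨px, cx⟩)
    (by rw [Finset.card_pair pc]; exact h.tn_le (by omega) hx)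
  have ey : ({q, d} : Finset V) = tn G T {y} := Finset.eq_of_subset_of_card_le
    (by simp only [Finset.insert_subset_iff, Finset.singleton_subset_iff]; exact ⟨qy, dy⟩)
    (by rw [Finset.card_pair qd]; exact h.tn_le (by omega) k.hy)
  have pA : p ∉ A := fun e => h.disj p e (tn_sub px)
  have dA : d ∉ A := fun e => h.disj d e (tn_sub dy)
  obtain ⟨f, hf, fpd⟩ := IsHajos.color_add hG (X := Finset.univ \ A) ⟨x, by simp [hx]⟩ (u := p)
    (v := d) (by simpa using pA) (by simpa using dA) pd (P := {p, x, y, d})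
    ((((conn_single (G := G) d).insert (a := y) ⟨d, by simp, (mem_tn1.1 dy).2⟩).insert (a := x)
      ⟨y, by simp, axy⟩).insert (a := p) ⟨x, by simp, (mem_tn1.1 px).2.symm⟩) (by simp) (by simp)
    (by
      intro z hz hz'
      simp only [Finset.mem_insert, Finset.mem_singleton, Finset.mem_sdiff] at hz hz'
      rcases hz with hz | hz | hz | hz
      · exact .inl hz
      · exact absurd (hz ▸ hx) hz'.2
      · exact absurd (hz ▸ k.hy) hz'.2
      · exact .inr hz)
  obtain ⟨X, Xp, Xc, Y, Yq, Yd, XY, ⟨U, Up, Uq, UX, UY⟩, W, Wc, Wd, WX, WY⟩ :=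
    e4 (f p) (f q) (f c) (f d) fpd
  refine h.ext hG hf (fun s => if s = x then X else if s = y then Y else if s = l then U else W)
    ?_ ?_
  · intro s hs t ht hst
    rcases cov s hs with rfl | rfl | rfl | rfl <;> rcases cov t ht with rfl | rfl | rfl | rfl <;>
      first
      | exact absurd rfl hst.ne
      | exact absurd hst nlr
      | exact absurd hst.symm nlr
      | simp [xl, yl, xr, yr, lr, xy, xl.symm, yl.symm, xr.symm, yr.symm, lr.symm, xy.symm,
          XY, XY.symm, UX, UX.symm, UY, UY.symm, WX, WX.symm, WY, WY.symm]
  · intro s hs t ht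
    rcases cov s hs with rfl | rfl | rfl | rfl
    · rw [← ex] at ht
      simp only [Finset.mem_insert, Finset.mem_singleton] at ht
      rcases ht with rfl | rfl <;> simpa
    · rw [← ey] at ht
      simp only [Finset.mem_insert, Finset.mem_singleton] at ht
      rcases ht with rfl | rfl <;> simpa [xy.symm]
    · rw [el] at ht
      simp only [Finset.mem_insert, Finset.mem_singleton] at ht
      rcases ht with rfl | rfl <;> simpa [xl.symm, yl.symm]
    · rw [er] at ht
      simp only [Finset.mem_insert, Finset.mem_singleton] at ht
      rcases ht with rfl | rfl <;> simpa [xr.symm, yr.symm, lr.symm]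

/-- In the remaining case `A` is a 4-cycle, each vertex sees two colours of the boundary, and the
2-choosability of the 4-cycle applies. -/
theorem case4 (hG : IsHajos G) (hA : A.card = 4) : False := by
  by_cases hd : ∃ x ∈ A, 3 ≤ (an G A x).card
  · obtain ⟨x, hx, hd⟩ := hd
    exact h.case4_wheel hG hA hx hd
  push Not at hd
  have h2 : ∀ x ∈ A, (an G A x).card = 2 ∧ (tn G T {x}).card = 2 := by
    intro x hx
    have h1 := h.tn_le (by omega) hx
    have h2 := h.deg_an hx
    have h3 := hd x hx
    omega
  obtain ⟨w, hw⟩ := Finset.card_pos.1 (show 0 < A.card by omega)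
  obtain ⟨p, q, pq, ew⟩ := Finset.card_eq_two.1 (h2 w hw).1
  obtain ⟨pA, wp⟩ := mem_an.1 (show p ∈ an G A w by rw [ew]; simp)
  obtain ⟨qA, wq⟩ := mem_an.1 (show q ∈ an G A w by rw [ew]; simp)
  have c3 : ({w, p, q} : Finset V).card = 3 :=
    Finset.card_eq_three.2 ⟨w, p, q, wp.ne, wq.ne, pq, rfl⟩
  obtain ⟨r, hr⟩ : ∃ r, A \ {w, p, q} = {r} := by
    apply Finset.card_eq_one.1
    rw [Finset.card_sdiff_of_subset (by
      simp only [Finset.insert_subset_iff, Finset.singleton_subset_iff]; exact ⟨hw, pA, qA⟩)]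
    omega
  obtain ⟨rA, hr'⟩ := Finset.mem_sdiff.1 (show r ∈ A \ {w, p, q} by rw [hr]; simp)
  simp only [Finset.mem_insert, Finset.mem_singleton, not_or] at hr'
  obtain ⟨rw', rp, rq⟩ := hr'
  have cov : ∀ z ∈ A, z = w ∨ z = p ∨ z = q ∨ z = r := by
    intro z hz
    by_cases hz' : z ∈ ({w, p, q} : Finset V)
    · simp only [Finset.mem_insert, Finset.mem_singleton] at hz'
      rcases hz' with e | e | e <;> simp [e]
    · have := Finset.mem_sdiff.2 ⟨hz, hz'⟩
      rw [hr] at this; simp at this; simp [this]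
  have nwr : ¬ G.Adj w r := fun e => by
    have := mem_an.2 ⟨rA, e⟩
    rw [ew] at this; simp at this
    exact this.elim rp rq
  have er : an G A r = {p, q} := by
    refine Finset.eq_of_subset_of_card_le ?_ (by rw [Finset.card_pair pq, (h2 r rA).1])
    intro z hz
    obtain ⟨hz, hrz⟩ := mem_an.1 hz
    simp only [Finset.mem_insert, Finset.mem_singleton]
    rcases cov z hz with rfl | e | e | rfl
    · exact absurd hrz.symm nwr
    · exact .inl e
    · exact .inr e
    · exact absurd rfl hrz.ne
  obtain ⟨-, arp⟩ := mem_an.1 (show p ∈ an G A r by rw [er]; simp)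
  have npq : ¬ G.Adj p q := fun e => by
    have : ({w, r, q} : Finset V) ⊆ an G A p := by
      simp only [Finset.insert_subset_iff, Finset.singleton_subset_iff, mem_an]
      exact ⟨⟨hw, wp.symm⟩, ⟨rA, arp.symm⟩, qA, e⟩
    have := Finset.card_le_card this
    rw [Finset.card_eq_three.2 ⟨w, r, q, Ne.symm rw', wq.ne, rq, rfl⟩, (h2 p pA).1] at this
    omega
  obtain ⟨a, a', -, ea⟩ := Finset.card_eq_two.1 (h2 w hw).2
  obtain ⟨b, b', -, eb⟩ := Finset.card_eq_two.1 (h2 r rA).2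
  obtain ⟨c, c', -, ec⟩ := Finset.card_eq_two.1 (h2 p pA).2
  obtain ⟨d, d', -, ed⟩ := Finset.card_eq_two.1 (h2 q qA).2
  obtain ⟨f, hf⟩ := IsHajos.color hG (X := Finset.univ \ A) ⟨w, by simp [hw]⟩
  obtain ⟨x, xa, xa', y, yb, yb', ⟨z, zc, zc', zx, zy⟩, u, ud, ud', ux, uy⟩ :=
    c4_choose (f a) (f a') (f b) (f b') (f c) (f c') (f d) (f d')
  have wp' := wp.ne
  have wq' := wq.ne
  refine h.ext hG hf (fun s => if s = w then x else if s = r then y else if s = p then z else u)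
    ?_ ?_
  · intro s hs t ht hst
    rcases cov s hs with rfl | rfl | rfl | rfl <;> rcases cov t ht with rfl | rfl | rfl | rfl <;>
      first
      | exact absurd rfl hst.ne
      | exact absurd hst nwr
      | exact absurd hst.symm nwr
      | exact absurd hst npq
      | exact absurd hst.symm npq
      | simp [wp', wp'.symm, wq', wq'.symm, pq, Ne.symm pq, rw', Ne.symm rw', rp, Ne.symm rp, rq,
          Ne.symm rq, zx, zx.symm, zy, zy.symm, ux, ux.symm, uy, uy.symm]
  · intro s hs t ht
    rcases cov s hs with rfl | rfl | rfl | rfl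
    · rw [ea] at ht
      simp only [Finset.mem_insert, Finset.mem_singleton] at ht
      rcases ht with rfl | rfl <;> simpa
    · rw [ec] at ht
      simp only [Finset.mem_insert, Finset.mem_singleton] at ht
      rcases ht with rfl | rfl <;> simpa [wp'.symm, Ne.symm rp]
    · rw [ed] at ht
      simp only [Finset.mem_insert, Finset.mem_singleton] at ht
      rcases ht with rfl | rfl <;> simpa [wq'.symm, Ne.symm rq, Ne.symm pq]
    · rw [eb] at ht
      simp only [Finset.mem_insert, Finset.mem_singleton] at ht
      rcases ht with rfl | rfl <;> simpa [rw']

end Core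

end HW

/-! ### Extending colourings: five or more vertices -/

namespace HW

variable {V : Type} [DecidableEq V] [Fintype V] {G : SimpleGraph V}

namespace Core

variable {A T : Finset V} (h : Core G A T)
include h

/-- With at least five vertices, `A` consists of four vertices with two neighbours in `T` each
and a fifth vertex adjacent to all of them. -/
theorem hub (h5 : 5 ≤ A.card) : A.card = 5 ∧ T.card = 4 ∧ ∃ p ∈ A, tn G T {p} = ∅ ∧
    ∀ v ∈ A, v ≠ p → G.Adj p v ∧ (tn G T {v}).card = 2 := by
  classical
  have hT3 := h.T3
  have hT4 := h.T4
  have h02 : ∀ v ∈ A, tn G T {v} ≠ ∅ → (tn G T {v}).card = 2 := by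
    intro v hv hne
    have h1 := h.tn_le (by omega) hv
    have h2 := Finset.card_pos.2 (Finset.nonempty_iff_ne_empty.2 hne)
    by_contra h3
    obtain ⟨t, ht⟩ := Finset.card_eq_one.1 (show (tn G T {v}).card = 1 by omega)
    exact h.no_single h5 hv ht
  have hsum := Finset.sum_card_bipartiteAbove_eq_sum_card_bipartiteBelow (s := A) (t := T)
    (fun v t => G.Adj v t)
  have e1 : ∀ v, Finset.bipartiteAbove (fun v t => G.Adj v t) T v = tn G T {v} := by
    intro v; ext t; simp [Finset.mem_bipartiteAbove, mem_tn1]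
  have e2 : ∀ t, Finset.bipartiteBelow (fun v t => G.Adj v t) A t = an G A t := by
    intro t; ext v; simp [Finset.mem_bipartiteBelow, mem_an, G.adj_comm]
  simp only [e1, e2] at hsum
  rw [Finset.sum_congr rfl (fun t ht => h.an_card h5 ht)] at hsum
  set Q := A.filter fun v => tn G T {v} ≠ ∅ with hQ
  set U := A.filter fun v => tn G T {v} = ∅ with hU
  have hs2 : ∑ v ∈ A, (tn G T {v}).card = Q.card * 2 := by
    rw [← Finset.sum_filter_add_sum_filter_not A (fun v => tn G T {v} ≠ ∅)]
    rw [Finset.sum_congr rfl (fun v hv => h02 v (Finset.mem_filter.1 hv).1 (Finset.mem_filter.1 hv).2)]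
    rw [Finset.sum_eq_zero (s := A.filter fun v => ¬ tn G T {v} ≠ ∅) (fun v hv => by
      have := (Finset.mem_filter.1 hv).2
      rw [not_not] at this
      simp [this])]
    simp [hQ]
  rw [hs2, Finset.sum_const, smul_eq_mul] at hsum
  have hQT : Q.card = T.card := by omega
  have hUQ : U.card + Q.card = A.card :=
    Finset.card_filter_add_card_filter_not (s := A) (fun v => tn G T {v} = ∅)
  have hU1 : U.card = 1 := by
    by_contra hne
    have h1 := h.tn_ge (B := U) (Z := Q) (Finset.filter_subset _ _) (by omega) (by omega)
      (fun b _ y hy _ => by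
        by_cases e : tn G T {y} = ∅
        · left; simp [hU, hy, e]
        · right; simp [hQ, hy, e])
    have h2 : tn G T U = ∅ := by
      rw [Finset.eq_empty_iff_forall_notMem]
      intro t ht
      obtain ⟨tT, x, hx, hxt⟩ := mem_tn.1 ht
      have h3 := (Finset.mem_filter.1 hx).2
      have : t ∈ tn G T {x} := mem_tn1.2 ⟨tT, hxt⟩
      rw [h3] at this
      simp at this
    rw [h2] at h1
    simp at h1
    omega
  obtain ⟨p, hp⟩ := Finset.card_eq_one.1 hU1
  obtain ⟨pA, hp0⟩ := Finset.mem_filter.1 (show p ∈ U by rw [hp]; simp)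
  refine ⟨by omega, by omega, p, pA, hp0, fun v hv hvp => ⟨?_, h02 v hv fun e => ?_⟩⟩
  · by_contra hn
    have h1 := h.deg_an pA
    have h2 : an G A p ⊆ (A.erase p).erase v := by
      intro z hz
      obtain ⟨hz, hpz⟩ := mem_an.1 hz
      rw [Finset.mem_erase, Finset.mem_erase]
      exact ⟨fun e => hn (e ▸ hpz), hpz.ne', hz⟩
    have h3 := Finset.card_le_card h2
    rw [Finset.card_erase_of_mem (by simp [hv, hvp]), Finset.card_erase_of_mem pA] at h3
    rw [hp0] at h1
    simp at h1
    omega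
  · have : v ∈ U := by simp [hU, hv, e]
    rw [hp] at this
    exact hvp (by simpa using this)

/-- The four vertices around the hub form a path, and any colouring of `G - A` extends. -/
theorem case5 (hG : IsHajos G) (h5 : 5 ≤ A.card) : False := by
  obtain ⟨hA5, hT, p, pA, hp0, hpv⟩ := h.hub h5
  have had : 3 ≤ (an G A p).card := by
    have := h.deg_an pA
    rw [hp0] at this
    simp at this
    omega
  obtain ⟨y, e, R, k, hR⟩ : ∃ y e R, Cut G A p y {e} R ∧ R.card = 2 := by
    obtain ⟨y, L, R, k⟩ := h.exists_cut (by omega) pA had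
    have h1 := k.card
    have h2 := k.posL
    have h3 := k.swap.posL
    by_cases hL : L.card = 1
    · obtain ⟨e, rfl⟩ := Finset.card_eq_one.1 hL
      exact ⟨y, e, R, k, by omega⟩
    · obtain ⟨e, rfl⟩ := Finset.card_eq_one.1 (show R.card = 1 by omega)
      exact ⟨y, e, L, k.swap, by omega⟩
  have adjR : ∀ a b, a ≠ b → R = {a, b} → G.Adj a b := by
    rintro a b hab rfl
    obtain ⟨a', ha, b', hb, hba, hab'⟩ := k.cR.edge (Y := {a}) (by simp) (by simp) (by
      intro e
      have : b ∈ ({a} : Finset V) := by rw [e]; simp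
      simp at this; exact hab this.symm)
    simp at ha hb hba; subst ha
    rcases hb with rfl | rfl
    · exact absurd rfl hba
    · exact hab'
  obtain ⟨r, s, rs, hRrs, yr⟩ : ∃ r s, r ≠ s ∧ R = {r, s} ∧ G.Adj y r := by
    obtain ⟨a, b, hab, hR'⟩ := Finset.card_eq_two.1 hR
    obtain ⟨z, hz, hyz⟩ := k.ayR
    rw [hR'] at hz
    simp only [Finset.mem_insert, Finset.mem_singleton] at hz
    rcases hz with rfl | rfl
    · exact ⟨z, b, hab, hR', hyz⟩
    · exact ⟨z, a, hab.symm, by rw [hR', Finset.pair_comm], hyz⟩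
  have ars := adjR r s rs hRrs
  clear adjR
  subst hRrs
  have eA : e ∈ A := k.LA (by simp)
  have rA : r ∈ A := k.RA (by simp)
  have sA : s ∈ A := k.RA (by simp)
  have yA := k.hy
  have pe : p ≠ e := by simpa using k.xL
  have ye : y ≠ e := by simpa using k.yL
  have py := k.ne
  have pr : p ≠ r := fun h' => k.xR (by simp [h'])
  have ps : p ≠ s := fun h' => k.xR (by simp [h'])
  have ys : y ≠ s := fun h' => k.yR (by simp [h'])
  have er : e ≠ r := fun h' => k.dis e (by simp) (by simp [h'])
  have es : e ≠ s := fun h' => k.dis e (by simp) (by simp [h'])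
  have ner : ¬ G.Adj e r := k.noE e (by simp) r (by simp)
  have nes : ¬ G.Adj e s := k.noE e (by simp) s (by simp)
  have aye : G.Adj y e := by simpa using k.ayL
  have cov : ∀ z ∈ A, z = p ∨ z = y ∨ z = e ∨ z = r ∨ z = s := by simpa using k.cov
  have nys : ¬ G.Adj y s := by
    intro ays
    have cc : ∀ a b, G.Adj a b → Conn G {a, b} := fun a b hab =>
      (conn_single b).insert ⟨b, by simp, hab⟩
    have hw := h.W p pA y (hpv y yA py.symm).1 {y, r, s}
      (by simp only [Finset.insert_subset_iff, Finset.singleton_subset_iff, Finset.mem_insert]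
          exact ⟨.inl trivial, .inr rA, .inr sA⟩)
      (by simp only [Finset.mem_insert, Finset.mem_singleton, not_or]; exact ⟨py, pr, ps⟩)
      ⟨by rw [Finset.card_eq_three.2 ⟨y, r, s, yr.ne, ys, rs, rfl⟩],
        (cc r s ars).insert ⟨r, by simp, yr⟩, by
        intro v hv
        simp only [Finset.mem_insert, Finset.mem_singleton] at hv
        rcases hv with rfl | rfl | rfl
        · convert cc r s ars using 1
          ext z; simp; grind [yr.ne]
        · convert cc y s ays using 1
          ext z; simp; grind [yr.ne]
        · convert cc y r yr using 1
          ext z; simp; grind [yr.ne]⟩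
    have : ({y, r, s} : Finset V) ⊆ an G {y, r, s} p := by
      intro z hz
      refine mem_an.2 ⟨hz, ?_⟩
      simp only [Finset.mem_insert, Finset.mem_singleton] at hz
      rcases hz with rfl | rfl | rfl
      · exact (hpv _ yA py.symm).1
      · exact (hpv _ rA pr.symm).1
      · exact (hpv _ sA ps.symm).1
    have := Finset.card_le_card this
    rw [Finset.card_eq_three.2 ⟨y, r, s, yr.ne, ys, rs, rfl⟩] at this
    omega
  have te := (hpv e eA pe.symm).2
  have ty := (hpv y yA py.symm).2
  have tr := (hpv r rA pr.symm).2
  have ts := (hpv s sA ps.symm).2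
  have g1 := h.tn_ge (B := {e, y}) (Z := {p, r})
    (by simp only [Finset.insert_subset_iff, Finset.singleton_subset_iff]; exact ⟨eA, yA⟩)
    (by rw [Finset.card_pair ye.symm]) (by rw [Finset.card_pair ye.symm]; omega) (by
      intro b hb z hz hbz
      simp only [Finset.mem_insert, Finset.mem_singleton] at hb ⊢
      rcases cov z hz with h1 | h1 | h1 | h1 | rfl
      · exact .inr (.inl h1)
      · exact .inl (.inr h1)
      · exact .inl (.inl h1)
      · exact .inr (.inr h1)
      · rcases hb with rfl | rfl
        · exact absurd hbz nes
        · exact absurd hbz nys)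
  rw [Finset.card_pair pr] at g1
  have g2 := h.tnL2 k.swap (by omega)
  have k1 := h.K1 {e, y}
    (by simp only [Finset.insert_subset_iff, Finset.singleton_subset_iff]; exact ⟨eA, yA⟩)
    {r, s} k.RA (by simp; exact ⟨⟨er, es⟩, yr.ne, ys⟩)
    ((conn_single y).insert ⟨y, by simp, aye.symm⟩) k.cR
  have k2 := h.tn_union_le {e, y} {r, s}
  have eey : tn G T {e, y} = tn G T {e} ∪ tn G T {y} := by rw [← tn_union]; rfl
  have c3 : (tn G T {e} ∪ tn G T {y}).card = 3 := by rw [← eey]; omega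
  have ci := Finset.card_union_add_card_inter (tn G T {e}) (tn G T {y})
  obtain ⟨b, hb⟩ := Finset.card_pos.1 (show 0 < (tn G T {e} ∩ tn G T {y}).card by omega)
  obtain ⟨be, by'⟩ := Finset.mem_inter.1 hb
  have d1 := Finset.card_sdiff_add_card_inter (tn G T {e}) (tn G T {y})
  have d2 := Finset.card_sdiff_add_card_inter (tn G T {y}) (tn G T {e})
  rw [Finset.inter_comm] at d2
  obtain ⟨a, ha⟩ := Finset.card_pos.1 (show 0 < (tn G T {e} \ tn G T {y}).card by omega)
  obtain ⟨c, hc⟩ := Finset.card_pos.1 (show 0 < (tn G T {y} \ tn G T {e}).card by omega)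
  obtain ⟨ae, ay⟩ := Finset.mem_sdiff.1 ha
  obtain ⟨cy, ce⟩ := Finset.mem_sdiff.1 hc
  have ab : a ≠ b := fun h' => ay (h' ▸ by')
  have cb : c ≠ b := fun h' => ce (h' ▸ be)
  have ac : a ≠ c := fun h' => ce (h' ▸ ae)
  have Pair : ∀ {X : Finset V} {i j : V}, X.card = 2 → i ≠ j → i ∈ X → j ∈ X → X = {i, j} := by
    intro X i j hX hij hi hj
    refine (Finset.eq_of_subset_of_card_le ?_ (by rw [Finset.card_pair hij, hX])).symm
    simp only [Finset.insert_subset_iff, Finset.singleton_subset_iff]; exact ⟨hi, hj⟩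
  have ee := Pair te ab ae be
  have ey := Pair ty cb cy by'
  obtain ⟨d, dT, hd⟩ := Finset.exists_mem_notMem_of_card_lt_card
    (show (tn G T {e} ∪ tn G T {y}).card < T.card by omega)
  rw [Finset.mem_union, not_or] at hd
  have da : a ≠ d := fun h' => hd.1 (h' ▸ ae)
  have dc : c ≠ d := fun h' => hd.2 (h' ▸ cy)
  have ers : ∀ v ∈ A, ∀ t ∈ T, ∃ z, z ≠ v ∧ t ∈ tn G T {z} ∧ (z = y ∨ z = e ∨ z = r ∨ z = s) := by
    intro v hv t ht
    rw [← h.tn_erase (by omega) hv] at ht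
    obtain ⟨tT, z, hz, hzt⟩ := mem_tn.1 ht
    obtain ⟨hz1, hz2⟩ := Finset.mem_erase.1 hz
    have htz : t ∈ tn G T {z} := mem_tn1.2 ⟨tT, hzt⟩
    refine ⟨z, hz1, htz, (cov z hz2).resolve_left ?_⟩
    rintro rfl
    rw [hp0] at htz
    simp at htz
  have dr : d ∈ tn G T {r} := by
    obtain ⟨z, h1, h2, rfl | rfl | rfl | rfl⟩ := ers s sA d dT
    · exact absurd h2 hd.2
    · exact absurd h2 hd.1
    · exact h2
    · exact absurd rfl h1
  have ds : d ∈ tn G T {s} := by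
    obtain ⟨z, h1, h2, rfl | rfl | rfl | rfl⟩ := ers r rA d dT
    · exact absurd h2 hd.2
    · exact absurd h2 hd.1
    · exact absurd rfl h1
    · exact h2
  have hars : a ∈ tn G T {r} ∨ a ∈ tn G T {s} := by
    obtain ⟨z, h1, h2, rfl | rfl | rfl | rfl⟩ := ers e eA a (tn_sub ae)
    · exact absurd h2 ay
    · exact absurd rfl h1
    · exact .inl h2
    · exact .inr h2
  have hcrs : c ∈ tn G T {r} ∨ c ∈ tn G T {s} := by
    obtain ⟨z, h1, h2, rfl | rfl | rfl | rfl⟩ := ers y yA c (tn_sub cy)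
    · exact absurd rfl h1
    · exact absurd h2 ce
    · exact .inl h2
    · exact .inr h2
  obtain ⟨f, hf⟩ := IsHajos.color hG (X := Finset.univ \ A) ⟨p, by simp [pA]⟩
  have yr' := yr.ne
  -- the colouring pattern, with `i`, `j` the colours forbidden at `r` and `s` besides that of `d`
  have fin : ∀ i j, tn G T {r} = {i, d} → tn G T {s} = {j, d} →
      (∃ P E : Fin 4, E ≠ P ∧ E ≠ f a ∧ E ≠ f b ∧ ∃ Y, Y ≠ P ∧ Y ≠ E ∧ Y ≠ f b ∧ Y ≠ f c ∧
        ∃ R, R ≠ P ∧ R ≠ Y ∧ R ≠ f i ∧ R ≠ f d ∧ ∃ S, S ≠ P ∧ S ≠ R ∧ S ≠ f j ∧ S ≠ f d) →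
      False := by
    rintro i j hi hj ⟨P, E, EP, Ea, Eb, Y, YP, YE, Yb, Yc, R, RP, RY, Ri, Rd, S, SP, SR, Sj, Sd⟩
    refine h.ext hG hf (fun z => if z = p then P else if z = y then Y else if z = e then E else
      if z = r then R else S) ?_ ?_
    · clear ee ey hi hj te ty tr ts g1 g2 k1 k2 eey c3 ci hb be by' d1 d2 ha hc ae ay cy ce Pair
      intro u hu v hv huv
      rcases cov u hu with rfl | rfl | rfl | rfl | rfl <;>
        rcases cov v hv with rfl | rfl | rfl | rfl | rfl <;>
        first
        | exact absurd rfl huv.ne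
        | exact absurd huv ner
        | exact absurd huv.symm ner
        | exact absurd huv nes
        | exact absurd huv.symm nes
        | exact absurd huv nys
        | exact absurd huv.symm nys
        | simp [pe, py, pr, ps, ye, ys, yr', er, es, rs, pe.symm, py.symm, pr.symm, ps.symm,
            ye.symm, ys.symm, yr'.symm, er.symm, es.symm, rs.symm, EP, YP, YE, RP, RY, SP, SR,
            EP.symm, YP.symm, YE.symm, RP.symm, RY.symm, SP.symm, SR.symm]
    · intro u hu t ht
      rcases cov u hu with rfl | rfl | rfl | rfl | rfl
      · rw [hp0] at ht; simp at ht
      · rw [ey] at ht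
        simp only [Finset.mem_insert, Finset.mem_singleton] at ht
        rcases ht with rfl | rfl <;> simpa [py.symm]
      · rw [ee] at ht
        simp only [Finset.mem_insert, Finset.mem_singleton] at ht
        rcases ht with rfl | rfl <;> simpa [pe.symm, ye.symm]
      · rw [hi] at ht
        simp only [Finset.mem_insert, Finset.mem_singleton] at ht
        rcases ht with rfl | rfl <;> simpa [pr.symm, yr'.symm, er.symm]
      · rw [hj] at ht
        simp only [Finset.mem_insert, Finset.mem_singleton] at ht
        rcases ht with rfl | rfl <;> simpa [ps.symm, ys.symm, es.symm, rs.symm]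
  rcases hars with har | has
  · have hr := Pair tr da har dr
    have hcs := hcrs.resolve_left fun hcr => by
      rw [hr] at hcr; simp at hcr; exact hcr.elim (fun e => ac e.symm) dc
    exact fin a c hr (Pair ts dc hcs ds) (e5b _ _ _ _)
  · have hs := Pair ts da has ds
    have hcr := hcrs.resolve_right fun hcs => by
      rw [hs] at hcs; simp at hcs; exact hcs.elim (fun e => ac e.symm) dc
    exact fin c a (Pair tr dc hcr dr) hs (e5a _ _ _ _)

theorem false (hG : IsHajos G) : False := by
  have := h.n2
  by_cases h5 : 5 ≤ A.card
  · exact h.case5 hG h5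
  by_cases h4 : A.card = 4
  · exact h.case4 hG h4
  by_cases h3 : A.card = 3
  · exact h.case3 hG h3
  exact h.case2 hG (by omega)

end Core

end HW

/-! ### From the separation to the reduced configuration -/

namespace HW

variable {V : Type} [DecidableEq V] [Fintype V] {G : SimpleGraph V}

theorem adj_apex_some {W : Type} {K : SimpleGraph W} {S : Set W} {a b : W} :
    (apexGraph K S).Adj (some a) (some b) ↔ K.Adj a b := by
  simp only [apexGraph, SimpleGraph.fromRel_adj]
  constructor
  · rintro ⟨-, (⟨x, y, hx, hy, h⟩ | ⟨h, -⟩) | (⟨x, y, hx, hy, h⟩ | ⟨h, -⟩)⟩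
    · cases hx; cases hy; exact h
    · cases h
    · cases hx; cases hy; exact h.symm
    · cases h
  · intro h
    exact ⟨fun e => h.ne (Option.some.inj e), .inl (.inl ⟨a, b, rfl, rfl, h⟩)⟩

theorem adj_apex_none {W : Type} {K : SimpleGraph W} {S : Set W} {a : W} :
    (apexGraph K S).Adj none (some a) ↔ a ∈ S := by
  simp only [apexGraph, SimpleGraph.fromRel_adj]
  constructor
  · rintro ⟨-, (⟨x, y, hx, hy, h⟩ | ⟨-, x, hx, h⟩) | (⟨x, y, hx, hy, h⟩ | ⟨h, -⟩)⟩
    · cases hx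
    · cases h; exact hx
    · cases hy
    · cases h
  · intro h
    exact ⟨by simp, .inl (.inr ⟨trivial, a, h, rfl⟩)⟩

/-- `K` has no `K₃,₃` minor, in terms of six connected branch sets. -/
def NoK33 {W : Type} (K : SimpleGraph W) : Prop :=
  ∀ P Q : Fin 3 → Finset W, (∀ i, Conn K (P i)) → (∀ i, Conn K (Q i)) →
    (∀ i j, i ≠ j → ∀ x ∈ P i, x ∉ P j) → (∀ i j, i ≠ j → ∀ x ∈ Q i, x ∉ Q j) →
    (∀ i j, ∀ x ∈ P i, x ∉ Q j) → (∀ i j, Tch K (P i) (Q j)) → False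

/-- The hypotheses, for contradiction: `H` is one side of a separation with boundary `S` and
inside `I`, planar with `S` on the boundary of the disc, and without an `S`-good wheel. -/
structure Env (G : SimpleGraph V) (H : G.Subgraph) (S I : Finset V) : Prop where
  dis : ∀ x ∈ I, x ∉ S
  cov : ∀ x ∈ H.verts, x ∈ S ∨ x ∈ I
  adj : ∀ x ∈ I, ∀ y, G.Adj x y → H.Adj x y
  S4 : S.card = 4
  k33 : NoK33 (apexGraph H.spanningCoe (S : Set V))
  wheel : ¬ HasGoodWheel H (S : Set V)

/-- `H` with a new vertex joined to `S`, and with the vertices of `G` outside `H` isolated. -/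
abbrev Gam {G : SimpleGraph V} (H : G.Subgraph) (S : Finset V) : SimpleGraph (Option V) :=
  apexGraph H.spanningCoe (S : Set V)

theorem Conn.union_nbrs {W : Type} [DecidableEq W] {K : SimpleGraph W} {O N : Finset W}
    (hO : Conn K O) (hN : ∀ n ∈ N, ∃ o ∈ O, K.Adj n o) : Conn K (O ∪ N) := by
  induction N using Finset.induction_on with
  | empty => simpa
  | insert a N ha ih =>
    rw [Finset.union_insert]
    refine (ih fun n hn => hN n (by simp [hn])).insert ?_
    obtain ⟨o, ho, hao⟩ := hN a (by simp)
    exact ⟨o, by simp [ho], hao⟩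

/-- The copy of a set of vertices in the graph with an added apex. -/
abbrev lft (B : Finset V) : Finset (Option V) := B.image some

theorem mem_lft {B : Finset V} {x : V} : some x ∈ lft B ↔ x ∈ B := by simp

/-- Some connected set of the graph with an added apex avoids `A` and its boundary and touches
every vertex of the boundary. -/
def Regular (G : SimpleGraph V) (H : G.Subgraph) (S A : Finset V) : Prop :=
  ∃ O : Finset (Option V), Conn (Gam H S) O ∧ (∀ x ∈ A, some x ∉ O) ∧
    ∀ t ∈ onb G A, some t ∉ O ∧ ∃ o ∈ O, (Gam H S).Adj (some t) o

namespace Env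

variable {H : G.Subgraph} {S I : Finset V} (E : Env G H S I)
include E

theorem gadj {x y : V} (hx : x ∈ I) (h : G.Adj x y) : (Gam H S).Adj (some x) (some y) :=
  adj_apex_some.2 (E.adj x hx y h)

theorem conn {B : Finset V} (hB : B ⊆ I) (h : Conn G B) : Conn (Gam H S) (lft B) :=
  h.map some fun _ hx _ _ hxy => E.gadj (hB hx) hxy

theorem conn_one (o : Option V) : Conn (Gam H S) {o} := conn_single o

theorem tch {B : Finset V} (hB : B ⊆ I) {x : V} (h : ∃ b ∈ B, G.Adj b x) :
    Tch (Gam H S) (lft B) {some x} := by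
  obtain ⟨b, hb, hbx⟩ := h
  exact ⟨some b, by simpa, some x, by simp, E.gadj (hB hb) hbx⟩

/-- Two connected sets inside `I` and a third connected set of the apex graph, disjoint from them, do not have three common
neighbours. -/
theorem three_nbrs {X Y : Finset V} {O : Finset (Option V)} (hX : X ⊆ I) (hY : Y ⊆ I)
    (cX : Conn G X) (cY : Conn G Y) (cO : Conn (Gam H S) O) (hXY : ∀ x ∈ X, x ∉ Y)
    (hXO : ∀ x ∈ X, some x ∉ O) (hYO : ∀ x ∈ Y, some x ∉ O) {N : Finset V} (hN : 3 ≤ N.card)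
    (nX : ∀ t ∈ N, t ∉ X ∧ ∃ b ∈ X, G.Adj b t) (nY : ∀ t ∈ N, t ∉ Y ∧ ∃ b ∈ Y, G.Adj b t)
    (nO : ∀ t ∈ N, some t ∉ O ∧ ∃ o ∈ O, (Gam H S).Adj (some t) o) : False := by
  obtain ⟨t1, m1, t2, m2, t3, m3, n12, n13, n23⟩ := Finset.two_lt_card.1 hN
  have hQ : ∀ i, (![t1, t2, t3] : Fin 3 → V) i ∈ N := by
    intro i; fin_cases i <;> assumption
  refine E.k33 ![lft X, lft Y, O] (fun i => {some ((![t1, t2, t3] : Fin 3 → V) i)})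
    ?_ (fun i => E.conn_one _) ?_ ?_ ?_ ?_
  · intro i; fin_cases i
    · exact E.conn hX cX
    · exact E.conn hY cY
    · exact cO
  · have a1 : ∀ z ∈ lft X, z ∉ lft Y := by
      intro z hz hz'
      obtain ⟨x, hx, rfl⟩ := Finset.mem_image.1 hz
      exact hXY x hx (mem_lft.1 hz')
    have a2 : ∀ z ∈ lft X, z ∉ O := by
      intro z hz
      obtain ⟨x, hx, rfl⟩ := Finset.mem_image.1 hz
      exact hXO x hx
    have a3 : ∀ z ∈ lft Y, z ∉ O := by
      intro z hz
      obtain ⟨x, hx, rfl⟩ := Finset.mem_image.1 hz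
      exact hYO x hx
    intro i j hij
    fin_cases i <;> fin_cases j
    · exact absurd rfl hij
    · exact a1
    · exact a2
    · exact fun z h1 h2 => a1 z h2 h1
    · exact absurd rfl hij
    · exact a3
    · exact fun z h1 h2 => a2 z h2 h1
    · exact fun z h1 h2 => a3 z h2 h1
    · exact absurd rfl hij
  · intro i j hij
    fin_cases i <;> fin_cases j <;>
      simp [n12, n13, n23, n12.symm, n13.symm, n23.symm] at hij ⊢
  · intro i j z hz hz'
    obtain rfl := Finset.mem_singleton.1 hz'
    have hj := hQ j
    fin_cases i
    · exact (nX _ hj).1 (mem_lft.1 hz)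
    · exact (nY _ hj).1 (mem_lft.1 hz)
    · exact (nO _ hj).1 hz
  · intro i j
    have hj := hQ j
    fin_cases i
    · exact E.tch hX (nX _ hj).2
    · exact E.tch hY (nY _ hj).2
    · obtain ⟨o, ho, hoj⟩ := (nO _ hj).2
      exact ⟨o, ho, _, by simp, hoj.symm⟩

/-- A vertex of `I` has at most two neighbours in a 2-connected set of vertices of `I`, even
after adding one of its neighbours to `I`. -/
theorem no_wheel {w : V} (hw : w ∈ I) {t : V} (ht : G.Adj w t) {Y : Finset V}
    (hY : Y ⊆ insert t I) (hwY : w ∉ Y) (h2 : TwoConn G Y) : (an G Y w).card ≤ 2 := by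
  by_contra hc
  obtain ⟨a, ha, b, hb, c, hc, ab, ac, bc⟩ := Finset.two_lt_card.1 (not_le.1 hc)
  have edge : ∀ x ∈ Y, ∀ y ∈ Y, G.Adj x y → H.Adj x y := by
    intro x hx y hy hxy
    rcases Finset.mem_insert.1 (hY hx) with rfl | hx
    · rcases Finset.mem_insert.1 (hY hy) with rfl | hy
      · exact absurd rfl hxy.ne
      · exact (E.adj y hy x hxy.symm).symm
    · exact E.adj x hx y hxy
  have hn : ∀ i, (![a, b, c] : Fin 3 → V) i ∈ an G Y w := by
    intro i; fin_cases i <;> assumption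
  rcases h2.theta (n := ![a, b, c]) (fun i => (mem_an.1 (hn i)).1) with
    ⟨C, hCY, hC, hin⟩ | ⟨p, hp, q, hq, hpq, Q, hQ, hQd⟩
  · apply E.wheel
    obtain ⟨u, C', hC', hs⟩ := hC.walk
    have hwC : w ∉ C'.support := fun h => hwY (hCY ((hs w).1 h))
    have mab : ∀ x ∈ ({a, b, c} : Set V), x ∈ C ∧ G.Adj w x := by
      intro x hx
      simp only [Set.mem_insert_iff, Set.mem_singleton_iff] at hx
      rcases hx with rfl | rfl | rfl
      · exact ⟨hin 0, (mem_an.1 ha).2⟩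
      · exact ⟨hin 1, (mem_an.1 hb).2⟩
      · exact ⟨hin 2, (mem_an.1 hc).2⟩
    have hcy : ∀ x y, s(x, y) ∈ C'.edges → G.Adj x y ∧ x ∈ C ∧ y ∈ C := fun x y h =>
      ⟨C'.adj_of_mem_edges h, (hs x).1 (C'.fst_mem_support_of_mem_edges h),
        (hs y).1 (C'.snd_mem_support_of_mem_edges h)⟩
    let Wh : G.Subgraph :=
      { verts := insert w {x | x ∈ C'.support}
        Adj := fun x y => s(x, y) ∈ {e | e ∈ C'.edges} ∪ (fun x => s(w, x)) '' {a, b, c}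
        adj_sub := by
          rintro x y (h | ⟨z, hz, e⟩)
          · exact (hcy x y h).1
          · have := (mab z hz).2
            rcases Sym2.eq_iff.1 e with ⟨rfl, rfl⟩ | ⟨rfl, rfl⟩
            · exact this
            · exact this.symm
        edge_vert := by
          rintro x y (h | ⟨z, hz, e⟩)
          · exact .inr (C'.fst_mem_support_of_mem_edges h)
          · rcases Sym2.eq_iff.1 e with ⟨rfl, rfl⟩ | ⟨rfl, rfl⟩
            · exact .inl rfl
            · exact .inr ((hs z).2 (mab z hz).1)
        symm := ⟨by
          intro x y h
          rwa [Sym2.eq_swap]⟩ }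
    refine ⟨Wh, w, ⟨?_, ?_⟩, ⟨u, C', {a, b, c}, hC', hwC, ?_, ?_, rfl, ?_⟩, ?_, ?_⟩
    · rintro x (rfl | hx)
      · exact H.edge_vert (E.adj x hw t ht)
      · have hxY : x ∈ Y := hCY ((hs x).1 hx)
        rcases Finset.mem_insert.1 (hY hxY) with rfl | hxI
        · exact H.edge_vert (E.adj w hw x ht).symm
        · obtain ⟨y, hy⟩ := Finset.card_pos.1 (show 0 < (nb G x).card by
            have hcn := h2.2.1.edge (Y := {x}) (by simpa) (by simp) (by
              intro e; have := h2.1; rw [← e] at this; simp at this)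
            obtain ⟨x', hx', y, hy, -, hxy⟩ := hcn
            rw [Finset.mem_singleton] at hx'
            subst hx'
            exact Finset.card_pos.2 ⟨y, mem_nb.2 hxy⟩)
          exact H.edge_vert (E.adj x hxI y (mem_nb.1 hy))
    · rintro x y (h | ⟨z, hz, e⟩)
      · obtain ⟨h1, h2, h3⟩ := hcy x y h
        exact edge x (hCY h2) y (hCY h3) h1
      · have := E.adj w hw z (mab z hz).2
        rcases Sym2.eq_iff.1 e with ⟨rfl, rfl⟩ | ⟨rfl, rfl⟩
        · exact this
        · exact this.symm
    · intro x hx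
      exact (hs x).2 (mab x hx).1
    · have : ({a, b, c} : Set V) = (({a, b, c} : Finset V) : Set V) := by simp
      rw [this, Set.ncard_coe_finset, Finset.card_eq_three.2 ⟨a, b, c, ab, ac, bc, rfl⟩]
    · ext e
      induction e with
      | h x y => rfl
    · exact fun h => E.dis w hw h
    · rintro s hs' (rfl | hsC)
      · exact absurd hs' (E.dis s hw)
      · rcases Finset.mem_insert.1 (hY (hCY ((hs s).1 hsC))) with rfl | hsI
        · exact E.adj w hw s ht
        · exact absurd hs' (E.dis s hsI)
  · have ge : ∀ x ∈ Y, ∀ y ∈ Y, G.Adj x y → (Gam H S).Adj (some x) (some y) :=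
      fun x hx y hy hxy => adj_apex_some.2 (edge x hx y hy hxy)
    have hv : ∀ v ∈ ({p, q, w} : Finset V), ∀ i, v ∉ Q i ∧ ∃ y ∈ Q i, (Gam H S).Adj (some y) (some v) := by
      intro v hv i
      obtain ⟨h1, h2, h3, h4, h5, ⟨y, hy, hpy⟩, z, hz, hqz⟩ := hQ i
      simp only [Finset.mem_insert, Finset.mem_singleton] at hv
      rcases hv with rfl | rfl | rfl
      · exact ⟨h2, y, hy, ge y (h1 hy) v hp hpy.symm⟩
      · exact ⟨h3, z, hz, ge z (h1 hz) v hq hqz.symm⟩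
      · exact ⟨fun h => hwY (h1 h), _, h4, (E.gadj hw (mem_an.1 (hn i)).2).symm⟩
    have hm : ∀ j, (![p, q, w] : Fin 3 → V) j ∈ ({p, q, w} : Finset V) := by
      intro j; fin_cases j <;> simp
    have pw : p ≠ w := fun e => hwY (e ▸ hp)
    have qw : q ≠ w := fun e => hwY (e ▸ hq)
    refine E.k33 (fun i => lft (Q i)) (fun i => {some ((![p, q, w] : Fin 3 → V) i)})
      (fun i => ?_) (fun i => E.conn_one _) ?_ ?_ ?_ ?_
    · obtain ⟨h1, h2, h3, h4, h5, -⟩ := hQ i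
      exact h5.map some fun x hx y hy hxy => ge x (h1 hx) y (h1 hy) hxy
    · intro i j hij z hz hz'
      obtain ⟨x, hx, rfl⟩ := Finset.mem_image.1 hz
      exact hQd i j hij x hx (mem_lft.1 hz')
    · intro i j hij
      fin_cases i <;> fin_cases j <;>
        simp [hpq, pw, qw, hpq.symm, pw.symm, qw.symm] at hij ⊢
    · intro i j z hz hz'
      obtain rfl := Finset.mem_singleton.1 hz'
      exact (hv _ (hm j) i).1 (mem_lft.1 hz)
    · intro i j
      obtain ⟨y, hy, h⟩ := (hv _ (hm j) i).2
      exact ⟨some y, by simpa, _, by simp, h⟩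

/-- A regular set `A` with the minimality properties `P1a` and `P1b` satisfies `Core`, the connected
set beyond its boundary serving as one branch set of the excluded `K₃,₃` minors. -/
theorem core (hG : IsHajos G) {A : Finset V} (hA : A ⊆ I) (n2 : 2 ≤ A.card)
    (T3 : 3 ≤ (onb G A).card) (T4 : (onb G A).card ≤ 4) (hR : Regular G H S A)
    (P1a : ∀ B ⊆ A, 2 ≤ B.card → B.card + 2 ≤ A.card → 5 ≤ (onb G B).card)
    (P1b : ∀ B ⊆ A, 2 ≤ B.card → B.card + 1 = A.card → (onb G A).card + 1 ≤ (onb G B).card) :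
    Core G A (onb G A) := by
  obtain ⟨O, cO, hOA, hOT⟩ := hR
  refine ⟨fun x hx h => (mem_onb.1 h).1 hx, ?_, fun x _ => IsHajos.degree hG x, T3, T4, n2, P1a,
    P1b, ?_, ?_, ?_⟩
  · intro x hx y hxy
    by_cases hy : y ∈ A
    · exact .inl hy
    · exact .inr (mem_onb.2 ⟨hy, x, hx, hxy⟩)
  · intro X hX Y hY hXY cX cY
    by_contra hc
    have nA : ∀ t ∈ onb G A, ∀ B ⊆ A, t ∉ B := fun t ht B hB h => (mem_onb.1 ht).1 (hB h)
    refine E.three_nbrs (hX.trans hA) (hY.trans hA) cX cY cO hXY (fun x hx => hOA x (hX hx))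
      (fun x hx => hOA x (hY hx)) (N := tn G (onb G A) X ∩ tn G (onb G A) Y) (by omega)
      ?_ ?_ ?_
    · intro t ht
      obtain ⟨h1, h2⟩ := mem_tn.1 (Finset.mem_inter.1 ht).1
      exact ⟨nA t h1 X hX, h2⟩
    · intro t ht
      obtain ⟨h1, h2⟩ := mem_tn.1 (Finset.mem_inter.1 ht).2
      exact ⟨nA t h1 Y hY, h2⟩
    · intro t ht
      obtain ⟨h1, h2⟩ := mem_tn.1 (Finset.mem_inter.1 ht).1
      exact hOT t h1
  · intro D x y hx hy hxy hD hDd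
    set O' := O ∪ lft (onb G A) with hO'
    have cO' : Conn (Gam H S) O' := cO.union_nbrs (by
      intro n hn
      obtain ⟨t, ht, rfl⟩ := Finset.mem_image.1 hn
      exact (hOT t ht).2)
    have hAO : ∀ z ∈ A, some z ∉ O' := by
      intro z hz h
      rcases Finset.mem_union.1 h with h | h
      · exact hOA z hz h
      · exact (mem_onb.1 (mem_lft.1 h)).1 hz
    refine E.k33 (fun i => lft (D i)) ![{some x}, {some y}, O'] (fun i => ?_) ?_ ?_ ?_ ?_ ?_
    · exact E.conn ((hD i).1.trans hA) (hD i).2.1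
    · intro j; fin_cases j
      · exact E.conn_one _
      · exact E.conn_one _
      · exact cO'
    · intro i j hij z hz hz'
      obtain ⟨x, hx, rfl⟩ := Finset.mem_image.1 hz
      exact hDd i j hij x hx (mem_lft.1 hz')
    · have := hAO x hx
      have := hAO y hy
      intro i j hij
      fin_cases i <;> fin_cases j
      · exact absurd rfl hij
      · simpa using hxy
      · simpa
      · simpa using hxy.symm
      · exact absurd rfl hij
      · simpa
      · rintro z hz hz'
        obtain rfl := Finset.mem_singleton.1 hz'
        exact hAO x hx hz
      · rintro z hz hz'
        obtain rfl := Finset.mem_singleton.1 hz'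
        exact hAO y hy hz
      · exact absurd rfl hij
    · intro i j z hz
      obtain ⟨u, hu, rfl⟩ := Finset.mem_image.1 hz
      obtain ⟨h1, h2, h3, h4, -⟩ := hD i
      fin_cases j
      · simp; rintro rfl; exact h3 hu
      · simp; rintro rfl; exact h4 hu
      · exact hAO u (h1 hu)
    · intro i j
      obtain ⟨h1, h2, h3, h4, ⟨d, hd, hxd⟩, ⟨d', hd', hyd⟩, t, ht⟩ := hD i
      obtain ⟨htT, e, he, het⟩ := mem_tn.1 ht
      fin_cases j
      · exact E.tch (h1.trans hA) ⟨d, hd, hxd.symm⟩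
      · exact E.tch (h1.trans hA) ⟨d', hd', hyd.symm⟩
      · exact (E.tch (h1.trans hA) ⟨e, he, het⟩).mono subset_rfl (by simpa [hO'] using .inr htT)
  · intro w hw t hwt Y hY hwY h2
    exact E.no_wheel (hA hw) hwt (hY.trans (Finset.insert_subset_insert t hA)) hwY h2

end Env

end HW

/-! ### Choice of the set and conclusion -/

namespace HW

variable {V : Type} [DecidableEq V] [Fintype V] {G : SimpleGraph V}

theorem exists_min_card (p : Finset V → Prop) (h : ∃ B, p B) :
    ∃ B, p B ∧ ∀ C, p C → B.card ≤ C.card := by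
  classical
  obtain ⟨B, hB⟩ := h
  obtain ⟨C, hC, hm⟩ := Finset.exists_min_image (Finset.univ.filter p) Finset.card
    ⟨B, by simpa using hB⟩
  exact ⟨C, by simpa using hC, fun D hD => hm D (by simpa using hD)⟩

/-- The size of the boundary is submodular. -/
theorem onb_submod (A B : Finset V) :
    (onb G (A ∩ B)).card + (onb G (A ∪ B)).card ≤ (onb G A).card + (onb G B).card := by
  rw [← Finset.card_union_add_card_inter, ← Finset.card_union_add_card_inter (onb G A)]
  apply Nat.add_le_add <;> apply Finset.card_le_card <;> intro x hx
  · rw [Finset.mem_union]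
    rcases Finset.mem_union.1 hx with hx | hx
    · obtain ⟨h1, b, hb, hbx⟩ := mem_onb.1 hx
      rw [Finset.mem_inter] at h1 hb
      by_cases hA : x ∈ A
      · exact .inr (mem_onb.2 ⟨fun hB => h1 ⟨hA, hB⟩, b, hb.2, hbx⟩)
      · exact .inl (mem_onb.2 ⟨hA, b, hb.1, hbx⟩)
    · obtain ⟨h1, b, hb, hbx⟩ := mem_onb.1 hx
      rw [Finset.mem_union, not_or] at h1
      rcases Finset.mem_union.1 hb with hb | hb
      · exact .inl (mem_onb.2 ⟨h1.1, b, hb, hbx⟩)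
      · exact .inr (mem_onb.2 ⟨h1.2, b, hb, hbx⟩)
  · obtain ⟨hx1, hx2⟩ := Finset.mem_inter.1 hx
    obtain ⟨-, b, hb, hbx⟩ := mem_onb.1 hx1
    have h1 := (mem_onb.1 hx2).1
    rw [Finset.mem_inter] at hb
    rw [Finset.mem_union, not_or] at h1
    exact Finset.mem_inter.2 ⟨mem_onb.2 ⟨h1.1, b, hb.1, hbx⟩, mem_onb.2 ⟨h1.2, b, hb.2, hbx⟩⟩

namespace Env

variable {H : G.Subgraph} {S I : Finset V} (E : Env G H S I)
include E

theorem three_le (hG : IsHajos G) {A : Finset V} (hA : A ⊆ I) (hn : A.Nonempty) :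
    3 ≤ (onb G A).card := by
  by_contra hlt
  refine hlt (IsHajos.two_cut hG hn ?_)
  obtain ⟨z, hz, hz'⟩ := Finset.exists_mem_notMem_of_card_lt_card
    (show (onb G A).card < S.card by rw [E.S4]; omega)
  exact ⟨z, fun h => E.dis z (hA h) hz, hz'⟩

/-- A set which is not regular lies in a larger one with strictly smaller boundary. -/
theorem regular_or {A : Finset V} (hA : A ⊆ I) : Regular G H S A ∨
    ∃ A' ⊆ I, A ⊆ A' ∧ ∃ t ∈ onb G A, t ∈ A' ∧ onb G A' ⊆ (onb G A).erase t := by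
  classical
  obtain ⟨O, hO, hnO, cO, clO⟩ := exists_comp (G := Gam H S) (a := none)
    (X := Finset.univ \ lft (A ∪ onb G A)) (by simp)
  have hOn : ∀ x ∈ A ∪ onb G A, some x ∉ O := fun x hx h => by
    have := hO h
    rw [Finset.mem_sdiff] at this
    exact this.2 (mem_lft.2 hx)
  by_cases hr : ∀ t ∈ onb G A, ∃ o ∈ O, (Gam H S).Adj (some t) o
  · exact .inl ⟨O, cO, fun x hx => hOn x (by simp [hx]), fun t ht => ⟨hOn t (by simp [ht]), hr t ht⟩⟩
  right
  push Not at hr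
  obtain ⟨t, ht, hto⟩ := hr
  have hAO : ∀ x ∈ A, ∀ o ∈ O, ¬ (Gam H S).Adj (some x) o := by
    intro x hx o ho hxo
    rcases o with _ | y
    · exact E.dis x (hA hx) (by exact_mod_cast adj_apex_none.1 hxo.symm)
    · refine hOn y ?_ ho
      have hxy : G.Adj x y := H.adj_sub (adj_apex_some.1 hxo)
      by_cases hy : y ∈ A
      · simp [hy]
      · exact Finset.mem_union_right _ (mem_onb.2 ⟨hy, x, hx, hxy⟩)
  have hAA : A ⊆ I.filter fun v => some v ∉ O ∧ ∀ o ∈ O, ¬ (Gam H S).Adj (some v) o :=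
    fun x hx => Finset.mem_filter.2 ⟨hA hx, hOn x (by simp [hx]), hAO x hx⟩
  refine ⟨_, Finset.filter_subset _ _, hAA, t, ht, ?_⟩
  have hsub : onb G (I.filter fun v => some v ∉ O ∧ ∀ o ∈ O, ¬ (Gam H S).Adj (some v) o) ⊆
      (onb G A).erase t := by
    intro x hx
    obtain ⟨hx', b, hb, hbx⟩ := mem_onb.1 hx
    obtain ⟨hbI, hbO, hbn⟩ := Finset.mem_filter.1 hb
    have gbx := E.gadj hbI hbx
    have hxO : some x ∉ O := fun h => hbn _ h gbx
    obtain ⟨o, ho, hxo⟩ : ∃ o ∈ O, (Gam H S).Adj (some x) o := by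
      by_cases hxI : x ∈ I
      · by_contra hc
        push Not at hc
        exact hx' (Finset.mem_filter.2 ⟨hxI, hxO, hc⟩)
      · have hxS := (E.cov x (H.edge_vert (E.adj b hbI x hbx).symm)).resolve_right hxI
        exact ⟨none, hnO, (adj_apex_none.2 (by exact_mod_cast hxS)).symm⟩
    rw [Finset.mem_erase]
    refine ⟨fun e => hto o ho (e ▸ hxo), ?_⟩
    by_contra hxT
    by_cases hxA : x ∈ A
    · exact hAO x hxA o ho hxo
    · refine hxO (clO o ho (some x) ?_ hxo.symm)
      rw [Finset.mem_sdiff, mem_lft]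
      simp [hxA, hxT]
  refine ⟨?_, hsub⟩
  by_contra htA
  obtain ⟨-, b, hb, hbt⟩ := mem_onb.1 ht
  exact Finset.notMem_erase t _ (hsub (mem_onb.2 ⟨htA, b, hAA hb, hbt⟩))

/-- The case where all parts of `I` have a boundary of at least four vertices. -/
theorem contra_beta (hG : IsHajos G) (hI : 2 ≤ I.card)
    (hb : ∀ B ⊆ I, B.Nonempty → 4 ≤ (onb G B).card) : False := by
  obtain ⟨A, ⟨hA, hA2, hA4⟩, hmin⟩ := exists_min_card
    (fun B => B ⊆ I ∧ 2 ≤ B.card ∧ (onb G B).card ≤ 4) ⟨I, subset_rfl, hI, by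
      rw [← E.S4]
      refine Finset.card_le_card fun x hx => ?_
      obtain ⟨h1, b, hb, hbx⟩ := mem_onb.1 hx
      exact (E.cov x (H.edge_vert (E.adj b hb x hbx).symm)).resolve_right h1⟩
  have hAn : A.Nonempty := Finset.card_pos.1 (by omega)
  have hbA := hb A hA hAn
  have h5 : ∀ B ⊆ A, 2 ≤ B.card → B.card < A.card → 5 ≤ (onb G B).card := by
    intro B hB h2 hlt
    by_contra hc
    have := hmin B ⟨hB.trans hA, h2, by omega⟩
    omega
  refine (E.core hG hA hA2 (by omega) hA4 ?_ (fun B hB h1 h2 => h5 B hB h1 (by omega))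
    (fun B hB h1 h2 => by have := h5 B hB h1 (by omega); omega)).false hG
  rcases E.regular_or hA with h | ⟨A', hA', hAA', t, ht, -, hs⟩
  · exact h
  · have := Finset.card_le_card hs
    rw [Finset.card_erase_of_mem ht] at this
    have := hb A' hA' (hAn.mono hAA')
    omega

/-- The case where a part of `I` has a boundary of three vertices. A smallest such part `A0` can be
used unless it contains a smaller set with boundary of size four; a smallest such set `A` can be
used unless it is not regular, and then a component of `A`, a component of the rest of `A0` and the
set beyond `A0` have three common neighbours. -/
theorem contra_alpha (hG : IsHajos G)
    (hb : ∃ B ⊆ I, B.Nonempty ∧ (onb G B).card ≤ 3) : False := by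
  obtain ⟨B, hB⟩ := hb
  obtain ⟨A0, ⟨hA0, hA0n, hA03⟩, hmin0⟩ := exists_min_card
    (fun B => B ⊆ I ∧ B.Nonempty ∧ (onb G B).card ≤ 3) ⟨B, hB⟩
  have hT0 := E.three_le hG hA0 hA0n
  have h4 : ∀ B ⊆ A0, B.Nonempty → B.card < A0.card → 4 ≤ (onb G B).card := by
    intro B hB hn hlt
    by_contra hc
    have := hmin0 B ⟨hB.trans hA0, hn, by omega⟩
    omega
  have h02 : 2 ≤ A0.card := by
    by_contra hc
    have := Finset.card_pos.2 hA0n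
    obtain ⟨v, rfl⟩ := Finset.card_eq_one.1 (show A0.card = 1 by omega)
    have h1 := IsHajos.degree hG v
    have : nb G v ⊆ onb G {v} := fun x hx => mem_onb.2
      ⟨by have := (mem_nb.1 hx).ne'; simpa, v, by simp, mem_nb.1 hx⟩
    have := Finset.card_le_card this
    omega
  have hR0 : Regular G H S A0 := by
    rcases E.regular_or hA0 with h | ⟨A', hA', hAA', t, ht, -, hs⟩
    · exact h
    · have := Finset.card_le_card hs
      rw [Finset.card_erase_of_mem ht] at this
      have := E.three_le hG hA' (hA0n.mono hAA')
      omega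
  by_cases hα : ∀ B ⊆ A0, 2 ≤ B.card → B.card + 2 ≤ A0.card → 5 ≤ (onb G B).card
  · refine (E.core hG hA0 h02 hT0 (by omega) hR0 hα fun B hB h1 h2 => ?_).false hG
    have := h4 B hB (Finset.card_pos.1 (by omega)) (by omega)
    omega
  push Not at hα
  obtain ⟨B, hB1, hB2, hB3, hB4⟩ := hα
  obtain ⟨A, ⟨hA, hA2, hAc, hA4⟩, hmin⟩ := exists_min_card
    (fun B => B ⊆ A0 ∧ 2 ≤ B.card ∧ B.card + 2 ≤ A0.card ∧ (onb G B).card < 5)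
    ⟨B, hB1, hB2, hB3, hB4⟩
  have hAn : A.Nonempty := Finset.card_pos.1 (by omega)
  have hAI := hA.trans hA0
  have hT := h4 A hA hAn (by omega)
  have h5 : ∀ B ⊆ A, 2 ≤ B.card → B.card < A.card → 5 ≤ (onb G B).card := by
    intro B hB h2 hlt
    by_contra hc
    have := hmin B ⟨hB.trans hA, h2, by omega, by omega⟩
    omega
  refine (E.core hG hAI hA2 (by omega) (by omega) ?_ (fun B hB h1 h2 => h5 B hB h1 (by omega))
    (fun B hB h1 h2 => by have := h5 B hB h1 (by omega); omega)).false hG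
  rcases E.regular_or hAI with h | ⟨A', hA', hAA', t, ht, htA', hs⟩
  · exact h
  exfalso
  have hsc := Finset.card_le_card hs
  have hec := Finset.card_erase_of_mem ht
  -- uncrossing `A'` and `A0` shows `A0 ⊆ A'`
  have hA0A' : A0 ⊆ A' := by
    have h1 := onb_submod (G := G) A' A0
    have h2 := E.three_le hG (A := A' ∪ A0) (Finset.union_subset hA' hA0)
      (hA0n.mono Finset.subset_union_right)
    have h3 := hmin0 (A' ∩ A0) ⟨Finset.inter_subset_right.trans hA0,
      hAn.mono (Finset.subset_inter hAA' hA), by omega⟩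
    have h4 := Finset.eq_of_subset_of_card_le (Finset.inter_subset_right (s₁ := A')) h3
    exact Finset.inter_eq_right.1 h4
  have hsub0 : onb G A' ⊆ onb G A0 := by
    intro x hx
    obtain ⟨-, b, hb, hbx⟩ := mem_onb.1 (Finset.mem_of_mem_erase (hs hx))
    exact mem_onb.2 ⟨fun h => (mem_onb.1 hx).1 (hA0A' h), b, hA hb, hbx⟩
  have h3' := E.three_le hG hA' (hAn.mono hAA')
  have e1 : onb G A' = onb G A0 := Finset.eq_of_subset_of_card_le hsub0 (by omega)
  have e2 : onb G A0 = (onb G A).erase t := by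
    rw [← e1]; exact Finset.eq_of_subset_of_card_le hs (by omega)
  have htA : t ∉ A := (mem_onb.1 ht).1
  have htA0 : t ∈ A0 := by
    by_contra hn
    obtain ⟨-, b, hb, hbt⟩ := mem_onb.1 ht
    have : t ∈ onb G A0 := mem_onb.2 ⟨hn, b, hA hb, hbt⟩
    rw [e2] at this
    exact Finset.notMem_erase _ _ this
  have hDn : (A0 \ insert t A).Nonempty := by
    apply Finset.card_pos.1
    have := Finset.le_card_sdiff (insert t A) A0
    rw [Finset.card_insert_of_notMem htA] at this
    omega
  obtain ⟨d, hd⟩ := hDn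
  obtain ⟨a, ha⟩ := hAn
  obtain ⟨D1, hD1, hdD, cD1, clD1⟩ := exists_comp (G := G) hd
  obtain ⟨A1, hA1, haA, cA1, clA1⟩ := exists_comp (G := G) ha
  have hAD : ∀ x ∈ A, x ∉ D1 := fun x hx h => by
    have := (Finset.mem_sdiff.1 (hD1 h)).2
    exact this (by simp [hx])
  have hD0 : D1 ⊆ A0 := fun x hx => (Finset.mem_sdiff.1 (hD1 hx)).1
  have key : ∀ B ⊆ A0, B.Nonempty → B.card < A0.card → onb G B ⊆ onb G A → onb G A0 ⊆ onb G B := by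
    intro B hB hBn hlt hsub
    have h1 := h4 B hB hBn hlt
    have h2 := Finset.eq_of_subset_of_card_le hsub (by omega)
    rw [h2, e2]
    exact Finset.erase_subset _ _
  have kA := key A1 (hA1.trans hA) cA1.1 (by have := Finset.card_le_card hA1; omega) (by
    intro x hx
    obtain ⟨h1, b, hb, hbx⟩ := mem_onb.1 hx
    exact mem_onb.2 ⟨fun h => h1 (clA1 b hb x h hbx), b, hA1 hb, hbx⟩)
  have kD := key D1 hD0 cD1.1 (by
      refine Finset.card_lt_card ⟨hD0, fun h => ?_⟩
      exact hAD a ha (h (hA ha))) (by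
    intro x hx
    obtain ⟨h1, b, hb, hbx⟩ := mem_onb.1 hx
    obtain ⟨hb0, hb'⟩ := Finset.mem_sdiff.1 (hD1 hb)
    rw [Finset.mem_insert, not_or] at hb'
    by_cases hx0 : x ∈ A0
    · by_cases hxt : x = t
      · rwa [hxt]
      by_cases hxA : x ∈ A
      · -- then `b` would be in the boundary of `A`, hence `t` or outside of `A0`
        exfalso
        have hbT : b ∈ (onb G A).erase t :=
          Finset.mem_erase.2 ⟨hb'.1, mem_onb.2 ⟨hb'.2, x, hxA, hbx.symm⟩⟩
        rw [← e2] at hbT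
        exact (mem_onb.1 hbT).1 hb0
      · exact absurd (clD1 b hb x (by simp [hx0, hxt, hxA]) hbx) h1
    · have : x ∈ onb G A0 := mem_onb.2 ⟨hx0, b, hb0, hbx⟩
      rw [e2] at this
      exact Finset.mem_of_mem_erase this)
  obtain ⟨O, cO, hOA, hOT⟩ := hR0
  exact E.three_nbrs (hA1.trans hAI) (hD0.trans hA0) cA1 cD1 cO (fun x hx => hAD x (hA1 hx))
    (fun x hx => hOA x (hA (hA1 hx))) (fun x hx => hOA x (hD0 hx)) (N := onb G A0) hT0
    (fun t ht => mem_onb.1 (kA ht)) (fun t ht => mem_onb.1 (kD ht)) hOT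

theorem contra (hG : IsHajos G) (hI : 2 ≤ I.card) : False := by
  by_cases h : ∃ B ⊆ I, B.Nonempty ∧ (onb G B).card ≤ 3
  · exact E.contra_alpha hG h
  · refine E.contra_beta hG hI fun B hB hn => ?_
    by_contra hc
    exact h ⟨B, hB, hn, by omega⟩

end Env

/-- A `K₃,₃` minor is not lost when the isolated vertices outside `H` are dropped. -/
theorem noK33_of_coe {H : G.Subgraph} {S : Finset V} (hS : ∀ s ∈ S, s ∈ H.verts)
    (h : ¬ HasK33Subdivision (apexGraph H.coe {x : H.verts | (x : V) ∈ S})) :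
    NoK33 (Gam H S) := by
  classical
  intro P Q hP hQ hPP hQQ hPQ hadj
  let g : Option V → Option H.verts := fun o => o.bind fun x =>
    if hx : x ∈ H.verts then some ⟨x, hx⟩ else none
  have gs : ∀ x (hx : x ∈ H.verts), g (some x) = some ⟨x, hx⟩ := fun x hx => by simp [g, hx]
  have vt : ∀ x o, (Gam H S).Adj (some x) o → x ∈ H.verts := by
    intro x o hx
    rcases o with _ | y
    · exact hS x (by exact_mod_cast adj_apex_none.1 hx.symm)
    · exact H.edge_vert (adj_apex_some.1 hx)
  have gadj : ∀ o o', (Gam H S).Adj o o' →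
      (apexGraph H.coe {x : H.verts | (x : V) ∈ S}).Adj (g o) (g o') := by
    intro o o' ho
    rcases o with _ | x <;> rcases o' with _ | y
    · exact absurd rfl ho.ne
    · rw [gs y (vt y _ ho.symm)]
      have h' := adj_apex_none.1 ho
      exact adj_apex_none.2 (by exact_mod_cast h')
    · rw [gs x (vt x _ ho)]
      have h' := adj_apex_none.1 ho.symm
      exact (adj_apex_none.2 (by exact_mod_cast h')).symm
    · rw [gs y (vt y _ ho.symm), gs x (vt x _ ho)]
      have h' := adj_apex_some.1 ho
      exact adj_apex_some.2 h'
  have ginj : ∀ o o' p p', (Gam H S).Adj o p → (Gam H S).Adj o' p' → g o = g o' → o = o' := by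
    intro o o' p p' hp hp' hg
    rcases o with _ | x <;> rcases o' with _ | y
    · rfl
    · rw [gs y (vt y _ hp')] at hg; exact absurd hg (by simp [g])
    · rw [gs x (vt x _ hp)] at hg; exact absurd hg (by simp [g])
    · rw [gs y (vt y _ hp'), gs x (vt x _ hp)] at hg
      simpa using hg
  -- every vertex of a branch set has a neighbour
  have nbr : ∀ X Y : Finset (Option V), Conn (Gam H S) X → Tch (Gam H S) X Y →
      ∀ o ∈ X, ∃ p, (Gam H S).Adj o p := by
    intro X Y hX hXY o ho
    by_cases e : X = {o}
    · subst e
      obtain ⟨a, ha, b, -, hab⟩ := hXY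
      rw [Finset.mem_singleton] at ha
      exact ⟨b, ha ▸ hab⟩
    · obtain ⟨a, ha, b, -, -, hab⟩ := hX.edge (Y := {o}) (by simpa) (by simp) (Ne.symm e)
      rw [Finset.mem_singleton] at ha
      exact ⟨b, ha ▸ hab⟩
  have nP := fun i => nbr (P i) (Q 0) (hP i) (hadj i 0)
  have nQ := fun i => nbr (Q i) (P 0) (hQ i) (hadj 0 i).symm
  have dis : ∀ X Y : Finset (Option V), (∀ o ∈ X, ∃ p, (Gam H S).Adj o p) →
      (∀ o ∈ Y, ∃ p, (Gam H S).Adj o p) → (∀ x ∈ X, x ∉ Y) → ∀ x ∈ X.image g, x ∉ Y.image g := by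
    intro X Y nX nY hXY x hx hx'
    obtain ⟨o, ho, rfl⟩ := Finset.mem_image.1 hx
    obtain ⟨o', ho', e⟩ := Finset.mem_image.1 hx'
    obtain ⟨p, hp⟩ := nX o ho
    obtain ⟨p', hp'⟩ := nY o' ho'
    exact hXY o ho ((ginj _ _ _ _ hp' hp e) ▸ ho')
  refine h (k33_of_minor (fun i => (P i).image g) (fun i => (Q i).image g)
    (fun i => (hP i).map g fun x _ y _ hxy => gadj x y hxy)
    (fun i => (hQ i).map g fun x _ y _ hxy => gadj x y hxy)
    (fun i j hij => dis _ _ (nP i) (nP j) (hPP i j hij))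
    (fun i j hij => dis _ _ (nQ i) (nQ j) (hQQ i j hij))
    (fun i j => dis _ _ (nP i) (nQ j) (hPQ i j)) (fun i j => ?_))
  obtain ⟨a, ha, b, hb, hab⟩ := hadj i j
  exact ⟨g a, Finset.mem_image_of_mem g ha, g b, Finset.mem_image_of_mem g hb, gadj a b hab⟩

end HW

/-- Lemma 3.1: If `G` is a Hajós graph and `(G1, G2)` is a 4-separation of
`G` with `|V(G1)| ≥ 6` and `(G1, V(G1 ∩ G2))` planar, then `G1` contains a
`V(G1 ∩ G2)`-good wheel. -/
theorem statement5 {V : Type} [Fintype V] (G : SimpleGraph V) (hG : IsHajos G)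
    (G1 G2 : G.Subgraph) (hsep : IsSeparation G1 G2 4)
    (hcard : 6 ≤ G1.verts.ncard)
    (hplanar : SubgraphPairPlanar G1 (G1.verts ∩ G2.verts)) :
    HasGoodWheel G1 (G1.verts ∩ G2.verts) := by
  classical
  by_contra hw
  obtain ⟨hsup, -, h4, -⟩ := hsep
  let S : Finset V := (G1.verts ∩ G2.verts).toFinset
  let I : Finset V := (G1.verts \ G2.verts).toFinset
  have hS : (S : Set V) = G1.verts ∩ G2.verts := by simp [S]
  have mS : ∀ x, x ∈ S ↔ x ∈ G1.verts ∧ x ∈ G2.verts := fun x => by simp [S]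
  have mI : ∀ x, x ∈ I ↔ x ∈ G1.verts ∧ x ∉ G2.verts := fun x => by simp [I]
  have S4 : S.card = 4 := by rw [← Set.ncard_coe_finset, hS, h4]
  have E : HW.Env G G1 S I := by
    refine ⟨fun x hx h => ((mI x).1 hx).2 ((mS x).1 h).2, fun x hx => ?_, fun x hx y hxy => ?_, S4,
      ?_, by rwa [hS]⟩
    · by_cases h : x ∈ G2.verts
      · exact .inl ((mS x).2 ⟨hx, h⟩)
      · exact .inr ((mI x).2 ⟨hx, h⟩)
    · have h : (G1 ⊔ G2).Adj x y := by rw [hsup]; exact hxy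
      rcases SimpleGraph.Subgraph.sup_adj.1 h with h | h
      · exact h
      · exact absurd (G2.edge_vert h) ((mI x).1 hx).2
    · refine HW.noK33_of_coe (fun s hs => ((mS s).1 hs).1) ?_
      have := hplanar.2
      rw [← hS] at this
      exact_mod_cast this
  refine E.contra hG ?_
  have h1 := Set.ncard_inter_add_ncard_sdiff_eq_ncard G1.verts G2.verts (Set.toFinite _)
  have h2 : I.card = (G1.verts \ G2.verts).ncard := by
    rw [← Set.ncard_coe_finset]; simp [I]
  omega
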